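/- For every β with 0 < β < 4/3 there exist constants c > 0 and δ₀ > 0, and for every bounded interval I ⊂ ℝ a constant C > 0 (depending only on β and I), such that the following holds for all δ ∈ (0, δ₀). Let φ : [0,∞) × ℝ → ℝ be a smooth solution of the cubic Klein–Gordon equation ∂ₜ²φ − ∂ₓ²φ + φ − φ³ = 0 with φ(t,·) even in x for every t ≥ 0, such that for every t ≥ 0 the functions φ(t,·) − Q, ∂ₓφ(t,·) − Q′ and ∂ₜφ(t,·) are square integrable and (∫_ℝ [(φ(t,x) − Q(x))² + (∂ₓφ(t,x) − Q′(x))² + (∂ₜφ(t,x))²] dx)^{1/2} ≤ δ. Define a(t) := ∫_ℝ (φ(t,x) − Q(x)) Y(x) dx, a₂(t) := ∫_ℝ ∂ₜφ(t,x) Y(x) dx, and ε(t,x) := φ(t,x) − Q(x) − a(t) Y(x), so that ∂ₜε(t,x) = ∂ₜφ(t,x) − a₂(t) Y(x). Then, with T_max := exp(c δ^{−β}), one has ∫₀^{T_max} ∫_I (1 + t)^{−1} [ (∂ₜε(t,x))² + (∂ₓε(t,x))² + ε(t,x)² ] dx dt ≤ C δ², and moreover ∫₀^{T_max} (1 + t)^{−1}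 [ a(t)² + a₂(t)² ] dt ≤ C δ². -/

import Mathlib

open MeasureTheory Real Filter

/-!
Write `u = φ - Q` and split `u = a Y + e`, with `e` even and orthogonal to `Y`. Then `a'' = 3a + n` and
`∂ₜ²e = ∂ₓ²e - (1 - 6 sech²) e + N - n Y`, where `N = 3Qu² + u³` and `n = ⟨N, Y⟩` (`Raw.dyn`).

*Virial identity.* For a weight `W` supported on scale `ρ + ρ²`, the functional
`∫ (W e' + ½ κ e) ∂ₜe` is `O(ρ δ²)`, and its time derivative is minus a quadratic form in `e`, up to
`O(δ²/ρ)` and nonlinear terms (`Slice.virial`, `Dyn.virial`). On `[0, ρ]` the weight has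
`W' = κ = (1 - x/ρ) pp`, where `pp = psi'` is built from explicit parameter integrals in `tanh² x`.

*Coercivity.* The potential `6 sech²` has an even resonance at the edge of the continuous spectrum,
so no virial form can be uniformly positive. The function `pp` is chosen so that, with the
primitive `U = ∫₀ˣ sech² e`, the virial density is an exact derivative plus the sum of squares
`pp (e' + 6U)² + 4 mm K²/(tanh² sech²)` with `pp, mm` bounded below (`Prof.dB`). The boundary terms
are small because `U` decays like `sech²`: this is where evenness and orthogonality to `Y` enter.
Both squares vanish on the resonance `rr = (3 tanh² - 1)/2`, so the squares control `e` only
after interpolation with the a priori bound `‖e‖ ≤ d`, `d = 4δ`: writing `Dt` for the form,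
locally `e² ≲ S := d²/ρ + d √Dt` (`Prof.e_growth`, `Prof.loc`).

*Closing the estimate.* With the local size `σ = S + a²`, the nonlinear terms are `O(σ^{3/2})` and
are absorbed by Young's inequality up to an error `O(d²/ρ + d⁶)` per unit time (`Slice.Lam_le`); the mode `a` is controlled by `(a a₂)' = a₂² + 3a² + a n` (`Dyn.a_est`), since `a`
and `a₂` stay bounded by `d` for all times; and `∫ sech² (1 - x/ρ) e ∂ₜe` yields the local kinetic energy
(`Dyn.kinetic`). With `ρ = (1 + s)^{1/2}` the local energy accumulated on `[0, s]` is
`O(δ² ((1 + s)^{3/4} + δ² (1 + s)))` (`Dyn.main`, `Dyn.growth`). Partial summation turns this into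
`O(δ² (1 + δ² log (1 + T)))` for the average against `(1 + t)⁻¹` (`log_avg`), which is `O(δ²)` up to
`T = exp (δ^{-β})` as soon as `β ≤ 2` (`log_T`).
-/

noncomputable def sech (x : ℝ) : ℝ := (Real.cosh x)⁻¹

/-- The static soliton of the cubic Klein-Gordon equation. -/
noncomputable def Q (x : ℝ) : ℝ := Real.sqrt 2 * sech x

/-- The normalized unstable eigenfunction of the linearization. -/
noncomputable def Y (x : ℝ) : ℝ := (Real.sqrt 3 / 2) * (sech x) ^ 2

namespace KG
open Set

/-! ### Parameter integrals -/

lemma hd {f g : ℝ → ℝ} {f' g' x : ℝ} (h : HasDerivAt f f' x) (hg : ∀ z, g z = f z)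
    (hval : g' = f') : HasDerivAt g g' x := by
  obtain rfl : g = f := funext hg
  rwa [hval]

/-- The parameter integral `∫₀¹ w(τ) / (1 - τ² y)ⁿ dτ`. -/
noncomputable def J (w : ℝ → ℝ) (n : ℕ) (y : ℝ) : ℝ :=
  ∫ τ in (0:ℝ)..1, w τ / (1 - τ ^ 2 * y) ^ n

lemma D_lower {τ y : ℝ} (hτ : τ ∈ Icc (0:ℝ) 1) : min 1 (1 - y) ≤ 1 - τ ^ 2 * y := by
  have h1 : τ ^ 2 ≤ 1 := by nlinarith [hτ.1, hτ.2]
  have h2 : 0 ≤ τ ^ 2 := sq_nonneg τ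
  rcases le_total 0 y with h | h
  · exact (min_le_right _ _).trans (by nlinarith)
  · exact (min_le_left _ _).trans (by nlinarith)

lemma D_pos {τ y : ℝ} (hτ : τ ∈ Icc (0:ℝ) 1) (hy : y < 1) : 0 < 1 - τ ^ 2 * y :=
  lt_of_lt_of_le (lt_min one_pos (by linarith)) (D_lower hτ)

lemma J_cont {w : ℝ → ℝ} (hw : ContinuousOn w (Icc 0 1)) (n : ℕ) {y : ℝ} (hy : y < 1) :
    ContinuousOn (fun τ => w τ / (1 - τ ^ 2 * y) ^ n) (Icc 0 1) :=
  hw.div (by fun_prop) (fun τ hτ => (pow_pos (D_pos hτ hy) n).ne')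

lemma J_int {w : ℝ → ℝ} (hw : ContinuousOn w (Icc 0 1)) (n : ℕ) {y : ℝ} (hy : y < 1) :
    IntervalIntegrable (fun τ => w τ / (1 - τ ^ 2 * y) ^ n) volume 0 1 :=
  (J_cont hw n hy).intervalIntegrable_of_Icc zero_le_one

lemma J_hasDerivAt {w : ℝ → ℝ} (hw : ContinuousOn w (Icc 0 1)) (n : ℕ) {y : ℝ} (hy : y < 1) :
    HasDerivAt (J w n) (n * J (fun τ => τ ^ 2 * w τ) (n + 1) y) y := by
  obtain ⟨B, hB⟩ := (isCompact_Icc (a := (0:ℝ)) (b := 1)).exists_bound_of_continuousOn hw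
  have hB0 : 0 ≤ B := (norm_nonneg _).trans (hB 0 ⟨le_rfl, zero_le_one⟩)
  set y1 := (1 + y) / 2 with hy1
  have hy1' : y1 < 1 := by rw [hy1]; linarith
  set d := min 1 (1 - y1) with hddef
  have hd0 : 0 < d := lt_min one_pos (by linarith)
  have key : ∀ τ ∈ Icc (0:ℝ) 1, ∀ z < y1, d ≤ 1 - τ ^ 2 * z := by
    intro τ hτ z hz
    exact (min_le_min le_rfl (by linarith)).trans (D_lower hτ)
  have hs : Iio y1 ∈ nhds y := Iio_mem_nhds (by rw [hy1]; linarith)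
  have h := (intervalIntegral.hasDerivAt_integral_of_dominated_loc_of_deriv_le
    (μ := volume) (a := (0:ℝ)) (b := 1) (F := fun y τ => w τ / (1 - τ ^ 2 * y) ^ n)
    (F' := fun y τ => n * ((τ ^ 2 * w τ) / (1 - τ ^ 2 * y) ^ (n + 1)))
    (x₀ := y) (s := Iio y1) (bound := fun _ => n * (B / d ^ (n + 1))) hs ?_ ?_ ?_ ?_ ?_ ?_).2
  · exact hd h (fun z => rfl) (by simp only [J, intervalIntegral.integral_const_mul])
  · filter_upwards [hs] with z hz
    have := (J_int hw n (hz.trans hy1')).aestronglyMeasurable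
    rwa [uIoc_of_le zero_le_one]
  · exact J_int hw n hy
  · have := (J_int (w := fun τ => τ ^ 2 * w τ) (ContinuousOn.mul (by fun_prop) hw) (n + 1) hy).aestronglyMeasurable
    rw [uIoc_of_le zero_le_one]
    exact this.const_mul _
  · filter_upwards with τ hτ z hz
    rw [uIoc_of_le zero_le_one] at hτ
    have hτ' : τ ∈ Icc (0:ℝ) 1 := ⟨hτ.1.le, hτ.2⟩
    have hk := key τ hτ' z hz
    have hpos : 0 < 1 - τ ^ 2 * z := hd0.trans_le hk
    rw [norm_mul, norm_div, norm_mul, norm_pow (1 - τ ^ 2 * z), Real.norm_of_nonneg hpos.le,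
      Real.norm_of_nonneg (Nat.cast_nonneg n), Real.norm_of_nonneg (sq_nonneg τ)]
    have h1 : τ ^ 2 * ‖w τ‖ ≤ B := by
      have := hB τ hτ'
      have h2 : τ ^ 2 ≤ 1 := by nlinarith [hτ'.1, hτ'.2]
      nlinarith [norm_nonneg (w τ)]
    gcongr
  · exact (intervalIntegrable_const)
  · filter_upwards with τ hτ z hz
    rw [uIoc_of_le zero_le_one] at hτ
    have hτ' : τ ∈ Icc (0:ℝ) 1 := ⟨hτ.1.le, hτ.2⟩
    have hpos : 0 < 1 - τ ^ 2 * z := hd0.trans_le (key τ hτ' z hz)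
    have h1 : HasDerivAt (fun z => 1 - τ ^ 2 * z) (-(τ ^ 2)) z := by
      simpa using ((hasDerivAt_id z).const_mul (τ ^ 2)).const_sub 1
    have h2 := ((h1.pow n).inv (pow_pos hpos n).ne').const_mul (w τ)
    have hp := hpos.ne'
    refine hd h2 (fun z => by simp [div_eq_mul_inv]) ?_
    simp only [Pi.pow_apply]
    generalize 1 - τ ^ 2 * z = D at hp
    cases n with
    | zero => simp
    | succ m =>
      simp only [Nat.add_sub_cancel]
      field_simp
      ring

lemma J_nonneg {w : ℝ → ℝ} (hw0 : ∀ τ ∈ Icc (0:ℝ) 1, 0 ≤ w τ) (n : ℕ) {y : ℝ} (hy : y < 1) :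
    0 ≤ J w n y :=
  intervalIntegral.integral_nonneg zero_le_one
    (fun τ hτ => div_nonneg (hw0 τ hτ) (pow_pos (D_pos hτ hy) n).le)

lemma J_zero (w : ℝ → ℝ) (n : ℕ) : J w n 0 = ∫ τ in (0:ℝ)..1, w τ := by
  simp [J]

/-- Weight of the parameter integral `Phi`. -/
noncomputable def rho (τ : ℝ) : ℝ := 4 * τ ^ 4 / (3 - τ ^ 2) ^ 2
/-- Weight of the parameter integral `Z`. -/
noncomputable def sig (τ : ℝ) : ℝ := 48 * τ ^ 4 / (3 - τ ^ 2) ^ 3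

lemma three_sub_pos {τ : ℝ} (hτ : τ ∈ Icc (0:ℝ) 1) : 0 < 3 - τ ^ 2 := by
  nlinarith [hτ.1, hτ.2]

lemma rho_cont : ContinuousOn rho (Icc 0 1) :=
  ContinuousOn.div (by fun_prop) (by fun_prop) (fun _ hτ => (pow_pos (three_sub_pos hτ) 2).ne')
lemma sig_cont : ContinuousOn sig (Icc 0 1) :=
  ContinuousOn.div (by fun_prop) (by fun_prop) (fun _ hτ => (pow_pos (three_sub_pos hτ) 3).ne')
lemma rho_nonneg {τ : ℝ} (hτ : τ ∈ Icc (0:ℝ) 1) : 0 ≤ rho τ :=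
  div_nonneg (by positivity) (pow_pos (three_sub_pos hτ) 2).le
lemma sig_nonneg {τ : ℝ} (hτ : τ ∈ Icc (0:ℝ) 1) : 0 ≤ sig τ :=
  div_nonneg (by positivity) (pow_pos (three_sub_pos hτ) 3).le

/-- The profile of the virial weight: `psi x = tanh x * Phi (tanh x ^ 2)`. -/
noncomputable def Phi (y : ℝ) : ℝ := J rho 1 y
/-- The derivative of `Phi` on `y < 1`. -/
noncomputable def Phi1 (y : ℝ) : ℝ := J (fun τ => τ ^ 2 * rho τ) 2 y
/-- The parameter integral for which `(1 - y) (Phi + 2 y Phi1) = 1 - (1 - y) Z`, see `F1`. -/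
noncomputable def Z (y : ℝ) : ℝ := J sig 1 y
/-- The derivative of `Z` on `y < 1`. -/
noncomputable def Z1 (y : ℝ) : ℝ := J (fun τ => τ ^ 2 * sig τ) 2 y
/-- The second derivative of `Z` on `y < 1`. -/
noncomputable def Z2 (y : ℝ) : ℝ := 2 * J (fun τ => τ ^ 2 * (τ ^ 2 * sig τ)) 3 y
/-- The integration constant in the first-order identities `F2` and `F3`. -/
noncomputable def kk : ℝ := Z 0 / 4

lemma cont2 {w : ℝ → ℝ} (hw : ContinuousOn w (Icc 0 1)) :
    ContinuousOn (fun τ => τ ^ 2 * w τ) (Icc 0 1) := ContinuousOn.mul (by fun_prop) hw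

lemma Phi_deriv {y : ℝ} (hy : y < 1) : HasDerivAt Phi (Phi1 y) y := by
  have := J_hasDerivAt rho_cont 1 hy
  exact hd this (fun z => rfl) (by simp [Phi1])
lemma Z_deriv {y : ℝ} (hy : y < 1) : HasDerivAt Z (Z1 y) y := by
  have := J_hasDerivAt sig_cont 1 hy
  exact hd this (fun z => rfl) (by simp [Z1])
lemma Z1_deriv {y : ℝ} (hy : y < 1) : HasDerivAt Z1 (Z2 y) y := by
  have := J_hasDerivAt (cont2 sig_cont) 2 hy
  exact hd this (fun z => rfl) (by simp [Z2])
lemma Z2_cont {y : ℝ} (hy : y < 1) : ContinuousAt Z2 y := by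
  have := (J_hasDerivAt (cont2 (cont2 sig_cont)) 3 hy).continuousAt
  exact this.const_mul 2

/-- Fundamental theorem of calculus on `[0,1]`, with an integrable remainder `c`. -/
lemma FTC01 {h h' c : ℝ → ℝ} (hh : ∀ τ ∈ Icc (0:ℝ) 1, HasDerivAt h (h' τ) τ)
    (hc : ContinuousOn c (Icc 0 1)) (hh' : ContinuousOn h' (Icc 0 1)) :
    ∫ τ in (0:ℝ)..1, (h' τ + c τ) = h 1 - h 0 + ∫ τ in (0:ℝ)..1, c τ := by
  rw [intervalIntegral.integral_add (hh'.intervalIntegrable_of_Icc zero_le_one)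
    (hc.intervalIntegrable_of_Icc zero_le_one)]
  congr 1
  refine intervalIntegral.integral_eq_sub_of_hasDerivAt ?_
    (hh'.intervalIntegrable_of_Icc zero_le_one)
  intro τ hτ
  rw [uIcc_of_le zero_le_one] at hτ
  exact hh τ hτ

lemma D_hasDerivAt (y τ : ℝ) : HasDerivAt (fun τ : ℝ => 1 - τ ^ 2 * y) (-(2 * τ * y)) τ := by
  have := ((hasDerivAt_pow 2 τ).mul_const y).const_sub 1
  simpa using this

lemma T_hasDerivAt (τ : ℝ) : HasDerivAt (fun τ : ℝ => 3 - τ ^ 2) (-(2 * τ)) τ := by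
  have := (hasDerivAt_pow 2 τ).const_sub 3
  simpa using this

/-- Three-term linear combination of the parameter integrals. -/
lemma J_comb {w v u : ℝ → ℝ} (hw : ContinuousOn w (Icc 0 1)) (hv : ContinuousOn v (Icc 0 1))
    (hu : ContinuousOn u (Icc 0 1)) (l m n : ℕ) {y : ℝ} (hy : y < 1) (A B C : ℝ) :
    A * J w l y + B * J v m y + C * J u n y =
      ∫ τ in (0:ℝ)..1, (A * (w τ / (1 - τ ^ 2 * y) ^ l) + B * (v τ / (1 - τ ^ 2 * y) ^ m)
        + C * (u τ / (1 - τ ^ 2 * y) ^ n)) := by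
  have i1 := (J_int hw l hy).const_mul A
  have i2 := (J_int hv m hy).const_mul B
  have i3 := (J_int hu n hy).const_mul C
  rw [intervalIntegral.integral_add (i1.add i2) i3, intervalIntegral.integral_add i1 i2]
  simp only [J, intervalIntegral.integral_const_mul]

/-- Equivalent to `Phi + 2 y Phi1 + Z = 1 / (1 - y)`: the integrands on the left combine to an exact
derivative in `τ`. -/
lemma F1 {y : ℝ} (hy : y < 1) : (1 - y) * (Phi y + 2 * y * Phi1 y) = 1 - (1 - y) * Z y := by
  have h := J_comb rho_cont (cont2 rho_cont) sig_cont 1 2 1 hy 1 (2 * y) 1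
  have h2 : Phi y + 2 * y * Phi1 y + Z y = 1 / (1 - y) := by
    have e : Phi y + 2 * y * Phi1 y + Z y =
      1 * J rho 1 y + (2 * y) * J (fun τ => τ ^ 2 * rho τ) 2 y + 1 * J sig 1 y := by
      simp [Phi, Phi1, Z]
    rw [e, h]
    rw [intervalIntegral.integral_eq_sub_of_hasDerivAt (f := fun τ => 4 * τ ^ 5 / ((3 - τ ^ 2) ^ 2 * (1 - τ ^ 2 * y)))]
    · have : (1 - y) ≠ 0 := by linarith
      norm_num
      field_simp
    · intro τ hτ
      rw [uIcc_of_le zero_le_one] at hτ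
      have hT := (three_sub_pos hτ).ne'
      have hD := (D_pos hτ hy).ne'
      have := ((hasDerivAt_pow 5 τ).const_mul 4).div (((T_hasDerivAt τ).pow 2).mul (D_hasDerivAt y τ))
        (by simp [hT, hD])
      refine hd this (fun z => by simp) ?_
      simp only [rho, sig, Pi.pow_apply, Pi.mul_apply]
      generalize hDe : 1 - τ ^ 2 * y = D at hD
      generalize hTe : 3 - τ ^ 2 = T at hT
      field_simp
      push_cast
      rw [← hDe, ← hTe]
      ring
    · exact (((J_int rho_cont 1 hy).const_mul _).add ((J_int (cont2 rho_cont) 2 hy).const_mul _)).add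
        ((J_int sig_cont 1 hy).const_mul _)
  have h3 : (1 - y) ≠ 0 := by linarith
  have : (1 - y) * (Phi y + 2 * y * Phi1 y + Z y) = 1 := by rw [h2]; field_simp
  linarith

lemma F2aux {y : ℝ} (hy : y < 1) :
    1 / 4 * (3 * y - 1) * (Phi y + 2 * y * Phi1 y) + 3 * y * Phi y
      = 1 / 2 / (1 - y) + ∫ τ in (0:ℝ)..1, (-9 * τ ^ 2 / (3 - τ ^ 2) ^ 2) := by
  have h := J_comb rho_cont (cont2 rho_cont) sig_cont 1 2 1 hy (1 / 4 * (3 * y - 1) + 3 * y)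
    (1 / 4 * (3 * y - 1) * (2 * y)) 0
  have e : 1 / 4 * (3 * y - 1) * (Phi y + 2 * y * Phi1 y) + 3 * y * Phi y =
      (1 / 4 * (3 * y - 1) + 3 * y) * J rho 1 y + (1 / 4 * (3 * y - 1) * (2 * y)) *
        J (fun τ => τ ^ 2 * rho τ) 2 y + 0 * J sig 1 y := by
    simp only [Phi, Phi1]; ring
  rw [e, h]
  have h3 := FTC01 (h := fun τ => τ ^ 3 / ((3 - τ ^ 2) * (1 - τ ^ 2 * y)))
    (h' := fun τ => (3 * τ ^ 2 * ((3 - τ ^ 2) * (1 - τ ^ 2 * y)) - τ ^ 3 * (-(2 * τ) * (1 - τ ^ 2 * y)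
      + (3 - τ ^ 2) * (-(2 * τ * y)))) / ((3 - τ ^ 2) * (1 - τ ^ 2 * y)) ^ 2)
    (c := fun τ => (-9 * τ ^ 2 / (3 - τ ^ 2) ^ 2)) ?_ ?_ ?_
  · rw [show (1 / 2 / (1 - y) : ℝ) = 1 ^ 3 / ((3 - 1 ^ 2) * (1 - 1 ^ 2 * y)) -
      0 ^ 3 / ((3 - 0 ^ 2) * (1 - 0 ^ 2 * y)) by
        have : (1 - y) ≠ 0 := by linarith
        norm_num; field_simp]
    rw [← h3]
    apply intervalIntegral.integral_congr
    intro τ hτ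
    rw [uIcc_of_le zero_le_one] at hτ
    have hT := (three_sub_pos hτ).ne'
    have hD := (D_pos hτ hy).ne'
    simp only [rho]
    generalize hDe : 1 - τ ^ 2 * y = D at hD
    generalize hTe : 3 - τ ^ 2 = T at hT
    field_simp
    rw [← hDe, ← hTe]
    ring
  · intro τ hτ
    have hT := (three_sub_pos hτ).ne'
    have hD := (D_pos hτ hy).ne'
    have := (hasDerivAt_pow 3 τ).div ((T_hasDerivAt τ).mul (D_hasDerivAt y τ)) (by simp [hT, hD])
    exact hd this (fun z => by simp) (by simp)
  · exact ContinuousOn.div (by fun_prop) (by fun_prop) (fun _ hτ => (pow_pos (three_sub_pos hτ) 2).ne')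
  · refine ContinuousOn.div (by fun_prop) (by fun_prop) (fun _ hτ => ?_)
    exact (pow_pos (mul_pos (three_sub_pos hτ) (D_pos hτ hy)) 2).ne'

lemma F3aux {y : ℝ} (hy : y < 1) :
    (1 / 2 + 15 * y / 2) * Z y + y * (3 * y - 1) * Z1 y
      = 6 / (1 - y) + ∫ τ in (0:ℝ)..1, (-216 * τ ^ 2 / (3 - τ ^ 2) ^ 3) := by
  have h := J_comb sig_cont (cont2 sig_cont) sig_cont 1 2 1 hy (1 / 2 + 15 * y / 2)
    (y * (3 * y - 1)) 0
  have e : (1 / 2 + 15 * y / 2) * Z y + y * (3 * y - 1) * Z1 y =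
      (1 / 2 + 15 * y / 2) * J sig 1 y + y * (3 * y - 1) *
        J (fun τ => τ ^ 2 * sig τ) 2 y + 0 * J sig 1 y := by
    simp only [Z, Z1]; ring
  rw [e, h]
  have h3 := FTC01 (h := fun τ => 24 * τ ^ 3 / ((3 - τ ^ 2) ^ 2 * (1 - τ ^ 2 * y)))
    (h' := fun τ => (72 * τ ^ 2 * ((3 - τ ^ 2) ^ 2 * (1 - τ ^ 2 * y)) - 24 * τ ^ 3 *
      (2 * (3 - τ ^ 2) * (-(2 * τ)) * (1 - τ ^ 2 * y)
      + (3 - τ ^ 2) ^ 2 * (-(2 * τ * y)))) / ((3 - τ ^ 2) ^ 2 * (1 - τ ^ 2 * y)) ^ 2)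
    (c := fun τ => (-216 * τ ^ 2 / (3 - τ ^ 2) ^ 3)) ?_ ?_ ?_
  · rw [show (6 / (1 - y) : ℝ) = 24 * 1 ^ 3 / ((3 - 1 ^ 2) ^ 2 * (1 - 1 ^ 2 * y)) -
      24 * 0 ^ 3 / ((3 - 0 ^ 2) ^ 2 * (1 - 0 ^ 2 * y)) by
        have : (1 - y) ≠ 0 := by linarith
        norm_num; field_simp; norm_num]
    rw [← h3]
    apply intervalIntegral.integral_congr
    intro τ hτ
    rw [uIcc_of_le zero_le_one] at hτ
    have hT := (three_sub_pos hτ).ne'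
    have hD := (D_pos hτ hy).ne'
    simp only [sig]
    generalize hDe : 1 - τ ^ 2 * y = D at hD
    generalize hTe : 3 - τ ^ 2 = T at hT
    field_simp
    rw [← hDe, ← hTe]
    ring
  · intro τ hτ
    have hT := (three_sub_pos hτ).ne'
    have hD := (D_pos hτ hy).ne'
    have := ((hasDerivAt_pow 3 τ).const_mul 24).div (((T_hasDerivAt τ).pow 2).mul (D_hasDerivAt y τ)) (by simp [hT, hD])
    exact hd this (fun z => by simp) (by simp; ring)
  · exact ContinuousOn.div (by fun_prop) (by fun_prop) (fun _ hτ => (pow_pos (three_sub_pos hτ) 3).ne')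
  · refine ContinuousOn.div (by fun_prop) (by fun_prop) (fun _ hτ => ?_)
    exact (pow_pos (mul_pos (pow_pos (three_sub_pos hτ) 2) (D_pos hτ hy)) 2).ne'

lemma F2 {y : ℝ} (hy : y < 1) :
    1 / 4 * (3 * y - 1) * (Phi y + 2 * y * Phi1 y) + 3 * y * Phi y
      = 1 / 2 / (1 - y) + (kk - 3 / 4) := by
  rw [F2aux hy]
  have h0 := F2aux (y := 0) (by norm_num)
  have h1 := F1 (y := 0) (by norm_num)
  norm_num [kk] at *
  linarith

lemma F3 {y : ℝ} (hy : y < 1) :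
    (1 / 2 + 15 * y / 2) * Z y + y * (3 * y - 1) * Z1 y = 6 / (1 - y) + (2 * kk - 6) := by
  rw [F3aux hy]
  have h0 := F3aux (y := 0) (by norm_num)
  norm_num [kk] at *
  linarith

/-- The derivative of `F3` in `y`. -/
lemma F4 {y : ℝ} (hy : y < 1) :
    15 / 2 * Z y + (1 / 2 + 15 * y / 2) * Z1 y + (6 * y - 1) * Z1 y + y * (3 * y - 1) * Z2 y
      = 6 / (1 - y) ^ 2 := by
  have hne : (1 - y) ≠ 0 := by linarith
  have hL : HasDerivAt (fun y => (1 / 2 + 15 * y / 2) * Z y + y * (3 * y - 1) * Z1 y)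
      (15 / 2 * Z y + (1 / 2 + 15 * y / 2) * Z1 y + ((6 * y - 1) * Z1 y + y * (3 * y - 1) * Z2 y)) y := by
    have a1 : HasDerivAt (fun y : ℝ => 1 / 2 + 15 * y / 2) (15 / 2) y := by
      have := (((hasDerivAt_id y).const_mul 15).div_const 2).const_add (1/2)
      exact hd this (fun z => by simp) (by simp)
    have a2 : HasDerivAt (fun y : ℝ => y * (3 * y - 1)) (6 * y - 1) y := by
      have := (hasDerivAt_id y).mul (((hasDerivAt_id y).const_mul 3).sub_const 1)
      exact hd this (fun z => by simp) (by simp; ring)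
    exact (a1.mul (Z_deriv hy)).add (a2.mul (Z1_deriv hy))
  have hR : HasDerivAt (fun y : ℝ => 6 / (1 - y) + (2 * kk - 6)) (6 / (1 - y) ^ 2) y := by
    have := ((((hasDerivAt_id y).const_sub 1).inv hne).const_mul 6).add_const (2 * kk - 6)
    exact hd this (fun z => by simp [div_eq_mul_inv]) (by simp; ring)
  have := hL.unique (hR.congr_of_eventuallyEq (by
    filter_upwards [Iio_mem_nhds hy] with z hz using F3 hz))
  linarith

end KG

namespace KG
open Set

/-! ### The virial weight -/

/-- The derivative of the virial weight, as a function of `y = tanh² x`. -/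
noncomputable def chi (y : ℝ) : ℝ := 1 - (1 - y) * Z y
/-- The derivative of `chi` on `y < 1`. -/
noncomputable def chi1 (y : ℝ) : ℝ := Z y - (1 - y) * Z1 y
/-- The second derivative of `chi` on `y < 1`. -/
noncomputable def chi2 (y : ℝ) : ℝ := 2 * Z1 y - (1 - y) * Z2 y
/-- The coefficient of the second square in the coercivity identity, as a function of
`y = tanh² x`. -/
noncomputable def mfun (y : ℝ) : ℝ :=
  12 * chi y - 1 / 2 * (1 - 3 * y) * chi1 y - y * (1 - y) * chi2 y - 6 * y * Phi y

lemma chi_deriv {y : ℝ} (hy : y < 1) : HasDerivAt chi (chi1 y) y :=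
  hd ((((hasDerivAt_id y).const_sub 1).mul (Z_deriv hy)).const_sub 1) (fun z => rfl)
    (by simp [chi1]; ring)

lemma chi1_deriv {y : ℝ} (hy : y < 1) : HasDerivAt chi1 (chi2 y) y :=
  hd ((Z_deriv hy).sub (((hasDerivAt_id y).const_sub 1).mul (Z1_deriv hy))) (fun z => rfl)
    (by simp [chi2]; ring)

lemma chi1_eq {y : ℝ} (hy : y < 1) :
    chi1 y = J (fun τ => (1 - τ ^ 2) * sig τ) 2 y := by
  have h := J_comb sig_cont (cont2 sig_cont) sig_cont 1 2 1 hy 1 (-(1 - y)) 0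
  have e : chi1 y = 1 * J sig 1 y + -(1 - y) * J (fun τ => τ ^ 2 * sig τ) 2 y + 0 * J sig 1 y := by
    simp only [chi1, Z, Z1]; ring
  rw [e, h, J]
  apply intervalIntegral.integral_congr
  intro τ hτ
  rw [uIcc_of_le zero_le_one] at hτ
  have hD := (D_pos hτ hy).ne'
  simp only
  generalize hDe : 1 - τ ^ 2 * y = D at hD
  field_simp
  rw [← hDe]
  ring

lemma chi2_eq {y : ℝ} (hy : y < 1) :
    chi2 y = 2 * J (fun τ => (1 - τ ^ 2) * (τ ^ 2 * sig τ)) 3 y := by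
  have h := J_comb (cont2 sig_cont) (cont2 (cont2 sig_cont)) sig_cont 2 3 1 hy 2 (-2 * (1 - y)) 0
  have e : chi2 y = 2 * J (fun τ => τ ^ 2 * sig τ) 2 y + -2 * (1 - y) *
      J (fun τ => τ ^ 2 * (τ ^ 2 * sig τ)) 3 y + 0 * J sig 1 y := by
    simp only [chi2, Z1, Z2]; ring
  rw [e, h, J, ← intervalIntegral.integral_const_mul]
  apply intervalIntegral.integral_congr
  intro τ hτ
  rw [uIcc_of_le zero_le_one] at hτ
  have hD := (D_pos hτ hy).ne'
  simp only
  generalize hDe : 1 - τ ^ 2 * y = D at hD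
  field_simp
  rw [← hDe]
  ring

lemma one_sub_sq_nonneg {τ : ℝ} (hτ : τ ∈ Icc (0:ℝ) 1) : 0 ≤ 1 - τ ^ 2 := by
  nlinarith [hτ.1, hτ.2]

lemma chi1_nonneg {y : ℝ} (hy : y < 1) : 0 ≤ chi1 y := by
  rw [chi1_eq hy]
  exact J_nonneg (fun τ hτ => mul_nonneg (one_sub_sq_nonneg hτ) (sig_nonneg hτ)) 2 hy

lemma chi2_nonneg {y : ℝ} (hy : y < 1) : 0 ≤ chi2 y := by
  rw [chi2_eq hy]
  have := J_nonneg (w := fun τ => (1 - τ ^ 2) * (τ ^ 2 * sig τ)) (fun τ hτ =>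
    mul_nonneg (one_sub_sq_nonneg hτ) (mul_nonneg (sq_nonneg τ) (sig_nonneg hτ))) 3 hy
  linarith

lemma Z_nonneg {y : ℝ} (hy : y < 1) : 0 ≤ Z y := J_nonneg (fun _ => sig_nonneg) 1 hy
lemma Phi_nonneg {y : ℝ} (hy : y < 1) : 0 ≤ Phi y := J_nonneg (fun _ => rho_nonneg) 1 hy

lemma Z0_eq : Z 0 = ∫ τ in (0:ℝ)..1, sig τ := J_zero _ _

lemma Z0_le : Z 0 ≤ 6 / 5 := by
  rw [Z0_eq]
  have : ∫ τ in (0:ℝ)..1, sig τ ≤ ∫ τ in (0:ℝ)..1, 6 * τ ^ 4 := by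
    refine intervalIntegral.integral_mono_on zero_le_one
      (sig_cont.intervalIntegrable_of_Icc zero_le_one)
      (Continuous.intervalIntegrable (by fun_prop) _ _) (fun τ hτ => ?_)
    rw [sig, div_le_iff₀ (pow_pos (three_sub_pos hτ) 3)]
    have h2 : (2:ℝ) ≤ 3 - τ ^ 2 := by nlinarith [hτ.1, hτ.2]
    have h8 : (2:ℝ) ^ 3 ≤ (3 - τ ^ 2) ^ 3 := by gcongr
    have : 0 ≤ τ ^ 4 := by positivity
    nlinarith
  refine this.trans (le_of_eq ?_)
  rw [intervalIntegral.integral_const_mul, integral_pow]; norm_num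

lemma Phi0_ge : 4 / 45 ≤ Phi 0 := by
  rw [Phi, J_zero]
  have : ∫ τ in (0:ℝ)..1, (4 / 9) * τ ^ 4 ≤ ∫ τ in (0:ℝ)..1, rho τ := by
    refine intervalIntegral.integral_mono_on zero_le_one
      (Continuous.intervalIntegrable (by fun_prop) _ _)
      (rho_cont.intervalIntegrable_of_Icc zero_le_one) (fun τ hτ => ?_)
    rw [rho, le_div_iff₀ (pow_pos (three_sub_pos hτ) 2)]
    have h0 := three_sub_pos hτ
    have h2 : 3 - τ ^ 2 ≤ 3 := by nlinarith [hτ.1, hτ.2]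
    have h8 : (3 - τ ^ 2) ^ 2 ≤ 3 ^ 2 := by gcongr
    have : 0 ≤ τ ^ 4 := by positivity
    nlinarith
  refine (le_of_eq ?_).trans this
  rw [intervalIntegral.integral_const_mul, integral_pow]; norm_num

lemma kk_nonneg : 0 ≤ kk := div_nonneg (Z_nonneg (by norm_num)) (by norm_num)
lemma kk_le : kk ≤ 1 := by have := Z0_le; unfold kk; linarith

lemma chi_le {y : ℝ} (hy : y < 1) : chi y ≤ 1 := by
  have := mul_nonneg (by linarith : 0 ≤ 1 - y) (Z_nonneg hy)
  unfold chi; linarith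

lemma chi_ge {y : ℝ} (hy0 : 0 ≤ y) (hy : y < 1) : 4 / 45 ≤ chi y := by
  have h1 : (1 - y) * Z y ≤ Z 0 := by
    rw [Z0_eq, Z, J, ← intervalIntegral.integral_const_mul]
    refine intervalIntegral.integral_mono_on zero_le_one ((J_int sig_cont 1 hy).const_mul _)
      (sig_cont.intervalIntegrable_of_Icc zero_le_one) (fun τ hτ => ?_)
    have hD := D_pos hτ hy
    rw [pow_one, mul_div_assoc', div_le_iff₀ hD]
    have := sig_nonneg hτ
    have h2 : τ ^ 2 ≤ 1 := by nlinarith [hτ.1, hτ.2]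
    have : 1 - y ≤ 1 - τ ^ 2 * y := by nlinarith
    nlinarith
  have h2 := F1 (y := 0) (by norm_num)
  have h3 := Phi0_ge
  simp at h2
  unfold chi; linarith

lemma chi1_le {y : ℝ} (hy0 : 0 ≤ y) (hy : y < 1) : (1 - y) * chi1 y ≤ 6 / 5 := by
  refine le_trans ?_ Z0_le
  rw [chi1_eq hy, Z0_eq, J, ← intervalIntegral.integral_const_mul]
  refine intervalIntegral.integral_mono_on zero_le_one ((J_int (w := fun τ => (1 - τ ^ 2) * sig τ)
    (ContinuousOn.mul (by fun_prop) sig_cont) 2 hy).const_mul _)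
    (sig_cont.intervalIntegrable_of_Icc zero_le_one) (fun τ hτ => ?_)
  have hD := D_pos hτ hy
  rw [mul_div_assoc', div_le_iff₀ (pow_pos hD 2)]
  have h0 := sig_nonneg hτ
  have h2 : τ ^ 2 ≤ 1 := by nlinarith [hτ.1, hτ.2]
  have a1 : 1 - y ≤ 1 - τ ^ 2 * y := by nlinarith
  have a2 : 1 - τ ^ 2 ≤ 1 - τ ^ 2 * y := by nlinarith [sq_nonneg τ]
  have a3 : (1 - y) * (1 - τ ^ 2) ≤ (1 - τ ^ 2 * y) ^ 2 := by
    rw [pow_two (1 - τ ^ 2 * y)]; exact mul_le_mul a1 a2 (by linarith) hD.le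
  nlinarith

/-- The product of `mfun` and `(3 y - 1) / 2`, in a form without `Phi` and `chi2`; see `m_mul_r`. -/
noncomputable def ffun (y : ℝ) : ℝ :=
  6 * chi y * ((3 * y - 1) / 2) + 6 * y * (1 - y) * chi1 y - 2 * kk

lemma m_mul_r {y : ℝ} (hy : y < 1) : mfun y * ((3 * y - 1) / 2) = ffun y := by
  have hne : (1 - y) ≠ 0 := by linarith
  have h1 := F1 hy
  have h2 := F2 hy
  have h3 := F3 hy
  have h4 := F4 hy
  have g : Phi y + 2 * y * Phi1 y = (1 - (1 - y) * Z y) / (1 - y) := by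
    field_simp; linarith
  rw [g] at h2
  field_simp at h2 h3 h4
  have : (1 - y) * (mfun y * ((3 * y - 1) / 2) - ffun y) = 0 := by
    simp only [mfun, ffun, chi, chi1, chi2]
    linear_combination (1 - y) / 4 * h4 - 3 / 4 * (1 - y) * h3 - (3 * y - 1) / 8 * h2
  have := (mul_eq_zero.mp this).resolve_left hne
  linarith


lemma ffun_deriv {y : ℝ} (hy : y < 1) :
    HasDerivAt ffun (9 * chi y + 3 * (1 - y) * chi1 y + 6 * y * (1 - y) * chi2 y) y := by
  have h1 := (chi_deriv hy).const_mul 6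
  have h2 := (((hasDerivAt_id y).const_mul 3).sub_const 1).div_const 2
  have h3 := (((hasDerivAt_id y).const_mul 6).mul ((hasDerivAt_id y).const_sub 1))
  exact hd (((h1.mul h2).add (h3.mul (chi1_deriv hy))).sub_const (2 * kk)) (fun z => by
    simp [ffun]) (by simp; ring)

lemma le_of_deriv_le_on {f g f' g' : ℝ → ℝ} {a b : ℝ} (hab : a ≤ b)
    (hf : ∀ x ∈ Icc a b, HasDerivAt f (f' x) x) (hg : ∀ x ∈ Icc a b, HasDerivAt g (g' x) x)
    (h : ∀ x ∈ Icc a b, f' x ≤ g' x) : f b - f a ≤ g b - g a := by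
  have hm : MonotoneOn (fun x => g x - f x) (Icc a b) := by
    refine monotoneOn_of_hasDerivWithinAt_nonneg (f' := fun x => g' x - f' x) (convex_Icc a b)
      (fun x hx => ((hg x hx).sub (hf x hx)).continuousAt.continuousWithinAt)
      (fun x hx => ((hg x (interior_subset hx)).sub (hf x (interior_subset hx))).hasDerivWithinAt)
      (fun x hx => by have := h x (interior_subset hx); linarith)
  have := hm ⟨le_rfl, hab⟩ ⟨hab, le_rfl⟩ hab
  simp only at this
  linarith

lemma mfun_cont {y : ℝ} (hy : y < 1) : ContinuousAt mfun y := by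
  have c0 : ContinuousAt chi y := (chi_deriv hy).continuousAt
  have c1 : ContinuousAt chi1 y := (chi1_deriv hy).continuousAt
  have c2 : ContinuousAt chi2 y := ((Z1_deriv hy).continuousAt.const_mul 2).sub
    (ContinuousAt.mul (by fun_prop) (Z2_cont hy))
  have c3 : ContinuousAt Phi y := (Phi_deriv hy).continuousAt
  unfold mfun
  fun_prop

/-- Both sides of `mfun y * ((3 y - 1) / 2) = ffun y` vanish at `y = 1/3`, so a lower bound for
the derivative of `ffun` gives one for `mfun`; the point `y = 1/3` itself follows by continuity. -/
lemma mfun_ge {y : ℝ} (hy0 : 0 ≤ y) (hy : y < 1) : 8 / 15 ≤ mfun y := by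
  have f0 : ffun (1 / 3) = 0 := by
    rw [← m_mul_r (by norm_num)]; norm_num
  have hlow : ∀ z, 0 ≤ z → z < 1 →
      4 / 5 ≤ 9 * chi z + 3 * (1 - z) * chi1 z + 6 * z * (1 - z) * chi2 z := by
    intro z h0 h1
    have a1 := chi_ge h0 h1
    have a2 := mul_nonneg (by linarith : 0 ≤ 1 - z) (chi1_nonneg h1)
    have a3 := mul_nonneg (mul_nonneg h0 (by linarith : 0 ≤ 1 - z)) (chi2_nonneg h1)
    nlinarith
  have hlin : ∀ x : ℝ, HasDerivAt (fun z : ℝ => (4 / 5) * z) (4 / 5) x := fun x => by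
    simpa using (hasDerivAt_id x).const_mul (4 / 5 : ℝ)
  have hne : ∀ y, 0 ≤ y → y < 1 → y ≠ 1 / 3 → 8 / 15 ≤ mfun y := by
    intro y hy0 hy hy3
    rcases lt_or_gt_of_ne hy3 with h | h
    · have := le_of_deriv_le_on (a := y) (b := 1 / 3) h.le (fun x _ => hlin x)
        (fun x hx => ffun_deriv (by linarith [hx.2]))
        (fun x hx => hlow x (by linarith [hx.1]) (by linarith [hx.2]))
      rw [f0, ← m_mul_r hy] at this
      nlinarith
    · have := le_of_deriv_le_on (a := 1 / 3) (b := y) h.le (fun x _ => hlin x)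
        (fun x hx => ffun_deriv (by linarith [hx.2]))
        (fun x hx => hlow x (by linarith [hx.1]) (by linarith [hx.2]))
      rw [f0, ← m_mul_r hy] at this
      nlinarith
  by_cases hy3 : y = 1 / 3
  · -- continuity of `mfun` covers the zero of the resonance
    subst hy3
    have hc := (mfun_cont hy).continuousWithinAt (s := Ioi (1 / 3 : ℝ))
    refine ge_of_tendsto hc ?_
    filter_upwards [self_mem_nhdsWithin, mem_nhdsWithin_of_mem_nhds (Iio_mem_nhds hy)] with z hz hz1
    exact hne z (by have := mem_Ioi.mp hz; linarith) hz1 (ne_of_gt hz)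
  · exact hne y hy0 hy hy3

lemma tanh_deriv (x : ℝ) : HasDerivAt tanh (1 - tanh x ^ 2) x := by
  have h := (hasDerivAt_sinh x).div (hasDerivAt_cosh x) (cosh_pos x).ne'
  have hc := (cosh_pos x).ne'
  refine hd h (fun z => by simp [tanh_eq_sinh_div_cosh]) ?_
  rw [tanh_eq_sinh_div_cosh]
  field_simp

lemma tanh_nonneg' {x : ℝ} (hx : 0 ≤ x) : 0 ≤ tanh x := by
  rw [tanh_eq_sinh_div_cosh]; exact div_nonneg (sinh_nonneg_iff.mpr hx) (cosh_pos x).le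
lemma tanh_pos' {x : ℝ} (hx : 0 < x) : 0 < tanh x := by
  rw [tanh_eq_sinh_div_cosh]; exact div_pos (sinh_pos_iff.mpr hx) (cosh_pos x)

lemma sech_sq (x : ℝ) : sech x ^ 2 = 1 - tanh x ^ 2 := by
  rw [sech, tanh_eq_sinh_div_cosh]
  have hc := (cosh_pos x).ne'
  field_simp
  linarith [cosh_sq x]

lemma y_lt (x : ℝ) : tanh x ^ 2 < 1 := tanh_sq_lt_one x
lemma y_nonneg (x : ℝ) : 0 ≤ tanh x ^ 2 := sq_nonneg _

lemma y_deriv (x : ℝ) : HasDerivAt (fun x => tanh x ^ 2) (2 * tanh x * (1 - tanh x ^ 2)) x :=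
  hd ((tanh_deriv x).pow 2) (fun z => by simp) (by simp)

/-- The virial weight before cutoff. -/
noncomputable def psi (x : ℝ) : ℝ := tanh x * Phi (tanh x ^ 2)
/-- The derivative of `psi`. -/
noncomputable def pp (x : ℝ) : ℝ := chi (tanh x ^ 2)
/-- The derivative of `pp`. -/
noncomputable def pp1 (x : ℝ) : ℝ := 2 * tanh x * ((1 - tanh x ^ 2) * chi1 (tanh x ^ 2))
/-- The coefficient of the second square in the coercivity identity. -/
noncomputable def mm (x : ℝ) : ℝ := mfun (tanh x ^ 2)
/-- The even resonance of the linearized operator `-∂ₓ² + 1 - 6 sech²`. -/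
noncomputable def rr (x : ℝ) : ℝ := (3 * tanh x ^ 2 - 1) / 2

lemma psi_deriv (x : ℝ) : HasDerivAt psi (pp x) x := by
  have h := (tanh_deriv x).mul ((Phi_deriv (y_lt x)).comp x (y_deriv x))
  refine hd h (fun z => rfl) ?_
  have := F1 (y_lt x)
  simp only [pp, chi, Function.comp]
  linear_combination -this

lemma pp_deriv (x : ℝ) : HasDerivAt pp (pp1 x) x :=
  hd ((chi_deriv (y_lt x)).comp x (y_deriv x)) (fun z => rfl) (by simp only [pp1]; ring)

lemma pp1_deriv (x : ℝ) : HasDerivAt pp1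
    (4 * (1 - tanh x ^ 2) * (12 * pp x - 6 * psi x * tanh x - mm x)) x := by
  have h := ((tanh_deriv x).const_mul 2).mul (((y_deriv x).const_sub 1).mul
    ((chi1_deriv (y_lt x)).comp x (y_deriv x)))
  refine hd h (fun z => rfl) ?_
  simp only [pp, psi, mm, mfun, Function.comp, Pi.mul_apply]
  ring

lemma mm_rr (x : ℝ) : mm x * rr x = 6 * pp x * rr x + 3 * tanh x * pp1 x - 2 * kk := by
  have := m_mul_r (y_lt x)
  simp only [ffun] at this
  simp only [mm, rr, pp, pp1, this]; ring

lemma mm_ge (x : ℝ) : 8 / 15 ≤ mm x := mfun_ge (y_nonneg x) (y_lt x)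
lemma pp_ge (x : ℝ) : 4 / 45 ≤ pp x := chi_ge (y_nonneg x) (y_lt x)
lemma pp_le (x : ℝ) : pp x ≤ 1 := chi_le (y_lt x)
lemma pp1_nonneg {x : ℝ} (hx : 0 ≤ x) : 0 ≤ pp1 x :=
  mul_nonneg (by linarith [tanh_nonneg' hx]) (mul_nonneg (by linarith [y_lt x]) (chi1_nonneg (y_lt x)))
lemma pp1_le {x : ℝ} (hx : 0 ≤ x) : pp1 x ≤ 3 := by
  have h1 := chi1_le (y_nonneg x) (y_lt x)
  have h2 := tanh_nonneg' hx
  have h3 := (tanh_lt_one x).le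
  have h4 := mul_nonneg (by linarith [y_lt x] : 0 ≤ 1 - tanh x ^ 2) (chi1_nonneg (y_lt x))
  unfold pp1; nlinarith
lemma psi_nonneg {x : ℝ} (hx : 0 ≤ x) : 0 ≤ psi x :=
  mul_nonneg (tanh_nonneg' hx) (Phi_nonneg (y_lt x))
lemma psi_le {x : ℝ} (hx : 0 ≤ x) : psi x ≤ x := by
  have := le_of_deriv_le_on hx (fun x _ => psi_deriv x) (fun x _ => hasDerivAt_id x)
    (fun x _ => pp_le x)
  simpa [psi] using this
lemma psi_cont : Continuous psi := continuous_iff_continuousAt.mpr fun x => (psi_deriv x).continuousAt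
lemma pp_cont : Continuous pp := continuous_iff_continuousAt.mpr fun x => (pp_deriv x).continuousAt
lemma pp1_cont : Continuous pp1 := continuous_iff_continuousAt.mpr fun x => (pp1_deriv x).continuousAt
lemma tanh_cont : Continuous tanh := continuous_iff_continuousAt.mpr fun x => (tanh_deriv x).continuousAt
lemma mm_cont : Continuous mm := continuous_iff_continuousAt.mpr fun x =>
  ContinuousAt.comp (f := fun x => tanh x ^ 2) (mfun_cont (y_lt x)) (y_deriv x).continuousAt

/-- The antiderivative of `psi` vanishing at the origin. -/
noncomputable def Psi (x : ℝ) : ℝ := ∫ z in (0:ℝ)..x, psi z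

lemma Psi_deriv (x : ℝ) : HasDerivAt Psi (psi x) x :=
  intervalIntegral.integral_hasDerivAt_right (psi_cont.intervalIntegrable _ _)
    (psi_cont.stronglyMeasurableAtFilter _ _) psi_cont.continuousAt
lemma Psi_zero : Psi 0 = 0 := by simp [Psi]
lemma psi_zero : psi 0 = 0 := by simp [psi]
lemma Psi_nonneg {x : ℝ} (hx : 0 ≤ x) : 0 ≤ Psi x :=
  intervalIntegral.integral_nonneg hx (fun _ hz => psi_nonneg hz.1)
lemma Psi_le {x : ℝ} (hx : 0 ≤ x) : Psi x ≤ x ^ 2 / 2 := by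
  have h2 : ∀ x : ℝ, HasDerivAt (fun x : ℝ => x ^ 2 / 2) x x := fun x =>
    hd ((hasDerivAt_pow 2 x).div_const 2) (fun z => rfl) (by simp)
  have := le_of_deriv_le_on hx (fun x _ => Psi_deriv x) (fun x _ => h2 x)
    (fun x hx => psi_le hx.1)
  simpa [Psi] using this
lemma Psi_cont : Continuous Psi := continuous_iff_continuousAt.mpr fun x => (Psi_deriv x).continuousAt

/-- Coefficient of `U²` in the boundary term of the coercivity identity. -/
noncomputable def EE (x : ℝ) : ℝ := 4 * (kk - 3 * rr x * pp x) / (tanh x * (1 - tanh x ^ 2))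

lemma rr_deriv (x : ℝ) : HasDerivAt rr (3 * tanh x * (1 - tanh x ^ 2)) x :=
  hd ((((y_deriv x).const_mul 3).sub_const 1).div_const 2) (fun z => rfl) (by ring)

lemma EE_deriv {x : ℝ} (hx : 0 < x) : HasDerivAt EE
    (-36 * pp x - 4 * rr x ^ 2 * mm x / (tanh x ^ 2 * (1 - tanh x ^ 2))) x := by
  have ht := (tanh_pos' hx).ne'
  have hs : 1 - tanh x ^ 2 ≠ 0 := by have := y_lt x; linarith
  have h := (((((rr_deriv x).const_mul 3).mul (pp_deriv x)).const_sub kk).const_mul 4).div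
    ((tanh_deriv x).mul ((y_deriv x).const_sub 1)) (mul_ne_zero ht hs)
  refine hd h (fun z => rfl) ?_
  have hm := mm_rr x
  simp only [Pi.mul_apply]
  have hrd : rr x = (3 * tanh x ^ 2 - 1) / 2 := rfl
  have e1 : 4 * rr x ^ 2 * mm x = 4 * rr x * (6 * pp x * rr x + 3 * tanh x * pp1 x - 2 * kk) := by
    rw [← hm]; ring
  rw [e1]
  generalize hS : 1 - tanh x ^ 2 = S at hs
  generalize tanh x = t at *
  field_simp
  rw [hrd, ← hS]
  ring

end KG

namespace KG
open Set

/-! ### The coercivity identity -/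

lemma ftc_le {G G' φ : ℝ → ℝ} {a b : ℝ} (hab : a ≤ b) (hc : ContinuousOn G (Icc a b))
    (hder : ∀ x ∈ Ioo a b, HasDerivAt G (G' x) x) (hφ : IntervalIntegrable φ volume a b)
    (hle : ∀ x ∈ Ioo a b, G' x ≤ φ x) : G b - G a ≤ ∫ x in a..b, φ x :=
  intervalIntegral.sub_le_integral_of_hasDeriv_right_of_le hab hc
    (fun x hx => (hder x hx).hasDerivWithinAt)
    ((intervalIntegrable_iff_integrableOn_Icc_of_le hab).mp hφ) hle

lemma ii_bdd {f : ℝ → ℝ} {a b C : ℝ} (hab : a ≤ b) (hm : Measurable f)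
    (hb : ∀ x ∈ Ioc a b, |f x| ≤ C) : IntervalIntegrable f volume a b := by
  rw [intervalIntegrable_iff_integrableOn_Ioc_of_le hab]
  refine Measure.integrableOn_of_bounded (M := C) (by simp) hm.aestronglyMeasurable ?_
  filter_upwards [ae_restrict_mem measurableSet_Ioc] with x hx using hb x hx

lemma ii_cont {f : ℝ → ℝ} (hf : Continuous f) (a b : ℝ) : IntervalIntegrable f volume a b :=
  hf.intervalIntegrable a b

lemma int_mono {f g : ℝ → ℝ} {a b : ℝ} (hab : a ≤ b) (hf : IntervalIntegrable f volume a b)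
    (hg : IntervalIntegrable g volume a b) (h : ∀ x ∈ Ioo a b, f x ≤ g x) :
    ∫ x in a..b, f x ≤ ∫ x in a..b, g x :=
  intervalIntegral.integral_mono_on_of_le_Ioo hab hf hg h

lemma int_s2_le {R : ℝ} (_hR : 0 ≤ R) : ∫ x in (0:ℝ)..R, (1 - tanh x ^ 2) ≤ 1 := by
  rw [intervalIntegral.integral_eq_sub_of_hasDerivAt (fun x _ => tanh_deriv x)
    (ii_cont (by have := tanh_cont; fun_prop) _ _)]
  simpa using (tanh_lt_one R).le

/-- Optimization of a Young inequality in its parameter. -/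
lemma sqrt_of_young {a b c X : ℝ} (hc : 0 ≤ c) (hX : 0 ≤ X)
    (h : ∀ l > 0, a ≤ b + l * X + c ^ 2 / l) : a ≤ b + 2 * c * √X := by
  rcases hc.eq_or_lt with rfl | hc
  · have : ∀ l > 0, a ≤ b + l * X := fun l hl => by simpa using h l hl
    simp only [mul_zero, zero_mul, add_zero]
    refine le_of_forall_pos_le_add (fun η hη => ?_)
    have h1 := this (η / (X + 1)) (by positivity)
    have : η / (X + 1) * X ≤ η := by
      rw [div_mul_eq_mul_div, div_le_iff₀ (by positivity)]; nlinarith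
    linarith
  · refine le_of_forall_pos_le_add (fun η hη => ?_)
    set r := √X + η / c with hr
    have hs := Real.sqrt_nonneg X
    have hr0 : 0 < r := by positivity
    have h1 := h (c / r) (by positivity)
    have h2 : c ^ 2 / (c / r) = c * r := by field_simp
    have h3 : c / r * X ≤ c * √X := by
      rw [div_mul_eq_mul_div, div_le_iff₀ hr0]
      have : X = √X * √X := (Real.mul_self_sqrt hX).symm
      have h5 : √X ≤ r := by rw [hr]; have : 0 ≤ η / c := by positivity
                             linarith
      calc c * X = c * √X * √X := by rw [mul_assoc, ← this]
        _ ≤ c * √X * r := by gcongr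
    have h4 : c * r = c * √X + η := by rw [hr]; field_simp
    rw [h2, h4] at h1
    linarith

/-- Data of a fixed-time profile `e` with `e' = e1`, whose primitive `U = ∫₀ˣ sech² e` is
controlled both near the origin and at infinity (the latter encodes `∫₀^∞ sech² e = 0`). -/
structure Prof (e e1 U : ℝ → ℝ) (d ρ : ℝ) : Prop where
  d0 : 0 ≤ d
  ρ1 : 1 ≤ ρ
  de : ∀ x, HasDerivAt e (e1 x) x
  ce1 : Continuous e1
  dU : ∀ x, HasDerivAt U ((1 - tanh x ^ 2) * e x) x
  U0 : U 0 = 0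
  be : ∀ x, 0 ≤ x → |e x| ≤ d
  bU1 : ∀ x, 0 ≤ x → |U x| ≤ d * tanh x
  bU2 : ∀ x, 0 ≤ x → |U x| ≤ d * (1 - tanh x)
  ie : ∫ x in (0:ℝ)..ρ, e x ^ 2 ≤ d ^ 2
  ie1 : ∫ x in (0:ℝ)..ρ, e1 x ^ 2 ≤ d ^ 2

/-- Linear cutoff. -/
noncomputable def om (ρ x : ℝ) : ℝ := 1 - x / ρ

/-- Density of the quadratic form produced by the virial identity. -/
noncomputable def dens (e e1 : ℝ → ℝ) (x : ℝ) : ℝ :=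
  pp x * e1 x ^ 2 + 1 / 2 * pp1 x * e x * e1 x - 6 * psi x * (1 - tanh x ^ 2) * tanh x * e x ^ 2

/-- The first square of the coercivity identity; it vanishes at `e = rr`. -/
noncomputable def qq (e1 U : ℝ → ℝ) (x : ℝ) : ℝ := e1 x + 6 * U x
/-- The second square of the coercivity identity; it vanishes at `e = rr`. -/
noncomputable def KK (e U : ℝ → ℝ) (x : ℝ) : ℝ :=
  1 / 2 * tanh x * (1 - tanh x ^ 2) * e x + rr x * U x
/-- The boundary term of the coercivity identity, see `Prof.dB`. -/
noncomputable def BB (e U : ℝ → ℝ) (x : ℝ) : ℝ :=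
  1 / 4 * pp1 x * e x ^ 2 - 12 * pp x * e x * U x + EE x * U x ^ 2

lemma om_deriv (ρ x : ℝ) : HasDerivAt (om ρ) (-(1 / ρ)) x :=
  hd (((hasDerivAt_id x).div_const ρ).const_sub 1) (fun z => rfl) (by simp)

lemma s2_pos (x : ℝ) : 0 < 1 - tanh x ^ 2 := by linarith [y_lt x]
lemma s2_le (x : ℝ) : 1 - tanh x ^ 2 ≤ 1 := by linarith [y_nonneg x]
lemma rr_abs (x : ℝ) : |rr x| ≤ 1 := by
  unfold rr; rw [abs_le]; constructor <;> nlinarith [y_lt x, y_nonneg x]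
lemma rr_cont : Continuous rr := continuous_iff_continuousAt.mpr fun x => (rr_deriv x).continuousAt

section
variable {e e1 U : ℝ → ℝ} {d ρ : ℝ} (P : Prof e e1 U d ρ)
include P

lemma Prof.ce : Continuous e := continuous_iff_continuousAt.mpr fun x => (P.de x).continuousAt
lemma Prof.cU : Continuous U := continuous_iff_continuousAt.mpr fun x => (P.dU x).continuousAt
lemma Prof.ρ0 : 0 < ρ := by linarith [P.ρ1]
lemma Prof.om0 {x : ℝ} (hx : x ≤ ρ) : 0 ≤ om ρ x := by
  unfold om; have := P.ρ0; rw [sub_nonneg, div_le_one this]; exact hx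
lemma Prof.om1 {x : ℝ} (hx : 0 ≤ x) : om ρ x ≤ 1 := by
  unfold om; have := div_nonneg hx P.ρ0.le; linarith

lemma Prof.Ub {x : ℝ} (hx : 0 ≤ x) : |U x| ≤ 2 * d * tanh x * (1 - tanh x) := by
  have h1 := P.bU1 x hx
  have h2 := P.bU2 x hx
  have t0 := tanh_nonneg' hx
  have t1 := tanh_lt_one x
  have d0 := P.d0
  rcases le_total (tanh x) (1 / 2) with h | h
  · have := mul_nonneg (mul_nonneg d0 t0) (by linarith : 0 ≤ 1 - 2 * tanh x)
    nlinarith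
  · have := mul_nonneg (mul_nonneg d0 (by linarith : 0 ≤ 1 - tanh x)) (by linarith : 0 ≤ 2 * tanh x - 1)
    nlinarith

lemma Prof.Ub2 {x : ℝ} (hx : 0 ≤ x) : |U x| ≤ 2 * d * tanh x * (1 - tanh x ^ 2) := by
  refine (P.Ub hx).trans ?_
  have t0 := tanh_nonneg' hx
  have t1 := tanh_lt_one x
  have d0 := P.d0
  have : 1 - tanh x ≤ 1 - tanh x ^ 2 := by nlinarith
  have h2 : 0 ≤ 2 * d * tanh x := by positivity
  exact mul_le_mul_of_nonneg_left this h2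

lemma Prof.EU {x : ℝ} (hx : 0 ≤ x) : |EE x * U x ^ 2| ≤ 64 * d ^ 2 * tanh x * (1 - tanh x ^ 2) := by
  rcases hx.eq_or_lt with rfl | hx'
  · simp [EE]
  have t0 := tanh_pos' hx'
  have s0 := s2_pos x
  have hU := P.Ub2 hx
  have hE : |EE x| ≤ 16 / (tanh x * (1 - tanh x ^ 2)) := by
    unfold EE
    rw [abs_div, abs_of_pos (mul_pos t0 s0)]
    gcongr
    have h1 := rr_abs x
    have h2 : |pp x| ≤ 1 := by rw [abs_le]; constructor <;> linarith [pp_ge x, pp_le x]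
    have h3 : |rr x * pp x| ≤ 1 := by
      rw [abs_mul]; exact mul_le_one₀ h1 (abs_nonneg _) h2
    rw [abs_le] at h3 ⊢
    constructor <;> nlinarith [kk_nonneg, kk_le, h3.1, h3.2]
  rw [abs_mul, abs_pow]
  calc |EE x| * |U x| ^ 2 ≤ 16 / (tanh x * (1 - tanh x ^ 2)) * (2 * d * tanh x * (1 - tanh x ^ 2)) ^ 2 := by
        gcongr
    _ = 64 * d ^ 2 * tanh x * (1 - tanh x ^ 2) := by field_simp; ring

lemma Prof.Bb {x : ℝ} (hx : 0 ≤ x) : |BB e U x| ≤ 3 / 4 * e x ^ 2 + 88 * d ^ 2 * (1 - tanh x ^ 2) := by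
  have h1 := P.EU hx
  have h2 := P.Ub2 hx
  have t0 := tanh_nonneg' hx
  have t1 := tanh_lt_one x
  have d0 := P.d0
  have s0 := s2_pos x
  have a1 : |1 / 4 * pp1 x * e x ^ 2| ≤ 3 / 4 * e x ^ 2 := by
    rw [abs_of_nonneg (mul_nonneg (by linarith [pp1_nonneg hx]) (sq_nonneg _))]
    have := pp1_le hx
    nlinarith [sq_nonneg (e x)]
  have a2 : |12 * pp x * e x * U x| ≤ 24 * d ^ 2 * (1 - tanh x ^ 2) := by
    have hp : |12 * pp x| ≤ 12 := by rw [abs_le]; constructor <;> linarith [pp_ge x, pp_le x]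
    rw [abs_mul, abs_mul]
    have := P.be x hx
    calc |12 * pp x| * |e x| * |U x| ≤ 12 * d * (2 * d * 1 * (1 - tanh x ^ 2)) := by
          gcongr
          exact h2.trans (by gcongr)
      _ = _ := by ring
  have a3 : |EE x * U x ^ 2| ≤ 64 * d ^ 2 * (1 - tanh x ^ 2) := by
    refine h1.trans ?_
    have : 0 ≤ 64 * d ^ 2 * (1 - tanh x ^ 2) := by positivity
    nlinarith
  unfold BB
  calc _ ≤ |1 / 4 * pp1 x * e x ^ 2| + |12 * pp x * e x * U x| + |EE x * U x ^ 2| :=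
        (abs_add_le _ _).trans (add_le_add_left (abs_sub _ _) _)
    _ ≤ _ := by linarith

/-- The coercivity identity: the virial density is an exact derivative plus two squares. -/
lemma Prof.dB {x : ℝ} (hx : 0 < x) : HasDerivAt (BB e U) (dens e e1 x - pp x * qq e1 U x ^ 2
    - 4 * mm x * (KK e U x ^ 2 / (tanh x ^ 2 * (1 - tanh x ^ 2)))) x := by
  have h := ((((pp1_deriv x).const_mul (1 / 4)).mul ((P.de x).pow 2)).sub
    ((((pp_deriv x).const_mul 12).mul (P.de x)).mul (P.dU x))).add
    ((EE_deriv hx).mul ((P.dU x).pow 2))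
  refine hd h (fun z => rfl) ?_
  have ht := (tanh_pos' hx).ne'
  have hs := (s2_pos x).ne'
  have hm := mm_rr x
  simp only [Pi.mul_apply, Pi.pow_apply, dens, qq, KK, EE]
  generalize hS : 1 - tanh x ^ 2 = S at hs
  generalize tanh x = t at *
  field_simp
  generalize e x = a at *
  generalize U x = b at *
  generalize e1 x = c at *
  generalize pp x = p at *
  generalize rr x = r at *
  generalize mm x = m at *
  generalize pp1 x = p1 at *
  linear_combination (-64 * a * b * S * t) * hm

lemma Prof.cB : ContinuousOn (BB e U) (Ici 0) := by
  intro x hx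
  have hx0 : (0:ℝ) ≤ x := hx
  rcases hx0.eq_or_lt with rfl | hx'
  · have c1 := pp1_cont; have c2 := pp_cont; have c3 := P.ce; have c4 := P.cU
    have h1 : ContinuousWithinAt (fun x => EE x * U x ^ 2) (Ici 0) 0 := by
      have z : EE 0 * U 0 ^ 2 = 0 := by simp [P.U0]
      rw [ContinuousWithinAt, z]
      have hc : Continuous fun x => 64 * d ^ 2 * tanh x * (1 - tanh x ^ 2) := by
        have := tanh_cont; fun_prop
      refine squeeze_zero_norm' (a := fun x => 64 * d ^ 2 * tanh x * (1 - tanh x ^ 2)) ?_ ?_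
      · filter_upwards [self_mem_nhdsWithin] with y hy using P.EU hy
      · have := hc.continuousWithinAt (s := Ici 0) (x := 0)
        simpa [ContinuousWithinAt] using this
    unfold BB
    exact ContinuousWithinAt.add (Continuous.continuousWithinAt (by fun_prop)) h1
  · exact (P.dB hx').continuousAt.continuousWithinAt

end
end KG

namespace KG
open Set

/-! ### Coercivity of the localized virial form -/

/-- Virial quadratic form plus the cutoff error; it is nonnegative and controls `XX`. -/
noncomputable def Dt (e e1 : ℝ → ℝ) (d ρ : ℝ) : ℝ :=
  (∫ x in (0:ℝ)..ρ, om ρ x * dens e e1 x) + 89 * d ^ 2 / ρ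

/-- The sum of the two squares of the coercivity identity, without their coefficients. -/
noncomputable def xdens (e e1 U : ℝ → ℝ) (x : ℝ) : ℝ :=
  qq e1 U x ^ 2 + KK e U x ^ 2 / (tanh x ^ 2 * (1 - tanh x ^ 2))

/-- The localized integral of `xdens`. -/
noncomputable def XX (e e1 U : ℝ → ℝ) (ρ : ℝ) : ℝ :=
  ∫ x in (0:ℝ)..ρ, om ρ x * xdens e e1 U x

/-- The quantity `e - 3 U / tanh`, whose derivative is a combination of `qq` and `KK`
(see `Prof.dTh`). -/
noncomputable def Th (e U : ℝ → ℝ) (x : ℝ) : ℝ := e x - 3 * (U x / tanh x)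

lemma om_cont (ρ : ℝ) : Continuous (om ρ) := by unfold om; fun_prop

section
variable {e e1 U : ℝ → ℝ} {d ρ : ℝ} (P : Prof e e1 U d ρ)
include P

lemma Prof.cq : Continuous (qq e1 U) := by
  have := P.ce1; have := P.cU; unfold qq; fun_prop
lemma Prof.cK : Continuous (KK e U) := by
  have := P.ce; have := P.cU; have := tanh_cont; have := rr_cont; unfold KK; fun_prop
lemma Prof.cdens : Continuous (dens e e1) := by
  have := P.ce; have := P.ce1; have := tanh_cont; have := pp_cont; have := pp1_cont
  have := psi_cont; unfold dens; fun_prop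
lemma Prof.mx : Measurable (xdens e e1 U) := by
  have := P.cq.measurable; have := P.cK.measurable; have := tanh_cont.measurable
  unfold xdens; fun_prop
lemma Prof.mTh : Measurable (Th e U) := by
  have := P.ce.measurable; have := P.cU.measurable; have := tanh_cont.measurable
  unfold Th; fun_prop

lemma Prof.dK (x : ℝ) : HasDerivAt (KK e U) (1 / 2 * tanh x * (1 - tanh x ^ 2) * qq e1 U x) x := by
  have h := ((((tanh_deriv x).const_mul (1 / 2)).mul ((y_deriv x).const_sub 1)).mul (P.de x)).add
    ((rr_deriv x).mul (P.dU x))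
  refine hd h (fun z => rfl) ?_
  simp only [Pi.mul_apply, qq, rr]
  ring

lemma Prof.K0 : KK e U 0 = 0 := by simp [KK, P.U0]

lemma Prof.qbd : ∃ M, 0 ≤ M ∧ ∀ x ∈ Icc 0 ρ, |qq e1 U x| ≤ M := by
  obtain ⟨M, hM⟩ := (isCompact_Icc (a := (0:ℝ)) (b := ρ)).exists_bound_of_continuousOn
    P.cq.continuousOn
  exact ⟨M, (norm_nonneg _).trans (hM 0 ⟨le_rfl, P.ρ0.le⟩), hM⟩

lemma Prof.Kbd : ∃ C, 0 ≤ C ∧ ∀ x ∈ Icc 0 ρ, |KK e U x| ≤ C * tanh x ^ 2 := by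
  obtain ⟨M, hM0, hM⟩ := P.qbd
  refine ⟨M / 4, by positivity, fun x hx => ?_⟩
  have hg : ∀ z, HasDerivAt (fun z => M / 4 * tanh z ^ 2) (M / 4 * (2 * tanh z * (1 - tanh z ^ 2))) z :=
    fun z => (y_deriv z).const_mul _
  have key : ∀ z ∈ Icc 0 x, |1 / 2 * tanh z * (1 - tanh z ^ 2) * qq e1 U z| ≤
      M / 4 * (2 * tanh z * (1 - tanh z ^ 2)) := by
    intro z hz
    have h0 : 0 ≤ tanh z * (1 - tanh z ^ 2) := mul_nonneg (tanh_nonneg' hz.1) (s2_pos z).le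
    have h1 := hM z ⟨hz.1, hz.2.trans hx.2⟩
    rw [abs_mul, abs_of_nonneg (by linarith : 0 ≤ 1 / 2 * tanh z * (1 - tanh z ^ 2))]
    nlinarith
  have h1 := le_of_deriv_le_on hx.1 (fun z _ => P.dK z) (fun z _ => hg z)
    (fun z hz => (le_abs_self _).trans (key z hz))
  have h2 := le_of_deriv_le_on hx.1 (fun z _ => (P.dK z).neg) (fun z _ => hg z)
    (fun z hz => (neg_le_abs _).trans (key z hz))
  simp only [P.K0, Pi.neg_apply, tanh_zero] at h1 h2
  rw [abs_le]; constructor <;> linarith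

lemma Prof.Kb2 {x : ℝ} (hx : 0 ≤ x) : |KK e U x| ≤ 3 * d * tanh x * (1 - tanh x ^ 2) := by
  have h2 := P.Ub2 hx
  have t0 := tanh_nonneg' hx
  have s0 := (s2_pos x).le
  have he := P.be x hx
  have a1 : |1 / 2 * tanh x * (1 - tanh x ^ 2) * e x| ≤ 1 / 2 * tanh x * (1 - tanh x ^ 2) * d := by
    rw [abs_mul, abs_of_nonneg (by positivity)]; gcongr
  have a2 : |rr x * U x| ≤ 1 * (2 * d * tanh x * (1 - tanh x ^ 2)) := by
    rw [abs_mul]; exact mul_le_mul (rr_abs x) h2 (abs_nonneg _) zero_le_one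
  have : 0 ≤ d * tanh x * (1 - tanh x ^ 2) := mul_nonneg (mul_nonneg P.d0 t0) s0
  refine (abs_add_le _ _).trans ?_
  nlinarith

lemma Prof.x_nonneg (x : ℝ) : 0 ≤ xdens e e1 U x := by
  have := s2_pos x
  unfold xdens; positivity

/-- `K²/(t²s²)` is bounded by `9 d² s²`. -/
lemma Prof.K2s {x : ℝ} (hx : 0 < x) :
    KK e U x ^ 2 / (tanh x ^ 2 * (1 - tanh x ^ 2)) ≤ 9 * d ^ 2 * (1 - tanh x ^ 2) := by
  have t0 := tanh_pos' hx
  have s0 := s2_pos x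
  rw [div_le_iff₀ (by positivity), ← sq_abs]
  calc |KK e U x| ^ 2 ≤ (3 * d * tanh x * (1 - tanh x ^ 2)) ^ 2 := by
        gcongr; exact P.Kb2 hx.le
    _ = _ := by ring

lemma Prof.xbd : ∃ C, ∀ x ∈ Ioc 0 ρ, |xdens e e1 U x| ≤ C := by
  obtain ⟨M, hM0, hM⟩ := P.qbd
  refine ⟨M ^ 2 + 9 * d ^ 2, fun x hx => ?_⟩
  rw [abs_of_nonneg (P.x_nonneg x)]
  unfold xdens
  have h1 : qq e1 U x ^ 2 ≤ M ^ 2 := by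
    rw [← sq_abs]; gcongr; exact hM x ⟨hx.1.le, hx.2⟩
  have h2 := P.K2s hx.1
  have h3 : 9 * d ^ 2 * (1 - tanh x ^ 2) ≤ 9 * d ^ 2 := by
    have := s2_le x; have : 0 ≤ 9 * d ^ 2 := by positivity
    nlinarith
  linarith

lemma Prof.om_abs {x : ℝ} (hx : x ∈ Ioc 0 ρ) : |om ρ x| ≤ 1 := by
  rw [abs_of_nonneg (P.om0 hx.2)]; exact P.om1 hx.1.le

lemma Prof.om_ii {f : ℝ → ℝ} (hm : Measurable f) (hb : ∃ C, ∀ x ∈ Ioc 0 ρ, |f x| ≤ C) :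
    IntervalIntegrable (fun x => om ρ x * f x) volume 0 ρ := by
  obtain ⟨C, hC⟩ := hb
  refine ii_bdd P.ρ0.le ((om_cont ρ).measurable.mul hm) (C := C) (fun x hx => ?_)
  rw [abs_mul]
  have h1 := P.om_abs hx
  have h2 := hC x hx
  nlinarith [abs_nonneg (f x), abs_nonneg (om ρ x)]

lemma Prof.ix : IntervalIntegrable (fun x => om ρ x * xdens e e1 U x) volume 0 ρ :=
  P.om_ii P.mx P.xbd

lemma Prof.XX_nonneg : 0 ≤ XX e e1 U ρ :=
  intervalIntegral.integral_nonneg P.ρ0.le (fun x hx => mul_nonneg (P.om0 hx.2) (P.x_nonneg x))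

lemma Prof.om_int_le {f : ℝ → ℝ} (hf : Continuous f) (h0 : ∀ x, 0 ≤ f x) :
    ∫ x in (0:ℝ)..ρ, om ρ x * f x ≤ ∫ x in (0:ℝ)..ρ, f x := by
  have := om_cont ρ
  refine int_mono P.ρ0.le (ii_cont (by fun_prop) _ _) (ii_cont hf _ _) (fun x hx => ?_)
  have := P.om1 hx.1.le
  nlinarith [h0 x]

/-- Coercivity of the virial form. -/
lemma Prof.coercive : 4 / 45 * XX e e1 U ρ ≤ Dt e e1 d ρ := by
  have hρ := P.ρ0
  have ce := P.ce
  have ct := tanh_cont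
  have co := om_cont ρ
  have cd := P.cdens
  set bnd : ℝ → ℝ := fun x => (3 / 4 * e x ^ 2 + 88 * d ^ 2 * (1 - tanh x ^ 2)) / ρ with hb
  have cb : Continuous bnd := by rw [hb]; fun_prop
  have i1 : IntervalIntegrable (fun x => om ρ x * dens e e1 x) volume 0 ρ :=
    ii_cont (by fun_prop) _ _
  have i3 := ii_cont cb 0 ρ
  have hG := ftc_le (G := fun x => om ρ x * BB e U x)
    (φ := fun x => om ρ x * dens e e1 x - 4 / 45 * (om ρ x * xdens e e1 U x) + bnd x)
    hρ.le (co.continuousOn.mul (P.cB.mono (fun x hx => hx.1)))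
    (fun x hx => (om_deriv ρ x).mul (P.dB hx.1)) ((i1.sub (P.ix.const_mul _)).add i3) ?_
  · have z0 : om ρ 0 * BB e U 0 = 0 := by simp [BB, P.U0, pp1]
    have z1 : om ρ ρ * BB e U ρ = 0 := by simp [om, hρ.ne']
    simp only [z0, z1, sub_zero] at hG
    rw [intervalIntegral.integral_add (i1.sub (P.ix.const_mul _)) i3,
      intervalIntegral.integral_sub i1 (P.ix.const_mul _),
      intervalIntegral.integral_const_mul] at hG
    have h3 : ∫ x in (0:ℝ)..ρ, bnd x ≤ 89 * d ^ 2 / ρ := by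
      rw [hb, intervalIntegral.integral_div]
      rw [intervalIntegral.integral_add (ii_cont (by fun_prop) _ _) (ii_cont (by fun_prop) _ _),
        intervalIntegral.integral_const_mul, intervalIntegral.integral_const_mul]
      have := P.ie
      have h4 := int_s2_le hρ.le
      gcongr
      nlinarith [sq_nonneg d]
    unfold Dt XX
    linarith
  · intro x hx
    have hB := P.Bb hx.1.le
    have h1 : -(1 / ρ) * BB e U x ≤ bnd x := by
      rw [hb]
      have := neg_abs_le (BB e U x)
      simp only
      rw [neg_mul, one_div, neg_le, ← neg_div, div_eq_mul_inv, mul_comm]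
      gcongr
      linarith
    have ho := P.om0 hx.2.le
    have hk : 0 ≤ KK e U x ^ 2 / (tanh x ^ 2 * (1 - tanh x ^ 2)) := by
      have := s2_pos x; positivity
    have h2 : 4 / 45 * xdens e e1 U x ≤ pp x * qq e1 U x ^ 2
        + 4 * mm x * (KK e U x ^ 2 / (tanh x ^ 2 * (1 - tanh x ^ 2))) := by
      unfold xdens
      have a1 := pp_ge x
      have a2 := mm_ge x
      nlinarith [sq_nonneg (qq e1 U x)]
    have h3 := mul_le_mul_of_nonneg_left h2 ho
    linarith

lemma Prof.Dt_nonneg : 0 ≤ Dt e e1 d ρ := by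
  have := P.coercive; have := P.XX_nonneg; linarith

lemma Prof.Dt_le : Dt e e1 d ρ ≤ 92 * d ^ 2 := by
  have hρ := P.ρ0
  have ce := P.ce
  have ce1 := P.ce1
  have co := om_cont ρ
  have cd := P.cdens
  have h1 : ∫ x in (0:ℝ)..ρ, om ρ x * dens e e1 x ≤ ∫ x in (0:ℝ)..ρ, (e x ^ 2 + 2 * e1 x ^ 2) := by
    refine int_mono hρ.le (ii_cont (by fun_prop) _ _) (ii_cont (by fun_prop) _ _) (fun x hx => ?_)
    have ho := P.om0 hx.2.le
    have ho1 := P.om1 hx.1.le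
    have hx0 := hx.1.le
    have b1 : dens e e1 x ≤ e x ^ 2 + 2 * e1 x ^ 2 := by
      unfold dens
      have := mul_nonneg (mul_nonneg (mul_nonneg (psi_nonneg hx0) (s2_pos x).le) (tanh_nonneg' hx0))
        (sq_nonneg (e x))
      have a1 := pp_le x
      have a2 := pp1_le hx0
      have a3 := pp1_nonneg hx0
      have a4 : pp1 x * (e x * e1 x) ≤ 3 * ((e x ^ 2 + e1 x ^ 2) / 2) := by
        have : e x * e1 x ≤ (e x ^ 2 + e1 x ^ 2) / 2 := by nlinarith [sq_nonneg (e x - e1 x)]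
        have h5 : 0 ≤ (e x ^ 2 + e1 x ^ 2) / 2 := by positivity
        nlinarith
      nlinarith [sq_nonneg (e x), sq_nonneg (e1 x)]
    have b2 : 0 ≤ e x ^ 2 + 2 * e1 x ^ 2 := by positivity
    nlinarith
  rw [intervalIntegral.integral_add (ii_cont (by fun_prop) _ _) (ii_cont (by fun_prop) _ _),
    intervalIntegral.integral_const_mul] at h1
  have h2 : 89 * d ^ 2 / ρ ≤ 89 * d ^ 2 := div_le_self (by positivity) P.ρ1
  have := P.ie
  have := P.ie1
  unfold Dt
  linarith

/-- Hardy-type inequality near the origin. -/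
lemma Prof.hardy : ∫ x in (0:ℝ)..ρ, om ρ x * (KK e U x ^ 2 / tanh x ^ 4) ≤ 9 / 8 * XX e e1 U ρ := by
  obtain ⟨C, hC0, hC⟩ := P.Kbd
  have hρ := P.ρ0
  have mK := P.cK.measurable
  have mt := tanh_cont.measurable
  have hK4 : ∀ x ∈ Ioc 0 ρ, KK e U x ^ 2 / tanh x ^ 4 ≤ C ^ 2 := by
    intro x hx
    have t0 := tanh_pos' hx.1
    rw [div_le_iff₀ (by positivity), ← sq_abs]
    calc |KK e U x| ^ 2 ≤ (C * tanh x ^ 2) ^ 2 := by gcongr; exact hC x ⟨hx.1.le, hx.2⟩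
      _ = _ := by ring
  have i1 : IntervalIntegrable (fun x => om ρ x * (KK e U x ^ 2 / tanh x ^ 4)) volume 0 ρ :=
    P.om_ii (by fun_prop) ⟨C ^ 2, fun x hx => by
      rw [abs_of_nonneg (by positivity)]; exact hK4 x hx⟩
  have i2 := P.ix
  have hG := ftc_le (G := fun x => om ρ x * (KK e U x ^ 2 / tanh x ^ 3))
    (G' := fun x => -(1 / ρ) * (KK e U x ^ 2 / tanh x ^ 3) + om ρ x *
      ((1 - tanh x ^ 2) * KK e U x * qq e1 U x / tanh x ^ 2
        - 3 * (1 - tanh x ^ 2) * KK e U x ^ 2 / tanh x ^ 4))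
    (φ := fun x => 9 / 4 * (om ρ x * xdens e e1 U x) - 2 * (om ρ x * (KK e U x ^ 2 / tanh x ^ 4)))
    hρ.le ?_ ?_ ((i2.const_mul _).sub (i1.const_mul _)) ?_
  · have z1 : om ρ ρ = 0 := by simp [om, hρ.ne']
    simp only [z1, P.K0, zero_mul, sub_zero] at hG
    rw [intervalIntegral.integral_sub (i2.const_mul _) (i1.const_mul _),
      intervalIntegral.integral_const_mul, intervalIntegral.integral_const_mul] at hG
    unfold XX
    norm_num at hG
    linarith
  · refine (om_cont ρ).continuousOn.mul (fun x hx => ?_)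
    rcases hx.1.eq_or_lt with rfl | hx'
    · rw [ContinuousWithinAt]
      simp only [P.K0]
      norm_num
      refine squeeze_zero_norm' (a := fun x => C ^ 2 * tanh x) ?_ ?_
      · filter_upwards [self_mem_nhdsWithin] with z hz
        rcases hz.1.eq_or_lt with rfl | hz'
        · simp
        have t0 := tanh_pos' hz'
        rw [Real.norm_of_nonneg (by positivity)]
        have := hK4 z ⟨hz', hz.2⟩
        calc KK e U z ^ 2 / tanh z ^ 3 = KK e U z ^ 2 / tanh z ^ 4 * tanh z := by field_simp
          _ ≤ _ := by gcongr
      · have hc : Continuous fun x => C ^ 2 * tanh x := by have := tanh_cont; fun_prop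
        have := hc.continuousWithinAt (s := Icc 0 ρ) (x := 0)
        simpa [ContinuousWithinAt] using this
    · exact (P.cK.continuousAt.pow 2 |>.div (tanh_cont.continuousAt.pow 3)
        (pow_pos (tanh_pos' hx') 3).ne').continuousWithinAt
  · intro x hx
    have t0 := (tanh_pos' hx.1).ne'
    refine hd ((om_deriv ρ x).mul (((P.dK x).pow 2).div ((tanh_deriv x).pow 3) (pow_ne_zero 3 t0)))
      (fun z => rfl) ?_
    simp only [Pi.pow_apply, Pi.div_apply]
    congr 2
    field_simp
    push_cast
    ring
  · intro x hx
    have t0 := tanh_pos' hx.1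
    have s0 := s2_pos x
    have s1 := s2_le x
    have ho := P.om0 hx.2.le
    have a1 : 0 ≤ (1 / ρ) * (KK e U x ^ 2 / tanh x ^ 3) := by positivity
    have a2 : (1 - tanh x ^ 2) * KK e U x * qq e1 U x / tanh x ^ 2
        - 3 * (1 - tanh x ^ 2) * KK e U x ^ 2 / tanh x ^ 4 ≤
        9 / 4 * xdens e e1 U x - 2 * (KK e U x ^ 2 / tanh x ^ 4) := by
      unfold xdens
      have e1' : KK e U x ^ 2 / (tanh x ^ 2 * (1 - tanh x ^ 2)) ≥ KK e U x ^ 2 / tanh x ^ 2 := by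
        apply div_le_div_of_nonneg_left (sq_nonneg _) (by positivity)
        have : 0 ≤ tanh x ^ 2 := by positivity
        nlinarith
      have e2 : KK e U x ^ 2 / tanh x ^ 2 = tanh x ^ 2 * (KK e U x / tanh x ^ 2) ^ 2 := by
        field_simp
      have e3 : KK e U x ^ 2 / tanh x ^ 4 = (KK e U x / tanh x ^ 2) ^ 2 := by field_simp
      have e4 : (1 - tanh x ^ 2) * KK e U x * qq e1 U x / tanh x ^ 2
        - 3 * (1 - tanh x ^ 2) * KK e U x ^ 2 / tanh x ^ 4 = (1 - tanh x ^ 2) *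
          ((KK e U x / tanh x ^ 2) * qq e1 U x - 3 * (KK e U x / tanh x ^ 2) ^ 2) := by
        field_simp
      rw [e4, e3]
      rw [e2] at e1'
      generalize KK e U x / tanh x ^ 2 = k at *
      generalize qq e1 U x = q at *
      have h1 : k * q - 3 * k ^ 2 ≤ q ^ 2 / 4 - 2 * k ^ 2 := by nlinarith [sq_nonneg (k - q / 2)]
      have h2 := mul_le_mul_of_nonneg_left h1 s0.le
      nlinarith [sq_nonneg q, sq_nonneg k]
    have a3 := mul_le_mul_of_nonneg_left a2 ho
    linarith

end
end KG

namespace KG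
open Set

/-! ### Pointwise control by the virial form -/

/-- The size of `e²` (with linear growth) permitted by the virial form. -/
noncomputable def SS (e e1 : ℝ → ℝ) (d ρ : ℝ) : ℝ := d ^ 2 / ρ + d * √(Dt e e1 d ρ)

section
variable {e e1 U : ℝ → ℝ} {d ρ : ℝ} (P : Prof e e1 U d ρ)
include P

lemma Prof.dTh {x : ℝ} (hx : 0 < x) :
    HasDerivAt (Th e U) (qq e1 U x - 6 * (KK e U x / tanh x ^ 2)) x := by
  have t0 := (tanh_pos' hx).ne'
  refine hd ((P.de x).sub (((P.dU x).div (tanh_deriv x) t0).const_mul 3)) (fun z => rfl) ?_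
  simp only [qq, KK, rr]
  field_simp
  ring

lemma Prof.Thb {x : ℝ} (hx : 0 < x) : Th e U x ^ 2 ≤ 2 * e x ^ 2 + 72 * d ^ 2 * (1 - tanh x ^ 2) := by
  have t0 := tanh_pos' hx
  have s0 := s2_pos x
  have h : |U x / tanh x| ≤ 2 * d * (1 - tanh x ^ 2) := by
    rw [abs_div, abs_of_pos t0, div_le_iff₀ t0]
    have := P.Ub2 hx.le
    linarith
  have h2 : (U x / tanh x) ^ 2 ≤ 4 * d ^ 2 * (1 - tanh x ^ 2) := by
    rw [← sq_abs]
    calc |U x / tanh x| ^ 2 ≤ (2 * d * (1 - tanh x ^ 2)) ^ 2 := by gcongr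
      _ = 4 * d ^ 2 * (1 - tanh x ^ 2) * (1 - tanh x ^ 2) := by ring
      _ ≤ 4 * d ^ 2 * (1 - tanh x ^ 2) * 1 := by gcongr; exact s2_le x
      _ = _ := by ring
  unfold Th
  nlinarith [sq_nonneg (e x + 3 * (U x / tanh x))]

lemma Prof.Th_young {x : ℝ} (hx : 0 < x) (hxρ : x ≤ ρ) (l : ℝ) (hl : 0 < l) :
    om ρ x * Th e U x ^ 2 ≤ 74 * d ^ 2 / ρ + l * (83 * XX e e1 U ρ) + (9 * d) ^ 2 / l := by
  have hρ := P.ρ0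
  obtain ⟨C, hC0, hC⟩ := P.Kbd
  have ce := P.ce
  have ct := tanh_cont
  have mK := P.cK.measurable
  have mt := tanh_cont.measurable
  have i1 : IntervalIntegrable (fun x => om ρ x * (KK e U x ^ 2 / tanh x ^ 4)) volume 0 ρ :=
    P.om_ii (by fun_prop) ⟨C ^ 2, fun x hx => by
      have t0 := tanh_pos' hx.1
      rw [abs_of_nonneg (by positivity), div_le_iff₀ (by positivity), ← sq_abs]
      calc |KK e U x| ^ 2 ≤ (C * tanh x ^ 2) ^ 2 := by gcongr; exact hC x ⟨hx.1.le, hx.2⟩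
        _ = _ := by ring⟩
  have i2 := P.ix
  set g : ℝ → ℝ := fun x => (2 * e x ^ 2 + 72 * d ^ 2 * (1 - tanh x ^ 2)) with hg
  have cg : Continuous g := by rw [hg]; fun_prop
  have i3 := ii_cont cg 0 ρ
  set φ : ℝ → ℝ := fun x => (1 / ρ + 1 / l) * g x + (l * (2 * (om ρ x * xdens e e1 U x)
    + 72 * (om ρ x * (KK e U x ^ 2 / tanh x ^ 4)))) with hφ
  have iφ2 := ((i2.const_mul 2).add (i1.const_mul 72)).const_mul l
  have iφ : IntervalIntegrable φ volume 0 ρ := (i3.const_mul _).add iφ2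
  have g0 : ∀ z, 0 ≤ g z := fun z => by have := s2_pos z; rw [hg]; positivity
  have φ0 : ∀ z ∈ Icc 0 ρ, 0 ≤ φ z := by
    intro z hz
    have h1 := P.om0 hz.2
    have h2 := P.x_nonneg z
    have h3 := g0 z
    rw [hφ]; positivity
  have sub : uIcc x ρ ⊆ uIcc 0 ρ := by
    rw [uIcc_of_le hxρ, uIcc_of_le hρ.le]; exact Icc_subset_Icc hx.le le_rfl
  have hG := ftc_le (G := fun x => -(om ρ x * Th e U x ^ 2)) (φ := φ) hxρ
    (fun z hz => ContinuousAt.continuousWithinAt (ContinuousAt.neg ((om_cont ρ).continuousAt.mul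
      ((P.dTh (hx.trans_le hz.1)).continuousAt.pow 2))))
    (fun z hz => ((om_deriv ρ z).mul ((P.dTh (hx.trans hz.1)).pow 2)).neg)
    (iφ.mono_set sub) ?_
  · have z1 : om ρ ρ = 0 := by simp [om, hρ.ne']
    simp only [z1, zero_mul] at hG
    have h2 : ∫ z in x..ρ, φ z ≤ ∫ z in (0:ℝ)..ρ, φ z := by
      have i0 : IntervalIntegrable φ volume 0 x := iφ.mono_set (by
        rw [uIcc_of_le hx.le, uIcc_of_le hρ.le]; exact Icc_subset_Icc le_rfl hxρ)
      rw [← intervalIntegral.integral_add_adjacent_intervals i0 (iφ.mono_set sub)]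
      have : 0 ≤ ∫ z in (0:ℝ)..x, φ z := intervalIntegral.integral_nonneg hx.le
        (fun z hz => φ0 z ⟨hz.1, hz.2.trans hxρ⟩)
      linarith
    have h3 : ∫ z in (0:ℝ)..ρ, φ z ≤ (1 / ρ + 1 / l) * (74 * d ^ 2) + l * (83 * XX e e1 U ρ) := by
      rw [hφ, intervalIntegral.integral_add (i3.const_mul _) iφ2,
        intervalIntegral.integral_const_mul, intervalIntegral.integral_const_mul,
        intervalIntegral.integral_add (i2.const_mul 2) (i1.const_mul 72),
        intervalIntegral.integral_const_mul, intervalIntegral.integral_const_mul]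
      have a1 : ∫ z in (0:ℝ)..ρ, g z ≤ 74 * d ^ 2 := by
        rw [hg, intervalIntegral.integral_add (ii_cont (by fun_prop) _ _) (ii_cont (by fun_prop) _ _),
          intervalIntegral.integral_const_mul, intervalIntegral.integral_const_mul]
        have := P.ie
        have := int_s2_le hρ.le
        nlinarith [sq_nonneg d]
      have a2 := P.hardy
      gcongr
      change 2 * XX e e1 U ρ + _ ≤ _
      linarith
    have h4 : (1 / ρ + 1 / l) * (74 * d ^ 2) ≤ 74 * d ^ 2 / ρ + (9 * d) ^ 2 / l := by
      have : (9 * d) ^ 2 / l = (1 / l) * (74 * d ^ 2) + 7 * d ^ 2 / l := by ring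
      have : 0 ≤ 7 * d ^ 2 / l := by positivity
      have e5 : (1 / ρ + 1 / l) * (74 * d ^ 2) = 74 * d ^ 2 / ρ + (1 / l) * (74 * d ^ 2) := by ring
      linarith
    linarith
  · intro z hz
    have hz0 : 0 < z := hx.trans hz.1
    have ho := P.om0 hz.2.le
    have ho1 := P.om1 hz0.le
    have hT := P.Thb hz0
    have t0 := tanh_pos' hz0
    simp only [hφ, Pi.pow_apply]
    have e3 : KK e U z ^ 2 / tanh z ^ 4 = (KK e U z / tanh z ^ 2) ^ 2 := by field_simp
    have hx1 : qq e1 U z ^ 2 ≤ xdens e e1 U z := by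
      unfold xdens
      have : 0 ≤ KK e U z ^ 2 / (tanh z ^ 2 * (1 - tanh z ^ 2)) := by have := s2_pos z; positivity
      linarith
    rw [e3]
    change Th e U z ^ 2 ≤ g z at hT
    generalize KK e U z / tanh z ^ 2 = k at *
    generalize qq e1 U z = q at *
    generalize xdens e e1 U z = X at *
    generalize Th e U z = T at *
    generalize g z = G at *
    generalize om ρ z = w at *
    have b1 : 1 / ρ * T ^ 2 ≤ 1 / ρ * G := by gcongr
    have b2 : (q - 6 * k) ^ 2 ≤ 2 * X + 72 * k ^ 2 := by nlinarith [sq_nonneg (q + 6 * k)]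
    have b3 : -(2 * T * (q - 6 * k)) ≤ l * (q - 6 * k) ^ 2 + 1 / l * T ^ 2 := by
      have : 0 ≤ l * ((q - 6 * k) + 1 / l * T) ^ 2 := by positivity
      have e6 : l * ((q - 6 * k) + 1 / l * T) ^ 2 = l * (q - 6 * k) ^ 2 + 2 * T * (q - 6 * k)
        + 1 / l * T ^ 2 := by field_simp; ring
      linarith
    have b4 : l * (q - 6 * k) ^ 2 ≤ l * (2 * X + 72 * k ^ 2) := by gcongr
    have b5 : 1 / l * T ^ 2 ≤ 1 / l * G := by gcongr
    have b6 : w * -(2 * T * (q - 6 * k)) ≤ w * (l * (2 * X + 72 * k ^ 2) + 1 / l * G) := by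
      gcongr; linarith
    have b7 : w * (1 / l * G) ≤ 1 / l * G := by
      have : 0 ≤ 1 / l * G := by have := (sq_nonneg T).trans hT; positivity
      nlinarith
    push_cast
    nlinarith

lemma Prof.SS_nonneg : 0 ≤ SS e e1 d ρ := by
  have := P.d0; have := P.ρ0; unfold SS; positivity

lemma Prof.X_le : XX e e1 U ρ ≤ 113 * SS e e1 d ρ := by
  have h1 := P.coercive
  have h2 := P.Dt_nonneg
  have h3 := P.Dt_le
  have d0 := P.d0
  have hs : √(Dt e e1 d ρ) ≤ 10 * d := by
    rw [Real.sqrt_le_left (by positivity)]; nlinarith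
  have hs0 := Real.sqrt_nonneg (Dt e e1 d ρ)
  have h4 : Dt e e1 d ρ ≤ 10 * (d * √(Dt e e1 d ρ)) := by
    have := Real.mul_self_sqrt h2
    nlinarith
  have h5 : 0 ≤ d ^ 2 / ρ := by have := P.ρ0; positivity
  unfold SS
  nlinarith

lemma Prof.Th_le {x : ℝ} (hx : 0 < x) (hxρ : x ≤ ρ) :
    om ρ x * Th e U x ^ 2 ≤ 600 * SS e e1 d ρ := by
  have d0 := P.d0
  have h := sqrt_of_young (by positivity) (by have := P.XX_nonneg; positivity) (P.Th_young hx hxρ)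
  have h1 : √(83 * XX e e1 U ρ) ≤ 31 * √(Dt e e1 d ρ) := by
    have hc := P.coercive
    have h0 := P.Dt_nonneg
    rw [Real.sqrt_le_left (by positivity), mul_pow, Real.sq_sqrt h0]
    linarith
  have h5 : 0 ≤ d ^ 2 / ρ := by have := P.ρ0; positivity
  have h6 : 0 ≤ d * √(Dt e e1 d ρ) := by positivity
  have h7 : 2 * (9 * d) * √(83 * XX e e1 U ρ) ≤ 2 * (9 * d) * (31 * √(Dt e e1 d ρ)) := by gcongr
  have e8 : 74 * d ^ 2 / ρ = 74 * (d ^ 2 / ρ) := by ring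
  unfold SS
  nlinarith

lemma Prof.K_le {x : ℝ} (hx : 0 < x) (hxρ : x ≤ ρ) :
    om ρ x * (KK e U x / tanh x) ^ 2 ≤ 1 / 2 * XX e e1 U ρ := by
  have hρ := P.ρ0
  obtain ⟨C, hC0, hC⟩ := P.Kbd
  have i2 := P.ix
  have sub : uIcc 0 x ⊆ uIcc 0 ρ := by
    rw [uIcc_of_le hx.le, uIcc_of_le hρ.le]; exact Icc_subset_Icc le_rfl hxρ
  have sub2 : uIcc x ρ ⊆ uIcc 0 ρ := by
    rw [uIcc_of_le hxρ, uIcc_of_le hρ.le]; exact Icc_subset_Icc hx.le le_rfl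
  have hKt : ∀ z ∈ Icc 0 ρ, |KK e U z / tanh z| ≤ C * tanh z := by
    intro z hz
    rcases hz.1.eq_or_lt with rfl | hz'
    · simp
    have t0 := tanh_pos' hz'
    rw [abs_div, abs_of_pos t0, div_le_iff₀ t0]
    have := hC z hz
    linarith [this, (by ring : C * tanh z * tanh z = C * tanh z ^ 2)]
  have hG := ftc_le (G := fun x => om ρ x * (KK e U x / tanh x) ^ 2)
    (φ := fun x => 1 / 2 * (om ρ x * xdens e e1 U x)) hx.le ?_
    (fun z hz => (om_deriv ρ z).mul (((P.dK z).div (tanh_deriv z) (tanh_pos' hz.1).ne').pow 2))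
    ((i2.const_mul _).mono_set sub) ?_
  · simp only [P.K0, zero_div] at hG
    rw [intervalIntegral.integral_const_mul] at hG
    have h2 : ∫ z in (0:ℝ)..x, om ρ z * xdens e e1 U z ≤ XX e e1 U ρ := by
      unfold XX
      rw [← intervalIntegral.integral_add_adjacent_intervals (i2.mono_set sub) (i2.mono_set sub2)]
      have : 0 ≤ ∫ z in x..ρ, om ρ z * xdens e e1 U z := intervalIntegral.integral_nonneg hxρ
        (fun z hz => mul_nonneg (P.om0 hz.2) (P.x_nonneg z))
      linarith
    norm_num at hG
    linarith
  · refine (om_cont ρ).continuousOn.mul (ContinuousOn.pow (fun z hz => ?_) 2)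
    rcases hz.1.eq_or_lt with rfl | hz'
    · rw [ContinuousWithinAt]
      simp only [P.K0, zero_div]
      refine squeeze_zero_norm' (a := fun x => C * tanh x) ?_ ?_
      · filter_upwards [self_mem_nhdsWithin] with y hy
        exact hKt y ⟨hy.1, hy.2.trans hxρ⟩
      · have hc : Continuous fun x => C * tanh x := by have := tanh_cont; fun_prop
        have := hc.continuousWithinAt (s := Icc 0 x) (x := 0)
        simpa [ContinuousWithinAt] using this
    · exact (P.cK.continuousAt.div tanh_cont.continuousAt (tanh_pos' hz').ne').continuousWithinAt
  · intro z hz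
    have t0 := tanh_pos' hz.1
    have s0 := s2_pos z
    have s1 := s2_le z
    have ho := P.om0 (hz.2.le.trans hxρ)
    simp only [Pi.div_apply, Pi.pow_apply]
    have e1' : KK e U z ^ 2 / (tanh z ^ 2 * (1 - tanh z ^ 2)) ≥ (KK e U z / tanh z) ^ 2 := by
      rw [div_pow]
      apply div_le_div_of_nonneg_left (sq_nonneg _) (by positivity)
      have : 0 ≤ tanh z ^ 2 := by positivity
      nlinarith
    have e2 : (1 / 2 * tanh z * (1 - tanh z ^ 2) * qq e1 U z * tanh z - KK e U z * (1 - tanh z ^ 2))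
        / tanh z ^ 2 = (1 - tanh z ^ 2) * (1 / 2 * qq e1 U z - (KK e U z / tanh z) / tanh z) := by
      field_simp
    rw [e2]
    unfold xdens
    have a1 : 0 ≤ (1 / ρ) * (KK e U z / tanh z) ^ 2 := by positivity
    have a4 : 0 ≤ (KK e U z / tanh z) * ((KK e U z / tanh z) / tanh z) := by
      rw [← mul_div_assoc, ← pow_two]; positivity
    generalize (KK e U z / tanh z) / tanh z = j at *
    generalize KK e U z / tanh z = k at *
    generalize qq e1 U z = q at *
    generalize om ρ z = w at *
    have a2 : 2 * k * ((1 - tanh z ^ 2) * (1 / 2 * q - j)) ≤ 1 / 2 * (q ^ 2 + k ^ 2) := by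
      have h1 : k * q ≤ 1 / 2 * (q ^ 2 + k ^ 2) := by nlinarith [sq_nonneg (k - q)]
      have h2 : 0 ≤ 1 / 2 * (q ^ 2 + k ^ 2) := by positivity
      nlinarith [mul_le_mul_of_nonneg_left h1 s0.le, mul_nonneg s0.le a4]
    have a3 : w * (2 * k * ((1 - tanh z ^ 2) * (1 / 2 * q - j))) ≤ w * (1 / 2 * (q ^ 2 +
        KK e U z ^ 2 / (tanh z ^ 2 * (1 - tanh z ^ 2)))) := by
      exact mul_le_mul_of_nonneg_left (by linarith) ho
    norm_num
    norm_num at a1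
    linarith

lemma Prof.e_le {x : ℝ} (hx : 0 < x) (hxρ : x ≤ ρ) : om ρ x * e x ^ 2 ≤ 2300 * SS e e1 d ρ := by
  have h1 := P.Th_le hx hxρ
  have h2 := P.K_le hx hxρ
  have h3 := P.X_le
  have t0 := (tanh_pos' hx).ne'
  have e1' : e x = rr x * Th e U x + 3 * (KK e U x / tanh x) := by
    simp only [rr, Th, KK]; field_simp; ring
  have h4 : e x ^ 2 ≤ 2 * Th e U x ^ 2 + 18 * (KK e U x / tanh x) ^ 2 := by
    have hr : rr x ^ 2 ≤ 1 := by rw [← sq_abs]; exact pow_le_one₀ (abs_nonneg _) (rr_abs x)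
    rw [e1']
    generalize KK e U x / tanh x = k
    generalize Th e U x = T
    have : (rr x * T) ^ 2 ≤ T ^ 2 := by rw [mul_pow]; nlinarith [sq_nonneg T]
    nlinarith [sq_nonneg (rr x * T - 3 * k)]
  have h5 := mul_le_mul_of_nonneg_left h4 (P.om0 hxρ)
  have := P.SS_nonneg
  nlinarith

lemma Prof.e_growth {x : ℝ} (hx : 0 < x) : e x ^ 2 ≤ 4600 * (1 + x) * SS e e1 d ρ := by
  have hS := P.SS_nonneg
  have hρ := P.ρ0
  rcases le_total x (ρ / 2) with h | h
  · have h1 := P.e_le hx (by linarith)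
    have h2 : 1 / 2 ≤ om ρ x := by
      have : x / ρ ≤ 1 / 2 := by rw [div_le_iff₀ hρ]; linarith
      unfold om; linarith
    nlinarith [sq_nonneg (e x), mul_nonneg hx.le hS]
  · have h1 : e x ^ 2 ≤ d ^ 2 := by rw [← sq_abs]; gcongr; exact P.be x hx.le
    have h2 : d ^ 2 / ρ ≤ SS e e1 d ρ := by
      have := P.d0; unfold SS
      have : 0 ≤ d * √(Dt e e1 d ρ) := by positivity
      linarith
    rw [div_le_iff₀ hρ] at h2
    nlinarith [mul_nonneg hx.le hS]

lemma Prof.loc : ∫ x in (0:ℝ)..ρ, om ρ x * ((1 - tanh x ^ 2) * (e x ^ 2 + e1 x ^ 2)) ≤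
    50000 * SS e e1 d ρ := by
  have hρ := P.ρ0
  have co := om_cont ρ
  have ce := P.ce
  have ce1 := P.ce1
  have ct := tanh_cont
  have hS := P.SS_nonneg
  have h := int_mono (f := fun x => om ρ x * ((1 - tanh x ^ 2) * (e x ^ 2 + e1 x ^ 2)))
    (g := fun x => 23900 * SS e e1 d ρ * (1 - tanh x ^ 2) + 144 * (om ρ x * xdens e e1 U x))
    hρ.le (ii_cont (by fun_prop) _ _)
    ((ii_cont (by fun_prop) _ _).add (P.ix.const_mul _)) ?_
  · rw [intervalIntegral.integral_add (ii_cont (by fun_prop) _ _) (P.ix.const_mul _),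
      intervalIntegral.integral_const_mul, intervalIntegral.integral_const_mul] at h
    have h1 := int_s2_le hρ.le
    have h2 := P.X_le
    unfold XX at h2
    nlinarith
  · intro x hx
    have t0 := tanh_pos' hx.1
    have t0' := t0.ne'
    have t1 := tanh_lt_one x
    have s0 := s2_pos x
    have s1 := s2_le x
    have ho := P.om0 hx.2.le
    have h1 := P.Th_le hx.1 hx.2.le
    have h2 := P.e_le hx.1 hx.2.le
    have eU : U x = KK e U x - 1 / 2 * tanh x * (1 - tanh x ^ 2) * Th e U x := by
      simp only [rr, Th, KK]; field_simp; ring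
    have eq1 : e1 x = qq e1 U x - 6 * U x := by simp [qq]
    have hK : KK e U x ^ 2 ≤ KK e U x ^ 2 / (tanh x ^ 2 * (1 - tanh x ^ 2)) := by
      rw [le_div_iff₀ (by positivity)]
      have : tanh x ^ 2 * (1 - tanh x ^ 2) ≤ 1 := by nlinarith [y_nonneg x]
      nlinarith [sq_nonneg (KK e U x)]
    have a1 : U x ^ 2 ≤ 2 * KK e U x ^ 2 + 1 / 2 * Th e U x ^ 2 := by
      have hP : (1 / 2 * tanh x * (1 - tanh x ^ 2)) ^ 2 ≤ 1 / 4 := by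
        have : 1 / 2 * tanh x * (1 - tanh x ^ 2) ≤ 1 / 2 := by nlinarith
        have h0 : 0 ≤ 1 / 2 * tanh x * (1 - tanh x ^ 2) := by positivity
        nlinarith
      rw [eU]
      generalize 1 / 2 * tanh x * (1 - tanh x ^ 2) = p at *
      generalize KK e U x = k
      generalize Th e U x = T
      nlinarith [sq_nonneg (k + p * T), mul_le_mul_of_nonneg_right hP (sq_nonneg T)]
    have a2 : e1 x ^ 2 ≤ 144 * xdens e e1 U x + 36 * Th e U x ^ 2 := by
      unfold xdens
      rw [eq1]
      nlinarith [sq_nonneg (qq e1 U x + 6 * U x), sq_nonneg (qq e1 U x)]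
    have hx0 := P.x_nonneg x
    have a3 : (1 - tanh x ^ 2) * e1 x ^ 2 ≤ 144 * xdens e e1 U x + (1 - tanh x ^ 2) * (36 * Th e U x ^ 2) := by
      have := mul_le_mul_of_nonneg_left a2 s0.le
      nlinarith
    have a4 := mul_le_mul_of_nonneg_left a3 ho
    have a5 := mul_le_mul_of_nonneg_left h1 s0.le
    have a6 := mul_le_mul_of_nonneg_left h2 s0.le
    nlinarith

end
end KG

namespace KG
open Set

/-! ### Explicit profiles and weights -/

/-- The derivative of `Y`. -/
noncomputable def Y1 (x : ℝ) : ℝ := -2 * tanh x * Y x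

lemma sech_pos (x : ℝ) : 0 < sech x := inv_pos.mpr (cosh_pos x)
lemma sech_le_one (x : ℝ) : sech x ≤ 1 := inv_le_one_of_one_le₀ (one_le_cosh x)
lemma sech_deriv (x : ℝ) : HasDerivAt sech (-(tanh x * sech x)) x := by
  refine hd ((hasDerivAt_cosh x).inv (cosh_pos x).ne') (fun z => rfl) ?_
  rw [tanh_eq_sinh_div_cosh]; unfold sech
  have := (cosh_pos x).ne'
  field_simp
lemma sech_cont : Continuous sech :=
  continuous_iff_continuousAt.mpr fun x => (sech_deriv x).continuousAt
lemma Q_deriv (x : ℝ) : HasDerivAt Q (-(tanh x * Q x)) x :=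
  hd ((sech_deriv x).const_mul √2) (fun z => rfl) (by unfold Q; ring)
lemma Q_cont : Continuous Q := continuous_iff_continuousAt.mpr fun x => (Q_deriv x).continuousAt
lemma Y_deriv (x : ℝ) : HasDerivAt Y (Y1 x) x :=
  hd (((sech_deriv x).pow 2).const_mul (√3 / 2)) (fun z => rfl) (by unfold Y1 Y; norm_num; ring)
lemma Y_cont : Continuous Y := continuous_iff_continuousAt.mpr fun x => (Y_deriv x).continuousAt
lemma Y_eq (x : ℝ) : Y x = √3 / 2 * (1 - tanh x ^ 2) := by unfold Y; rw [sech_sq]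
lemma Y1_deriv (x : ℝ) : HasDerivAt Y1 ((4 - 6 * (1 - tanh x ^ 2)) * Y x) x :=
  hd (((tanh_deriv x).const_mul (-2)).mul (Y_deriv x)) (fun z => rfl) (by unfold Y1; ring)
lemma Y1_cont : Continuous Y1 := continuous_iff_continuousAt.mpr fun x => (Y1_deriv x).continuousAt
lemma Q1_deriv (x : ℝ) : HasDerivAt (fun x => -(tanh x * Q x)) (Q x - Q x ^ 3) x :=
  hd ((tanh_deriv x).mul (Q_deriv x)).neg (fun z => rfl) (by
    have h2 : √2 ^ 2 = 2 := sq_sqrt (by norm_num)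
    have : Q x ^ 3 = 2 * (1 - tanh x ^ 2) * Q x := by
      rw [← sech_sq]; unfold Q; linear_combination √2 * sech x ^ 3 * h2
    rw [this]; ring)
lemma Q_sq (x : ℝ) : 3 * Q x ^ 2 = 6 * (1 - tanh x ^ 2) := by
  rw [← sech_sq]; unfold Q; rw [mul_pow, sq_sqrt (by norm_num)]; ring

lemma s3_le : √3 / 2 ≤ 1 := by
  have : √3 ≤ 2 := by rw [sqrt_le_left (by norm_num)]; norm_num
  linarith
lemma Y_pos (x : ℝ) : 0 < Y x := by unfold Y; have := sech_pos x; positivity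
lemma Y_le_s2 (x : ℝ) : Y x ≤ 1 - tanh x ^ 2 := by
  rw [Y_eq]; have := s2_pos x; have := s3_le; nlinarith
lemma s2_le_sech (x : ℝ) : 1 - tanh x ^ 2 ≤ sech x := by
  rw [← sech_sq]; have := sech_pos x; have := sech_le_one x; nlinarith
lemma tanh_abs_le (x : ℝ) : |tanh x| ≤ 1 := (abs_tanh_lt_one x).le
lemma Y_le (x : ℝ) : Y x ≤ sech x := (Y_le_s2 x).trans (s2_le_sech x)
lemma Y_le_one (x : ℝ) : Y x ≤ 1 := (Y_le x).trans (sech_le_one x)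
lemma Y1_abs_s2 (x : ℝ) : |Y1 x| ≤ 2 * (1 - tanh x ^ 2) := by
  unfold Y1; rw [abs_mul, abs_mul, abs_of_pos (Y_pos x)]
  have := tanh_abs_le x; have := Y_le_s2 x; have := Y_pos x
  norm_num; nlinarith [abs_nonneg (tanh x)]
lemma Y1_abs (x : ℝ) : |Y1 x| ≤ 2 * sech x := (Y1_abs_s2 x).trans (by linarith [s2_le_sech x])
lemma Q_pos (x : ℝ) : 0 < Q x := by unfold Q; have := sech_pos x; positivity
lemma Q_le (x : ℝ) : Q x ≤ 2 * sech x := by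
  unfold Q
  have : √2 ≤ 2 := by rw [sqrt_le_left (by norm_num)]; norm_num
  have := sech_pos x; gcongr
lemma Q_le_two (x : ℝ) : Q x ≤ 2 := (Q_le x).trans (by linarith [sech_le_one x])

lemma sech_even (x : ℝ) : sech (-x) = sech x := by unfold sech; rw [cosh_neg]
lemma Y_even (x : ℝ) : Y (-x) = Y x := by unfold Y; rw [sech_even]
lemma Q_even (x : ℝ) : Q (-x) = Q x := by unfold Q; rw [sech_even]

/-- The exponential weight that dominates `(1 + x)³ sech x` on the half-line. -/
noncomputable def Ex (x : ℝ) : ℝ := exp (-(x / 2))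

lemma Ex_cont : Continuous Ex := by unfold Ex; fun_prop
lemma Ex_pos (x : ℝ) : 0 < Ex x := exp_pos _

lemma sech_Ex {x : ℝ} (hx : 0 ≤ x) : (1 + x) ^ 3 * sech x ≤ 432 * Ex x := by
  have h1 : 1 + x ≤ 6 * exp (x / 6) := by
    have := add_one_le_exp (x / 6); linarith
  have h2 : (1 + x) ^ 3 ≤ 216 * exp (x / 2) := by
    calc (1 + x) ^ 3 ≤ (6 * exp (x / 6)) ^ 3 := by gcongr
      _ = 216 * exp (x / 2) := by
        rw [mul_pow, ← exp_nat_mul]; norm_num; ring_nf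
  have h3 : sech x ≤ 2 * exp (-x) := by
    unfold sech
    rw [cosh_eq, exp_neg]
    have := exp_pos x
    rw [inv_le_iff_one_le_mul₀ (by positivity)]
    have : (exp x)⁻¹ * exp x = 1 := by field_simp
    have : 0 ≤ (exp x)⁻¹ ^ 2 := by positivity
    nlinarith
  calc (1 + x) ^ 3 * sech x ≤ (216 * exp (x / 2)) * (2 * exp (-x)) := by
        gcongr; exact (sech_pos x).le
    _ = 432 * Ex x := by
        unfold Ex
        rw [show -(x / 2) = x / 2 + -x by ring, exp_add]; ring

lemma Ex_deriv (x : ℝ) : HasDerivAt (fun x => -2 * Ex x) (Ex x) x := by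
  have h : HasDerivAt (fun x : ℝ => -(x / 2)) (-(1 / 2)) x := ((hasDerivAt_id x).div_const 2).neg
  exact hd (h.exp.const_mul (-2)) (fun z => rfl) (by unfold Ex; ring)

lemma int_Ex {α β : ℝ} (hα : 0 ≤ α) : ∫ x in α..β, Ex x ≤ 2 := by
  rw [intervalIntegral.integral_eq_sub_of_hasDerivAt (fun x _ => Ex_deriv x) (ii_cont Ex_cont _ _)]
  have h1 := Ex_pos β
  have h2 : Ex α ≤ 1 := by unfold Ex; rw [exp_le_one_iff]; linarith
  linarith

lemma int_Ex_abs : ∫ x, Ex |x| = 4 := by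
  rw [integral_comp_abs (f := Ex)]
  have := integral_exp_mul_Ioi (a := -(1/2)) (by norm_num) 0
  have h2 : ∫ x in Ioi (0:ℝ), Ex x = 2 := by
    rw [show (fun x => Ex x) = fun x => exp (-(1/2) * x) by ext x; unfold Ex; ring_nf, this]; norm_num
  rw [h2]; norm_num

lemma Ex_abs_integrable : Integrable (fun x => Ex |x|) := by
  by_contra h
  have := int_Ex_abs
  rw [integral_undef h] at this
  norm_num at this

end KG

namespace KG
open Set

/-! ### The virial identity at a fixed time -/

/-- The component `u - a Y` of `u`. -/
noncomputable def ee (u : ℝ → ℝ) (a x : ℝ) : ℝ := u x - a * Y x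
/-- Derivative of `ee u a` when `u1 = u'`. -/
noncomputable def ee1 (u1 : ℝ → ℝ) (a x : ℝ) : ℝ := u1 x - a * Y1 x
/-- The nonlinearity `3 Q u² + u³`. -/
noncomputable def NN (u : ℝ → ℝ) (x : ℝ) : ℝ := 3 * Q x * u x ^ 2 + u x ^ 3
/-- The projection `⟨N, Y⟩` of the nonlinearity. -/
noncomputable def nn (u : ℝ → ℝ) : ℝ := ∫ x, NN u x * Y x
/-- The primitive `∫₀ˣ sech² e`. -/
noncomputable def UU (u : ℝ → ℝ) (a x : ℝ) : ℝ := ∫ y in (0:ℝ)..x, (1 - tanh y ^ 2) * ee u a y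

/-- A solution frozen at one time: `u = φ - Q` with `u' = u1`, `u'' = u2`, velocity `v` with
`v' = v1`, modulation parameters `a`, `a2`, and `d` a common bound for all norms. -/
structure Slice (u u1 u2 v v1 : ℝ → ℝ) (a a2 d : ℝ) : Prop where
  d0 : 0 < d
  d1 : d ≤ 1
  du : ∀ x, HasDerivAt u (u1 x) x
  du1 : ∀ x, HasDerivAt u1 (u2 x) x
  cu2 : Continuous u2
  dv : ∀ x, HasDerivAt v (v1 x) x
  cv1 : Continuous v1
  ev : ∀ x, u (-x) = u x
  ba : |a| ≤ d
  ba2 : |a2| ≤ d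
  bu : ∀ x, |u x| ≤ d
  be : ∀ x, |ee u a x| ≤ d
  iu : ∀ R, 0 ≤ R → ∫ x in (0:ℝ)..R, u x ^ 2 ≤ d ^ 2
  ie : ∀ R, 0 ≤ R → ∫ x in (0:ℝ)..R, ee u a x ^ 2 ≤ d ^ 2
  ie1 : ∀ R, 0 ≤ R → ∫ x in (0:ℝ)..R, ee1 u1 a x ^ 2 ≤ d ^ 2
  iv : ∀ R, 0 ≤ R → ∫ x in (0:ℝ)..R, ee v a2 x ^ 2 ≤ d ^ 2
  bU2 : ∀ x, 0 ≤ x → |UU u a x| ≤ d * (1 - tanh x)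

section
variable {u u1 u2 v v1 : ℝ → ℝ} {a a2 d ρ : ℝ} (P : Slice u u1 u2 v v1 a a2 d)
include P

lemma Slice.cu : Continuous u := continuous_iff_continuousAt.mpr fun x => (P.du x).continuousAt
lemma Slice.cu1 : Continuous u1 := continuous_iff_continuousAt.mpr fun x => (P.du1 x).continuousAt
lemma Slice.cv : Continuous v := continuous_iff_continuousAt.mpr fun x => (P.dv x).continuousAt
lemma Slice.de (x : ℝ) : HasDerivAt (ee u a) (ee1 u1 a x) x :=
  (P.du x).sub ((Y_deriv x).const_mul a)
lemma Slice.dη (x : ℝ) : HasDerivAt (ee v a2) (ee1 v1 a2 x) x :=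
  (P.dv x).sub ((Y_deriv x).const_mul a2)
lemma Slice.de1 (x : ℝ) :
    HasDerivAt (ee1 u1 a) (u2 x - a * ((4 - 6 * (1 - tanh x ^ 2)) * Y x)) x :=
  (P.du1 x).sub ((Y1_deriv x).const_mul a)
lemma Slice.ce : Continuous (ee u a) :=
  continuous_iff_continuousAt.mpr fun x => (P.de x).continuousAt
lemma Slice.ce1 : Continuous (ee1 u1 a) :=
  continuous_iff_continuousAt.mpr fun x => (P.de1 x).continuousAt
lemma Slice.cη : Continuous (ee v a2) :=
  continuous_iff_continuousAt.mpr fun x => (P.dη x).continuousAt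
lemma Slice.cη1 : Continuous (ee1 v1 a2) := by
  have := P.cv1; have := Y1_cont; unfold ee1; fun_prop
lemma Slice.cN : Continuous (NN u) := by
  have := P.cu; have := Q_cont; unfold NN; fun_prop

lemma Slice.u1_zero : u1 0 = 0 := by
  have h1 : HasDerivAt (fun x => u (-x)) (-(u1 0)) 0 := by
    have h0 : HasDerivAt u (u1 0) (-0) := by simpa using P.du 0
    exact hd (h0.comp (0:ℝ) (hasDerivAt_neg (0:ℝ))) (fun z => rfl) (by ring)
  have h2 : (fun x => u (-x)) = u := funext P.ev
  rw [h2] at h1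
  have := h1.unique (P.du 0)
  linarith

lemma Slice.e1_zero : ee1 u1 a 0 = 0 := by simp [ee1, P.u1_zero, Y1]

lemma Slice.dU (x : ℝ) : HasDerivAt (UU u a) ((1 - tanh x ^ 2) * ee u a x) x := by
  have hc : Continuous fun x => (1 - tanh x ^ 2) * ee u a x := by
    have := P.ce; have := tanh_cont; fun_prop
  exact intervalIntegral.integral_hasDerivAt_right (ii_cont hc _ _)
    (hc.stronglyMeasurableAtFilter _ _) hc.continuousAt

lemma Slice.prof (hρ : 1 ≤ ρ) : Prof (ee u a) (ee1 u1 a) (UU u a) d ρ where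
  d0 := P.d0.le
  ρ1 := hρ
  de := P.de
  ce1 := P.ce1
  dU := P.dU
  U0 := by simp [UU]
  be := fun x _ => P.be x
  bU1 := fun x hx => by
    have hc : Continuous fun x => (1 - tanh x ^ 2) * ee u a x := by
      have := P.ce; have := tanh_cont; fun_prop
    have hc2 : Continuous fun x => d * (1 - tanh x ^ 2) := by have := tanh_cont; fun_prop
    calc |UU u a x| ≤ ∫ y in (0:ℝ)..x, |(1 - tanh y ^ 2) * ee u a y| :=
          intervalIntegral.abs_integral_le_integral_abs hx
      _ ≤ ∫ y in (0:ℝ)..x, d * (1 - tanh y ^ 2) := by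
          refine int_mono hx (ii_cont hc.abs _ _) (ii_cont hc2 _ _) (fun y _ => ?_)
          rw [abs_mul, abs_of_pos (s2_pos y), mul_comm]
          exact mul_le_mul_of_nonneg_right (P.be y) (s2_pos y).le
      _ = d * tanh x := by
          rw [intervalIntegral.integral_const_mul, intervalIntegral.integral_eq_sub_of_hasDerivAt
            (fun x _ => tanh_deriv x) (ii_cont (by have := tanh_cont; fun_prop) _ _)]
          simp
  bU2 := P.bU2
  ie := P.ie ρ (by linarith)
  ie1 := P.ie1 ρ (by linarith)

end

/-- Right-hand side of the equation for `∂ₜ(v - a₂Y)`. -/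
noncomputable def HH (u u2 : ℝ → ℝ) (a x : ℝ) : ℝ :=
  (u2 x - a * ((4 - 6 * (1 - tanh x ^ 2)) * Y x)) - (1 - 6 * (1 - tanh x ^ 2)) * ee u a x
    + NN u x - nn u * Y x

/-- Time derivative of the virial density `(W e' + ½ κ e) η`. -/
noncomputable def gg (u u1 u2 v v1 : ℝ → ℝ) (a a2 : ℝ) (W κ : ℝ → ℝ) (x : ℝ) : ℝ :=
  (W x * ee1 v1 a2 x + 1 / 2 * κ x * ee v a2 x) * ee v a2 x
    + (W x * ee1 u1 a x + 1 / 2 * κ x * ee u a x) * HH u u2 a x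

/-- Flux in the virial identity. -/
noncomputable def Fl (u u1 v : ℝ → ℝ) (a a2 : ℝ) (W κ : ℝ → ℝ) (x : ℝ) : ℝ :=
  1 / 2 * W x * (ee v a2 x ^ 2 + ee1 u1 a x ^ 2 - (1 - 6 * (1 - tanh x ^ 2)) * ee u a x ^ 2)
    + 1 / 2 * κ x * ee u a x * ee1 u1 a x + W x * (Q x * u x ^ 3 + 1 / 4 * u x ^ 4)
    - nn u * (W x * Y x * ee u a x)

/-- Quadratic part of the virial remainder. -/
noncomputable def Rq (u u1 v : ℝ → ℝ) (a a2 : ℝ) (W κ W1 κ1 : ℝ → ℝ) (x : ℝ) : ℝ :=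
  1 / 2 * (κ x - W1 x) * ee v a2 x ^ 2 - 1 / 2 * (W1 x + κ x) * ee1 u1 a x ^ 2
    - 1 / 2 * κ1 x * ee u a x * ee1 u1 a x
    + 1 / 2 * (W1 x - κ x) * (1 - 6 * (1 - tanh x ^ 2)) * ee u a x ^ 2
    + 6 * W x * (1 - tanh x ^ 2) * tanh x * ee u a x ^ 2

/-- Nonlinear part of the virial remainder. -/
noncomputable def Rn (u : ℝ → ℝ) (a : ℝ) (W κ W1 : ℝ → ℝ) (x : ℝ) : ℝ :=
  -a * W x * Y1 x * NN u x + 1 / 2 * κ x * (u x - a * Y x) * NN u x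
    - W1 x * (Q x * u x ^ 3 + 1 / 4 * u x ^ 4) + W x * tanh x * Q x * u x ^ 3
    + nn u * (W1 x - 1 / 2 * κ x) * Y x * ee u a x + nn u * W x * Y1 x * ee u a x

section
variable {u u1 u2 v v1 : ℝ → ℝ} {a a2 d ρ : ℝ} (P : Slice u u1 u2 v v1 a a2 d)
  {W κ W1 κ1 : ℝ → ℝ}
include P

lemma Slice.cg (cW : Continuous W) (cκ : Continuous κ) :
    Continuous (gg u u1 u2 v v1 a a2 W κ) := by
  have := P.ce; have := P.ce1; have := P.cη; have := P.cη1; have := P.cN; have := P.cu2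
  have := tanh_cont; have := Y_cont
  unfold gg HH; fun_prop

lemma Slice.cRq (cW : Continuous W) (cκ : Continuous κ) (cW1 : Continuous W1)
    (cκ1 : Continuous κ1) : Continuous (Rq u u1 v a a2 W κ W1 κ1) := by
  have := P.ce; have := P.ce1; have := P.cη
  have := tanh_cont
  unfold Rq; fun_prop

lemma Slice.cRn (cW : Continuous W) (cκ : Continuous κ) (cW1 : Continuous W1) :
    Continuous (Rn u a W κ W1) := by
  have := P.ce; have := P.cN; have := P.cu; have := Q_cont; have := Y1_cont
  have := tanh_cont; have := Y_cont
  unfold Rn; fun_prop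

lemma Slice.dFl (hW : ∀ x, HasDerivAt W (W1 x) x) (hκ : ∀ x, HasDerivAt κ (κ1 x) x) (x : ℝ) :
    HasDerivAt (Fl u u1 v a a2 W κ) (gg u u1 u2 v v1 a a2 W κ x
      - (Rq u u1 v a a2 W κ W1 κ1 x + Rn u a W κ W1 x)) x := by
  have ht := ((tanh_deriv x).pow 2).const_sub 1
  have hp := (ht.const_mul 6).const_sub 1
  have h1 := ((hW x).const_mul (1/2)).mul ((((P.dη x).pow 2).add ((P.de1 x).pow 2)).sub
    (hp.mul ((P.de x).pow 2)))
  have h2 := (((hκ x).const_mul (1/2)).mul (P.de x)).mul (P.de1 x)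
  have h3 := (hW x).mul (((Q_deriv x).mul ((P.du x).pow 3)).add (((P.du x).pow 4).const_mul (1/4)))
  have h4 := (((hW x).mul (Y_deriv x)).mul (P.de x)).const_mul (nn u)
  refine hd (((h1.add h2).add h3).sub h4) (fun z => rfl) ?_
  simp only [Pi.mul_apply, Pi.add_apply, Pi.sub_apply, Pi.pow_apply]
  have e1' : u1 x = ee1 u1 a x + a * Y1 x := by unfold ee1; ring
  simp only [gg, HH, Rq, Rn, NN]
  rw [e1']
  have e2 : u x = ee u a x + a * Y x := by unfold ee; ring
  have e3 : ee u a x = u x - a * Y x := rfl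
  generalize ee1 u1 a x = E1
  generalize ee1 v1 a2 x = H1
  generalize ee v a2 x = H
  generalize nn u = n
  rw [e3]
  norm_num
  ring

/-- The virial identity on a bounded interval, for arbitrary weights `W` and `κ`. -/
lemma Slice.ident (hW : ∀ x, HasDerivAt W (W1 x) x) (hκ : ∀ x, HasDerivAt κ (κ1 x) x)
    (cW1 : Continuous W1) (cκ1 : Continuous κ1) (α β : ℝ) :
    ∫ x in α..β, gg u u1 u2 v v1 a a2 W κ x = Fl u u1 v a a2 W κ β - Fl u u1 v a a2 W κ α
      + (∫ x in α..β, Rq u u1 v a a2 W κ W1 κ1 x) + ∫ x in α..β, Rn u a W κ W1 x := by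
  have cW : Continuous W := continuous_iff_continuousAt.mpr fun x => (hW x).continuousAt
  have cκ : Continuous κ := continuous_iff_continuousAt.mpr fun x => (hκ x).continuousAt
  have c1 := P.cg cW cκ
  have c2 := P.cRq cW cκ cW1 cκ1
  have c3 := P.cRn cW cκ cW1
  have := intervalIntegral.integral_eq_sub_of_hasDerivAt (fun x _ => P.dFl hW hκ x)
    (a := α) (b := β) (ii_cont (c1.sub (c2.add c3)) _ _)
  rw [← this, intervalIntegral.integral_sub (ii_cont c1 _ _) (ii_cont (c2.fun_add c3) _ _),
    intervalIntegral.integral_add (ii_cont c2 _ _) (ii_cont c3 _ _)]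
  ring

end
end KG

namespace KG
open Set

/-! ### Bounds for the nonlinear terms -/

/-- The local size `σ = S + a²`. -/
noncomputable def sg (u u1 : ℝ → ℝ) (a d ρ : ℝ) : ℝ := SS (ee u a) (ee1 u1 a) d ρ + a ^ 2
/-- Young-type splitting of `σ^{3/2}` with parameter `l`. -/
noncomputable def Lam (l s : ℝ) : ℝ := l * s + s ^ 2 / l

section
variable {u u1 u2 v v1 : ℝ → ℝ} {a a2 d ρ l : ℝ} (P : Slice u u1 u2 v v1 a a2 d) (hρ : 1 ≤ ρ)
  (hl : 0 < l)
include P hρ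

lemma Slice.sg_nonneg : 0 ≤ sg u u1 a d ρ := by
  have := (P.prof hρ).SS_nonneg; unfold sg; positivity

lemma Slice.a_sq_le : a ^ 2 ≤ sg u u1 a d ρ := by
  have := (P.prof hρ).SS_nonneg; unfold sg; linarith

lemma Slice.e_sq {x : ℝ} (hx : 0 < x) : ee u a x ^ 2 ≤ 4600 * (1 + x) * sg u u1 a d ρ := by
  have h := (P.prof hρ).e_growth hx
  have : 0 ≤ 4600 * (1 + x) * a ^ 2 := by positivity
  unfold sg; nlinarith

lemma Slice.u_sq {x : ℝ} (hx : 0 < x) : u x ^ 2 ≤ 9200 * (1 + x) * sg u u1 a d ρ := by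
  have h := (P.prof hρ).e_growth hx
  have e2 : u x = ee u a x + a * Y x := by unfold ee; ring
  have h1 : (a * Y x) ^ 2 ≤ a ^ 2 := by
    rw [mul_pow]
    have : Y x ^ 2 ≤ 1 := pow_le_one₀ (Y_pos x).le (Y_le_one x)
    nlinarith [sq_nonneg a]
  have h2 : u x ^ 2 ≤ 2 * ee u a x ^ 2 + 2 * (a * Y x) ^ 2 := by
    rw [e2]; nlinarith [sq_nonneg (ee u a x - a * Y x)]
  have : 0 ≤ x * a ^ 2 := by positivity
  unfold sg; nlinarith [sq_nonneg a]

include hl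
lemma Slice.Lam_nonneg : 0 ≤ Lam l (sg u u1 a d ρ) := by
  have := P.sg_nonneg hρ; unfold Lam; positivity

lemma Slice.u_cube {x : ℝ} (hx : 0 < x) :
    |u x| ^ 3 ≤ 9200 ^ 2 * (1 + x) ^ 2 * Lam l (sg u u1 a d ρ) := by
  have h := P.u_sq hρ hx
  have s0 := P.sg_nonneg hρ
  rw [← sq_abs] at h
  set w := |u x| with hw
  have w0 : 0 ≤ w := abs_nonneg _
  set s := sg u u1 a d ρ
  have h1 : w ^ 3 ≤ 1 / 2 * (l * w ^ 2 + (w ^ 2) ^ 2 / l) := by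
    have : 0 ≤ (l * w - w ^ 2) ^ 2 / l := by positivity
    have e : (l * w - w ^ 2) ^ 2 / l = l * w ^ 2 - 2 * w ^ 3 + (w ^ 2) ^ 2 / l := by
      field_simp; ring
    linarith
  have h2 : (w ^ 2) ^ 2 / l ≤ (9200 * (1 + x) * s) ^ 2 / l := by gcongr
  have h3 : l * w ^ 2 ≤ l * (9200 * (1 + x) * s) := by gcongr
  have h4 : (9200 * (1 + x) * s) ^ 2 / l = 9200 ^ 2 * (1 + x) ^ 2 * (s ^ 2 / l) := by ring
  have h5 : l * (9200 * (1 + x) * s) ≤ 9200 ^ 2 * (1 + x) ^ 2 * (l * s) := by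
    have : 0 ≤ l * s := by positivity
    have h7 : 9200 * (1 + x) ≤ 9200 ^ 2 * (1 + x) ^ 2 := by nlinarith
    nlinarith [mul_le_mul_of_nonneg_right h7 this]
  have h6 : 0 ≤ s ^ 2 / l := by positivity
  have h8 : 0 ≤ 9200 ^ 2 * (1 + x) ^ 2 * (s ^ 2 / l) := by positivity
  have h9 : 0 ≤ 9200 ^ 2 * (1 + x) ^ 2 * (l * s) := by positivity
  unfold Lam
  rw [mul_add]
  linarith

lemma Slice.a_sg : |a| * sg u u1 a d ρ ≤ Lam l (sg u u1 a d ρ) := by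
  have h := P.a_sq_le hρ
  have s0 := P.sg_nonneg hρ
  set s := sg u u1 a d ρ
  have : 0 ≤ (l * |a| - s) ^ 2 / l := by positivity
  have e : (l * |a| - s) ^ 2 / l = l * a ^ 2 - 2 * (|a| * s) + s ^ 2 / l := by
    rw [← sq_abs a]; field_simp; ring
  have h3 : l * a ^ 2 ≤ l * s := by gcongr
  have h6 : 0 ≤ s ^ 2 / l := by positivity
  have : 0 ≤ l * s := by positivity
  unfold Lam; linarith

lemma Slice.e_sg {x : ℝ} (hx : 0 < x) :
    sg u u1 a d ρ * |ee u a x| ≤ 4600 * (1 + x) * Lam l (sg u u1 a d ρ) := by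
  have h := P.e_sq hρ hx
  have s0 := P.sg_nonneg hρ
  set s := sg u u1 a d ρ
  set y := ee u a x
  have : 0 ≤ (l * |y| - s) ^ 2 / l := by positivity
  have e : (l * |y| - s) ^ 2 / l = l * y ^ 2 - 2 * (s * |y|) + s ^ 2 / l := by
    rw [← sq_abs y]; field_simp; ring
  have h3 : l * y ^ 2 ≤ l * (4600 * (1 + x) * s) := by gcongr
  have h6 : 0 ≤ s ^ 2 / l := by positivity
  have h7 : 0 ≤ l * s := by positivity
  unfold Lam; nlinarith [mul_nonneg hx.le h6, mul_nonneg hx.le h7]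

omit hl hρ
lemma Slice.N_le (x : ℝ) : |NN u x| ≤ 7 * u x ^ 2 := by
  have h1 := P.bu x
  have := P.d1
  have hq := Q_pos x
  have hq2 := Q_le_two x
  unfold NN
  have e1 : |3 * Q x * u x ^ 2| = 3 * Q x * u x ^ 2 := abs_of_nonneg (by positivity)
  have e2 : |u x ^ 3| = |u x| * u x ^ 2 := by rw [abs_pow, ← sq_abs (u x)]; ring
  have := abs_add_le (3 * Q x * u x ^ 2) (u x ^ 3)
  nlinarith [sq_nonneg (u x)]

include hρ
lemma Slice.n_le : |nn u| ≤ 120000000 * sg u u1 a d ρ := by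
  have s0 := P.sg_nonneg hρ
  unfold nn
  have : ‖∫ x, NN u x * Y x‖ ≤ ∫ x, (27820800 * sg u u1 a d ρ) * Ex |x| := by
    refine norm_integral_le_of_norm_le (Ex_abs_integrable.const_mul _) ?_
    have h0 : ∀ᵐ x : ℝ, x ≠ 0 := by simp [ae_iff]
    filter_upwards [h0] with x hx
    have hx' : 0 < |x| := abs_pos.mpr hx
    have h1 := P.u_sq hρ hx'
    have h2 : u |x| = u x := by
      rcases abs_choice x with h | h <;> rw [h]
      exact P.ev x
    have h3 : sech |x| = sech x := by
      rcases abs_choice x with h | h <;> rw [h]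
      exact sech_even x
    have h4 := sech_Ex hx'.le
    rw [h3] at h4
    rw [h2] at h1
    rw [norm_mul, norm_eq_abs, norm_eq_abs, abs_of_pos (Y_pos x)]
    have h5 : (1 + |x|) * sech x ≤ 432 * Ex |x| := by
      refine le_trans ?_ h4
      have : 1 + |x| ≤ (1 + |x|) ^ 3 := le_self_pow₀ (by linarith) (by norm_num)
      have := sech_pos x
      gcongr
    calc |NN u x| * Y x ≤ (7 * (9200 * (1 + |x|) * sg u u1 a d ρ)) * sech x := by
          refine mul_le_mul ((P.N_le x).trans (by linarith)) (Y_le x) (Y_pos x).le (by positivity)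
      _ = 64400 * sg u u1 a d ρ * ((1 + |x|) * sech x) := by ring
      _ ≤ 64400 * sg u u1 a d ρ * (432 * Ex |x|) := by gcongr
      _ = _ := by ring
  rw [norm_eq_abs, integral_const_mul, int_Ex_abs] at this
  nlinarith

include hl
set_option maxHeartbeats 1000000 in
/-- Pointwise bound of the nonlinear remainder, up to the quartic terms. -/
lemma Slice.Rn_le {W κ W1 : ℝ → ℝ} {x : ℝ} (hx : 0 < x) (W0 : 0 ≤ W x) (Wx : W x ≤ x)
    (bW1 : |W1 x| ≤ 1) (κ0 : 0 ≤ κ x) (κ1 : κ x ≤ 1) :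
    Rn u a W κ W1 x ≤ 10 ^ 15 * Lam l (sg u u1 a d ρ) * Ex x
      + (1 / 2 * κ x - 1 / 4 * W1 x) * u x ^ 4 := by
  have hL := P.Lam_nonneg hρ hl
  have hu := P.u_cube hρ hl hx
  have ha := P.a_sg hρ hl
  have he := P.e_sg hρ hl hx
  have hn := P.n_le hρ
  have hN := (P.N_le x).trans (mul_le_mul_of_nonneg_left (P.u_sq hρ hx) (by norm_num))
  have hs := P.sg_nonneg hρ
  have hE := sech_Ex hx.le
  set s := sg u u1 a d ρ
  set L := Lam l s
  have sp := sech_pos x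
  have t1 := tanh_abs_le x
  have hq := Q_pos x
  have hq2 := Q_le x
  have y0 := Y_pos x
  have y1 := Y_le x
  have yy := Y1_abs x
  set p := 1 + x with hp
  have p1 : 1 ≤ p := by linarith
  have p2 : p ≤ p ^ 3 := le_self_pow₀ p1 (by norm_num)
  have p3 : p ^ 2 ≤ p ^ 3 := pow_le_pow_right₀ p1 (by norm_num)
  have p0 : 1 ≤ p ^ 3 := one_le_pow₀ p1
  -- every term is at most a constant multiple of `T`
  set T := p ^ 3 * sech x * L with hT
  have aN : |a| * |NN u x| ≤ 64400 * p * L := by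
    calc |a| * |NN u x| ≤ |a| * (7 * (9200 * p * s)) := by gcongr
      _ = 64400 * p * (|a| * s) := by ring
      _ ≤ 64400 * p * L := by gcongr
  have ne : |nn u| * |ee u a x| ≤ 552000000000 * p * L := by
    calc |nn u| * |ee u a x| ≤ (120000000 * s) * |ee u a x| := by gcongr
      _ = 120000000 * (s * |ee u a x|) := by ring
      _ ≤ 120000000 * (4600 * p * L) := by gcongr
      _ = _ := by ring
  have hu3 : |u x ^ 3| ≤ 84640000 * p ^ 2 * L := by rw [abs_pow]; linarith
  have b1 : |a * W x * Y1 x * NN u x| ≤ 128800 * T := by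
    calc |a * W x * Y1 x * NN u x| = W x * |Y1 x| * (|a| * |NN u x|) := by
          rw [abs_mul, abs_mul, abs_mul, abs_of_nonneg W0]; ring
      _ ≤ p * (2 * sech x) * (64400 * p * L) := by gcongr; linarith
      _ = 128800 * (p ^ 2 * sech x * L) := by ring
      _ ≤ 128800 * T := by rw [hT]; gcongr
  have b2 : |1 / 2 * κ x * (a * Y x) * NN u x| ≤ 64400 * T := by
    calc |1 / 2 * κ x * (a * Y x) * NN u x| = 1 / 2 * κ x * Y x * (|a| * |NN u x|) := by
          rw [abs_mul, abs_mul, abs_mul, abs_mul, abs_of_nonneg κ0, abs_of_pos y0]; norm_num; ring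
      _ ≤ 1 / 2 * 1 * sech x * (64400 * p * L) := by gcongr
      _ ≤ 64400 * (p * sech x * L) := by
          have : 0 ≤ p * sech x * L := by positivity
          linarith
      _ ≤ 64400 * T := by rw [hT]; gcongr
  have b3 : |(3 / 2 * κ x - W1 x + W x * tanh x) * Q x * u x ^ 3| ≤ 507840000 * T := by
    have k : |3 / 2 * κ x - W1 x + W x * tanh x| ≤ 3 * p := by
      have h1 := abs_le.mp bW1
      have h2 := abs_le.mp t1
      rw [abs_le]; constructor <;> nlinarith
    calc |(3 / 2 * κ x - W1 x + W x * tanh x) * Q x * u x ^ 3|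
        = |3 / 2 * κ x - W1 x + W x * tanh x| * Q x * |u x ^ 3| := by
          rw [abs_mul, abs_mul, abs_of_pos hq]
      _ ≤ (3 * p) * (2 * sech x) * (84640000 * p ^ 2 * L) := by gcongr
      _ = 507840000 * T := by rw [hT]; ring
  have b4 : |nn u * (W1 x - 1 / 2 * κ x) * Y x * ee u a x| ≤ 1104000000000 * T := by
    have k : |W1 x - 1 / 2 * κ x| ≤ 2 := by
      have h1 := abs_le.mp bW1
      rw [abs_le]; constructor <;> linarith
    calc |nn u * (W1 x - 1 / 2 * κ x) * Y x * ee u a x|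
        = |W1 x - 1 / 2 * κ x| * Y x * (|nn u| * |ee u a x|) := by
          rw [abs_mul, abs_mul, abs_mul, abs_of_pos y0]; ring
      _ ≤ 2 * sech x * (552000000000 * p * L) := by gcongr
      _ = 1104000000000 * (p * sech x * L) := by ring
      _ ≤ 1104000000000 * T := by rw [hT]; gcongr
  have b5 : |nn u * W x * Y1 x * ee u a x| ≤ 1104000000000 * T := by
    calc |nn u * W x * Y1 x * ee u a x| = W x * |Y1 x| * (|nn u| * |ee u a x|) := by
          rw [abs_mul, abs_mul, abs_mul, abs_of_nonneg W0]; ring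
      _ ≤ p * (2 * sech x) * (552000000000 * p * L) := by gcongr; linarith
      _ = 1104000000000 * (p ^ 2 * sech x * L) := by ring
      _ ≤ 1104000000000 * T := by rw [hT]; gcongr
  have b6 : T ≤ 432 * Ex x * L := by rw [hT]; gcongr
  have b7 : 0 ≤ Ex x * L := mul_nonneg (Ex_pos x).le hL
  have e : Rn u a W κ W1 x = -(a * W x * Y1 x * NN u x) - 1 / 2 * κ x * (a * Y x) * NN u x
      + (3 / 2 * κ x - W1 x + W x * tanh x) * Q x * u x ^ 3
      + nn u * (W1 x - 1 / 2 * κ x) * Y x * ee u a x + nn u * W x * Y1 x * ee u a x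
      + (1 / 2 * κ x - 1 / 4 * W1 x) * u x ^ 4 := by
    unfold Rn NN; ring
  rw [e]
  have := neg_abs_le (a * W x * Y1 x * NN u x)
  have := neg_abs_le (1 / 2 * κ x * (a * Y x) * NN u x)
  have := le_abs_self ((3 / 2 * κ x - W1 x + W x * tanh x) * Q x * u x ^ 3)
  have := le_abs_self (nn u * (W1 x - 1 / 2 * κ x) * Y x * ee u a x)
  have := le_abs_self (nn u * W x * Y1 x * ee u a x)
  have b8 : 10 ^ 15 * L * Ex x = 1000000000000000 * (Ex x * L) := by norm_num; ring
  rw [b8]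
  linarith

end
end KG

namespace KG
open Set

/-! ### The virial inequality at a fixed time -/

/-- Inner virial weight: `W' = om * pp`. -/
noncomputable def WI (ρ x : ℝ) : ℝ := om ρ x * psi x + Psi x / ρ
/-- The derivative of `WI`, also used as the zeroth-order weight `κ`. -/
noncomputable def kI (ρ x : ℝ) : ℝ := om ρ x * pp x
/-- The derivative of `kI`. -/
noncomputable def kI1 (ρ x : ℝ) : ℝ := -(pp x / ρ) + om ρ x * pp1 x
/-- Outer virial weight: linear decay from `WI ρ ρ` at `ρ` to zero at `ρ + ρ²`. -/
noncomputable def WO (ρ x : ℝ) : ℝ := WI ρ ρ / ρ ^ 2 * (ρ + ρ ^ 2 - x)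

lemma WI_deriv (ρ x : ℝ) : HasDerivAt (WI ρ) (kI ρ x) x :=
  hd (((om_deriv ρ x).mul (psi_deriv x)).add ((Psi_deriv x).div_const ρ)) (fun z => rfl)
    (by unfold kI; ring)
lemma kI_deriv (ρ x : ℝ) : HasDerivAt (kI ρ) (kI1 ρ x) x :=
  hd ((om_deriv ρ x).mul (pp_deriv x)) (fun z => rfl) (by unfold kI1; ring)
lemma WO_deriv (ρ x : ℝ) : HasDerivAt (WO ρ) (-(WI ρ ρ / ρ ^ 2)) x :=
  hd (((hasDerivAt_id x).const_sub (ρ + ρ ^ 2)).const_mul (WI ρ ρ / ρ ^ 2)) (fun z => rfl) (by ring)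
lemma WI_cont (ρ : ℝ) : Continuous (WI ρ) :=
  continuous_iff_continuousAt.mpr fun x => (WI_deriv ρ x).continuousAt
lemma kI_cont (ρ : ℝ) : Continuous (kI ρ) :=
  continuous_iff_continuousAt.mpr fun x => (kI_deriv ρ x).continuousAt
lemma kI1_cont (ρ : ℝ) : Continuous (kI1 ρ) := by
  have := pp_cont; have := pp1_cont; have := om_cont ρ; unfold kI1; fun_prop
lemma WO_cont (ρ : ℝ) : Continuous (WO ρ) :=
  continuous_iff_continuousAt.mpr fun x => (WO_deriv ρ x).continuousAt

section
variable {ρ : ℝ} (hρ : 1 ≤ ρ)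
include hρ

lemma om_nn {x : ℝ} (hx : x ≤ ρ) : 0 ≤ om ρ x := by
  unfold om; rw [sub_nonneg, div_le_one (by linarith)]; exact hx
lemma om_le1 {x : ℝ} (hx : 0 ≤ x) : om ρ x ≤ 1 := by
  unfold om; have : 0 ≤ x / ρ := div_nonneg hx (by linarith)
  linarith
lemma om_end : om ρ ρ = 0 := by unfold om; rw [div_self (by linarith)]; ring

lemma WI_nonneg {x : ℝ} (h0 : 0 ≤ x) (h1 : x ≤ ρ) : 0 ≤ WI ρ x :=
  add_nonneg (mul_nonneg (om_nn hρ h1) (psi_nonneg h0)) (div_nonneg (Psi_nonneg h0) (by linarith))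

lemma WI_le {x : ℝ} (h0 : 0 ≤ x) (h1 : x ≤ ρ) : WI ρ x ≤ x := by
  have h2 := mul_le_mul_of_nonneg_left (psi_le h0) (om_nn hρ h1)
  have h3 : Psi x / ρ ≤ x ^ 2 / 2 / ρ := div_le_div_of_nonneg_right (Psi_le h0) (by linarith)
  have h4 : om ρ x * x + x ^ 2 / 2 / ρ ≤ x := by
    unfold om
    have : 0 ≤ x ^ 2 / ρ := by positivity
    have e : (1 - x / ρ) * x + x ^ 2 / 2 / ρ = x - 1 / 2 * (x ^ 2 / ρ) := by ring
    linarith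
  unfold WI; linarith

lemma kI_nonneg {x : ℝ} (h1 : x ≤ ρ) : 0 ≤ kI ρ x :=
  mul_nonneg (om_nn hρ h1) (by linarith [pp_ge x])
lemma kI_le {x : ℝ} (h1 : x ≤ ρ) : kI ρ x ≤ om ρ x := by
  have := mul_le_mul_of_nonneg_left (pp_le x) (om_nn hρ h1)
  unfold kI; linarith

lemma WO_slope : 0 ≤ WI ρ ρ / ρ ^ 2 ∧ WI ρ ρ / ρ ^ 2 ≤ 1 / ρ := by
  have h0 : 0 < ρ := by linarith
  refine ⟨div_nonneg (WI_nonneg hρ h0.le le_rfl) (by positivity), ?_⟩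
  rw [div_le_div_iff₀ (by positivity) h0]
  nlinarith [WI_le hρ h0.le le_rfl]

lemma WO_nonneg {x : ℝ} (h : x ≤ ρ + ρ ^ 2) : 0 ≤ WO ρ x :=
  mul_nonneg (WO_slope hρ).1 (by linarith)
lemma WO_le {x : ℝ} (h : ρ ≤ x) : WO ρ x ≤ ρ := by
  have h0 : 0 < ρ := by linarith
  have h1 := WO_slope hρ
  have h2 : WO ρ x ≤ WI ρ ρ / ρ ^ 2 * ρ ^ 2 := mul_le_mul_of_nonneg_left (by linarith) h1.1
  have h3 : WI ρ ρ / ρ ^ 2 * ρ ^ 2 = WI ρ ρ := by field_simp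
  linarith [WI_le hρ h0.le le_rfl]

end

lemma int_ii {f : ℝ → ℝ} {C α β : ℝ} (hα : 0 ≤ α) (hαβ : α ≤ β) (hf : Continuous f)
    (h : ∀ R, 0 ≤ R → ∫ x in (0:ℝ)..R, f x ≤ C) (h0 : ∀ x, 0 ≤ f x) :
    ∫ x in α..β, f x ≤ C := by
  have h1 := h β (hα.trans hαβ)
  rw [← intervalIntegral.integral_add_adjacent_intervals (ii_cont hf 0 α) (ii_cont hf α β)] at h1
  have : 0 ≤ ∫ x in (0:ℝ)..α, f x := intervalIntegral.integral_nonneg hα (fun x _ => h0 x)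
  linarith

lemma x2s2 {x : ℝ} (hx : 0 ≤ x) : x ^ 2 * (1 - tanh x ^ 2) ≤ 432 := by
  have h := sech_Ex hx
  have h1 : Ex x ≤ 1 := by unfold Ex; rw [exp_le_one_iff]; linarith
  have h2 : x ^ 2 ≤ (1 + x) ^ 3 := by nlinarith [pow_nonneg hx 3]
  have h3 : x ^ 2 * (1 - tanh x ^ 2) ≤ (1 + x) ^ 3 * sech x :=
    mul_le_mul h2 (s2_le_sech x) (s2_pos x).le (by positivity)
  linarith

section
variable {u u1 u2 v v1 : ℝ → ℝ} {a a2 d ρ l : ℝ} (P : Slice u u1 u2 v v1 a a2 d) (hρ : 1 ≤ ρ)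
include P hρ

lemma Slice.Rq_in {x : ℝ} (h0 : 0 ≤ x) :
    Rq u u1 v a a2 (WI ρ) (kI ρ) (kI ρ) (kI1 ρ) x ≤ -(om ρ x * dens (ee u a) (ee1 u1 a) x)
      + 1 / ρ * (1300 * ee u a x ^ 2 + ee1 u1 a x ^ 2) := by
  have hr : 0 < 1 / ρ := by have : 0 < ρ := by linarith
                            positivity
  have e : Rq u u1 v a a2 (WI ρ) (kI ρ) (kI ρ) (kI1 ρ) x
      = -(om ρ x * dens (ee u a) (ee1 u1 a) x) + 1 / ρ * (1 / 2 * pp x * ee u a x * ee1 u1 a x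
        + 6 * Psi x * (1 - tanh x ^ 2) * tanh x * ee u a x ^ 2) := by
    unfold Rq dens WI kI kI1; ring
  rw [e]
  have h2 := pp_le x
  have h3 := pp_ge x
  have k1 : 1 / 2 * pp x * ee u a x * ee1 u1 a x ≤ ee u a x ^ 2 + ee1 u1 a x ^ 2 := by
    have i1 : ee u a x * ee1 u1 a x ≤ |ee u a x * ee1 u1 a x| := le_abs_self _
    have i2 : |ee u a x * ee1 u1 a x| ≤ 1 / 2 * (ee u a x ^ 2 + ee1 u1 a x ^ 2) := by
      rw [abs_le]
      constructor <;> nlinarith [sq_nonneg (ee u a x - ee1 u1 a x), sq_nonneg (ee u a x + ee1 u1 a x)]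
    have i3 : pp x * (ee u a x * ee1 u1 a x) ≤ 1 * |ee u a x * ee1 u1 a x| := by
      refine (mul_le_mul_of_nonneg_left i1 (by linarith)).trans ?_
      gcongr
    nlinarith [sq_nonneg (ee u a x), sq_nonneg (ee1 u1 a x)]
  have k2 : 6 * Psi x * (1 - tanh x ^ 2) * tanh x ≤ 1296 := by
    have i1 : Psi x * (1 - tanh x ^ 2) ≤ 216 := by
      have := mul_le_mul_of_nonneg_right (Psi_le h0) (s2_pos x).le
      linarith [x2s2 h0]
    have i0 : 0 ≤ Psi x * (1 - tanh x ^ 2) := mul_nonneg (Psi_nonneg h0) (s2_pos x).le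
    have i2 := (abs_le.mp (tanh_abs_le x)).2
    nlinarith
  have k3 := mul_le_mul_of_nonneg_right k2 (sq_nonneg (ee u a x))
  have : 1 / ρ * (1 / 2 * pp x * ee u a x * ee1 u1 a x
        + 6 * Psi x * (1 - tanh x ^ 2) * tanh x * ee u a x ^ 2) ≤
        1 / ρ * (1300 * ee u a x ^ 2 + ee1 u1 a x ^ 2) := by
    refine mul_le_mul_of_nonneg_left ?_ hr.le
    nlinarith [sq_nonneg (ee u a x)]
  linarith

lemma Slice.Rq_out {x : ℝ} (h0 : ρ ≤ x) (h1 : x ≤ ρ + ρ ^ 2) :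
    Rq u u1 v a a2 (WO ρ) (fun _ => 0) (fun _ => -(WI ρ ρ / ρ ^ 2)) (fun _ => 0) x ≤
      1 / ρ * (ee v a2 x ^ 2 + ee1 u1 a x ^ 2 + 2600 * ee u a x ^ 2) := by
  have hr0 : 0 < ρ := by linarith
  have hx : 0 ≤ x := by linarith
  have w := WO_slope hρ
  have k1 : 6 * WO ρ x * (1 - tanh x ^ 2) * tanh x ≤ 1 / ρ * 2592 := by
    have i1 : WO ρ x * (1 - tanh x ^ 2) ≤ 1 / ρ * 432 := by
      have h2 : WO ρ x * (1 - tanh x ^ 2) ≤ ρ * (1 - tanh x ^ 2) :=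
        mul_le_mul_of_nonneg_right (WO_le hρ h0) (s2_pos x).le
      have h3 : ρ ^ 2 * (1 - tanh x ^ 2) ≤ 432 :=
        (mul_le_mul_of_nonneg_right (by gcongr) (s2_pos x).le).trans (x2s2 hx)
      have h4 : ρ * (1 - tanh x ^ 2) = 1 / ρ * (ρ ^ 2 * (1 - tanh x ^ 2)) := by field_simp
      rw [h4] at h2
      exact h2.trans (by gcongr)
    have i0 : 0 ≤ WO ρ x * (1 - tanh x ^ 2) := mul_nonneg (WO_nonneg hρ h1) (s2_pos x).le
    have i2 := (abs_le.mp (tanh_abs_le x)).2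
    nlinarith
  have k2 := mul_le_mul_of_nonneg_right k1 (sq_nonneg (ee u a x))
  have s1 := s2_le x
  have s0 := s2_pos x
  unfold Rq
  generalize WI ρ ρ / ρ ^ 2 = w at *
  obtain ⟨w0, w1⟩ := w
  generalize 1 / ρ = r at *
  have j1 := mul_le_mul_of_nonneg_right w1 (sq_nonneg (ee v a2 x))
  have j2 := mul_le_mul_of_nonneg_right w1 (sq_nonneg (ee1 u1 a x))
  have j3 : w * ((6 * (1 - tanh x ^ 2) - 1) * ee u a x ^ 2) ≤ r * (5 * ee u a x ^ 2) := by
    have : (6 * (1 - tanh x ^ 2) - 1) * ee u a x ^ 2 ≤ 5 * ee u a x ^ 2 :=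
      mul_le_mul_of_nonneg_right (by linarith) (sq_nonneg _)
    exact (mul_le_mul_of_nonneg_left this w0).trans
      (mul_le_mul_of_nonneg_right w1 (by positivity))
  have j4 : 0 ≤ r * ee v a2 x ^ 2 := mul_nonneg (by linarith) (sq_nonneg _)
  have j5 : 0 ≤ r * ee1 u1 a x ^ 2 := mul_nonneg (by linarith) (sq_nonneg _)
  have j6 : 0 ≤ r * ee u a x ^ 2 := mul_nonneg (by linarith) (sq_nonneg _)
  linarith

/-- The quartic part of the nonlinear remainder has no decaying factor; `Prof.e_le` turns two of
its four powers into `SS`, and the other two are integrable. -/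
lemma Slice.quartic {x : ℝ} (h0 : 0 < x) (h1 : x ≤ ρ) :
    (1 / 2 * kI ρ x - 1 / 4 * kI ρ x) * u x ^ 4 ≤
      4600 * SS (ee u a) (ee1 u1 a) d ρ * ee u a x ^ 2 + 2 * a ^ 4 * (1 - tanh x ^ 2) := by
  have h2 := (P.prof hρ).e_le h0 h1
  have e2 : u x = ee u a x + a * Y x := by unfold ee; ring
  set y := ee u a x with hy
  set z := a * Y x with hz
  have q : u x ^ 4 ≤ 8 * (y ^ 2 * y ^ 2) + 8 * z ^ 4 := by
    rw [e2]
    nlinarith [sq_nonneg (y - z), sq_nonneg (y + z), sq_nonneg (y ^ 2 - z ^ 2),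
      sq_nonneg (y * z), mul_nonneg (sq_nonneg (y - z)) (sq_nonneg (y - z)),
      mul_nonneg (sq_nonneg (y - z)) (sq_nonneg (y + z))]
  have z4 : z ^ 4 ≤ a ^ 4 * (1 - tanh x ^ 2) := by
    rw [hz, mul_pow]
    have : Y x ^ 4 ≤ Y x := pow_le_of_le_one (Y_pos x).le (Y_le_one x) (by norm_num)
    have := Y_le_s2 x
    gcongr; linarith
  have o := om_nn hρ h1
  have o1 := om_le1 hρ h0.le
  have k := kI_le hρ h1
  have k0 := kI_nonneg hρ h1
  calc (1 / 2 * kI ρ x - 1 / 4 * kI ρ x) * u x ^ 4 = 1 / 4 * (kI ρ x * u x ^ 4) := by ring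
    _ ≤ 1 / 4 * (om ρ x * (8 * (y ^ 2 * y ^ 2) + 8 * z ^ 4)) := by gcongr
    _ = 2 * (om ρ x * y ^ 2 * y ^ 2) + 2 * (om ρ x * z ^ 4) := by ring
    _ ≤ 2 * (2300 * SS (ee u a) (ee1 u1 a) d ρ * y ^ 2) + 2 * (1 * (a ^ 4 * (1 - tanh x ^ 2))) := by
        gcongr
    _ = _ := by ring

lemma Slice.Fl_bdry : Fl u u1 v a a2 (WI ρ) (kI ρ) 0 = 0 ∧
    Fl u u1 v a a2 (WO ρ) (fun _ => 0) (ρ + ρ ^ 2) = 0 ∧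
    Fl u u1 v a a2 (WO ρ) (fun _ => 0) ρ = Fl u u1 v a a2 (WI ρ) (kI ρ) ρ := by
  have hr0 : ρ ≠ 0 := by linarith
  refine ⟨?_, ?_, ?_⟩
  · have : WI ρ 0 = 0 := by simp [WI, psi_zero, Psi_zero]
    simp [Fl, this, P.e1_zero]
  · have : WO ρ (ρ + ρ ^ 2) = 0 := by simp [WO]
    simp [Fl, this]
  · have h1 : WO ρ ρ = WI ρ ρ := by unfold WO; field_simp; ring
    have h2 : kI ρ ρ = 0 := by simp [kI, om_end hρ]
    simp [Fl, h1, h2]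

/-- Fixed-time virial inequality. -/
lemma Slice.virial (hl : d ^ 2 ≤ l) :
    (∫ x in (0:ℝ)..ρ, gg u u1 u2 v v1 a a2 (WI ρ) (kI ρ) x)
      + (∫ x in ρ..(ρ + ρ ^ 2), gg u u1 u2 v v1 a a2 (WO ρ) (fun _ => 0) x) ≤
    -Dt (ee u a) (ee1 u1 a) d ρ + 5000 * (d ^ 2 / ρ) + 10 ^ 16 * Lam l (sg u u1 a d ρ) := by
  have hr0 : 0 < ρ := by linarith
  have hd0 := P.d0
  have hl0 : 0 < l := lt_of_lt_of_le (by positivity) hl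
  have hM : ρ ≤ ρ + ρ ^ 2 := by nlinarith
  obtain ⟨f1, f2, f3⟩ := P.Fl_bdry hρ
  rw [P.ident (WI_deriv ρ) (kI_deriv ρ) (kI_cont ρ) (kI1_cont ρ),
    P.ident (WO_deriv ρ) (fun x => hasDerivAt_const x (0:ℝ)) continuous_const continuous_const,
    f1, f2, f3]
  have hL := P.Lam_nonneg hρ hl0
  have hS := (P.prof hρ).SS_nonneg
  have ce := P.ce; have ce1 := P.ce1; have cη := P.cη; have cd := (P.prof hρ).cdens
  have co := om_cont ρ; have cE := Ex_cont; have ct := tanh_cont; have cu := P.cu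
  have c1 : Continuous fun x => -(om ρ x * dens (ee u a) (ee1 u1 a) x) := by fun_prop
  have c2 : Continuous fun x => 1 / ρ * (1300 * ee u a x ^ 2 + ee1 u1 a x ^ 2) := by fun_prop
  have c3 : Continuous fun x =>
    1 / ρ * (ee v a2 x ^ 2 + ee1 u1 a x ^ 2 + 2600 * ee u a x ^ 2) := by fun_prop
  have r0 : 0 < 1 / ρ := by positivity
  -- integrals of squares
  have ie : ∫ x in (0:ℝ)..ρ, ee u a x ^ 2 ≤ d ^ 2 := P.ie ρ hr0.le
  have ie1 : ∫ x in (0:ℝ)..ρ, ee1 u1 a x ^ 2 ≤ d ^ 2 := P.ie1 ρ hr0.le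
  have je : ∫ x in ρ..(ρ + ρ ^ 2), ee u a x ^ 2 ≤ d ^ 2 :=
    int_ii hr0.le hM (ce.pow 2) P.ie (fun x => sq_nonneg _)
  have je1 : ∫ x in ρ..(ρ + ρ ^ 2), ee1 u1 a x ^ 2 ≤ d ^ 2 :=
    int_ii hr0.le hM (ce1.pow 2) P.ie1 (fun x => sq_nonneg _)
  have jv : ∫ x in ρ..(ρ + ρ ^ 2), ee v a2 x ^ 2 ≤ d ^ 2 :=
    int_ii hr0.le hM (cη.pow 2) P.iv (fun x => sq_nonneg _)
  have ju : ∫ x in ρ..(ρ + ρ ^ 2), u x ^ 2 ≤ d ^ 2 :=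
    int_ii hr0.le hM (cu.pow 2) P.iu (fun x => sq_nonneg _)
  have q1 : ∫ x in (0:ℝ)..ρ, Rq u u1 v a a2 (WI ρ) (kI ρ) (kI ρ) (kI1 ρ) x ≤
      -(∫ x in (0:ℝ)..ρ, om ρ x * dens (ee u a) (ee1 u1 a) x) + 1301 * (d ^ 2 / ρ) := by
    refine (int_mono hr0.le (ii_cont (P.cRq (WI_cont ρ) (kI_cont ρ) (kI_cont ρ) (kI1_cont ρ)) _ _)
      (ii_cont (c1.fun_add c2) _ _) (fun x hx => P.Rq_in hρ hx.1.le)).trans ?_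
    rw [intervalIntegral.integral_add (ii_cont c1 _ _) (ii_cont c2 _ _),
      intervalIntegral.integral_neg, intervalIntegral.integral_const_mul,
      intervalIntegral.integral_add (ii_cont (by fun_prop) _ _) (ii_cont (by fun_prop) _ _),
      intervalIntegral.integral_const_mul]
    have := mul_le_mul_of_nonneg_left (add_le_add (mul_le_mul_of_nonneg_left ie
      (by norm_num : (0:ℝ) ≤ 1300)) ie1) r0.le
    have e : 1 / ρ * (1300 * d ^ 2 + d ^ 2) = 1301 * (d ^ 2 / ρ) := by ring
    linarith
  have q2 : ∫ x in ρ..(ρ + ρ ^ 2), Rq u u1 v a a2 (WO ρ) (fun _ => 0)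
      (fun _ => -(WI ρ ρ / ρ ^ 2)) (fun _ => 0) x ≤ 2602 * (d ^ 2 / ρ) := by
    refine (int_mono hM (ii_cont (P.cRq (WO_cont ρ) continuous_const continuous_const
      continuous_const) _ _)
      (ii_cont c3 _ _) (fun x hx => P.Rq_out hρ hx.1.le hx.2.le)).trans ?_
    rw [intervalIntegral.integral_const_mul,
      intervalIntegral.integral_add (ii_cont (by fun_prop) _ _) (ii_cont (by fun_prop) _ _),
      intervalIntegral.integral_add (ii_cont (by fun_prop) _ _) (ii_cont (by fun_prop) _ _),
      intervalIntegral.integral_const_mul]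
    have := mul_le_mul_of_nonneg_left (add_le_add (add_le_add jv je1) (mul_le_mul_of_nonneg_left je
      (by norm_num : (0:ℝ) ≤ 2600))) r0.le
    have e : 1 / ρ * (d ^ 2 + d ^ 2 + 2600 * d ^ 2) = 2602 * (d ^ 2 / ρ) := by ring
    linarith
  set L := Lam l (sg u u1 a d ρ) with hLd
  have iE1 : ∫ x in (0:ℝ)..ρ, Ex x ≤ 2 := int_Ex le_rfl
  have iE2 : ∫ x in ρ..(ρ + ρ ^ 2), Ex x ≤ 2 := int_Ex hr0.le
  have n1 : ∫ x in (0:ℝ)..ρ, Rn u a (WI ρ) (kI ρ) (kI ρ) x ≤ 10 ^ 15 * L * 2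
      + 4600 * SS (ee u a) (ee1 u1 a) d ρ * d ^ 2 + 2 * a ^ 4 := by
    have c4 : Continuous fun x => 10 ^ 15 * L * Ex x := by fun_prop
    have c5 : Continuous fun x => 4600 * SS (ee u a) (ee1 u1 a) d ρ * ee u a x ^ 2 := by fun_prop
    have c6 : Continuous fun x => 2 * a ^ 4 * (1 - tanh x ^ 2) := by fun_prop
    refine (int_mono hr0.le (ii_cont (P.cRn (WI_cont ρ) (kI_cont ρ) (kI_cont ρ)) _ _)
      (ii_cont ((c4.fun_add c5).fun_add c6) _ _) (fun x hx => ?_)).trans ?_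
    · have k0 := kI_nonneg hρ hx.2.le
      have k1 := (kI_le hρ hx.2.le).trans (om_le1 hρ hx.1.le)
      have h1 := P.Rn_le hρ hl0 (W := WI ρ) (κ := kI ρ) (W1 := kI ρ) hx.1
        (WI_nonneg hρ hx.1.le hx.2.le) (WI_le hρ hx.1.le hx.2.le) (by rw [abs_of_nonneg k0]; exact k1)
        k0 k1
      have h2 := P.quartic hρ hx.1 hx.2.le
      linarith
    · rw [intervalIntegral.integral_add (ii_cont (c4.fun_add c5) _ _) (ii_cont c6 _ _),
        intervalIntegral.integral_add (ii_cont c4 _ _) (ii_cont c5 _ _),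
        intervalIntegral.integral_const_mul, intervalIntegral.integral_const_mul,
        intervalIntegral.integral_const_mul]
      have := int_s2_le hr0.le
      have j1 : 10 ^ 15 * L * ∫ x in (0:ℝ)..ρ, Ex x ≤ 10 ^ 15 * L * 2 := by gcongr
      have j2 : 4600 * SS (ee u a) (ee1 u1 a) d ρ * ∫ x in (0:ℝ)..ρ, ee u a x ^ 2 ≤
        4600 * SS (ee u a) (ee1 u1 a) d ρ * d ^ 2 := by gcongr
      have j3 : 2 * a ^ 4 * ∫ x in (0:ℝ)..ρ, (1 - tanh x ^ 2) ≤ 2 * a ^ 4 * 1 := by gcongr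
      linarith
  have n2 : ∫ x in ρ..(ρ + ρ ^ 2), Rn u a (WO ρ) (fun _ => 0) (fun _ => -(WI ρ ρ / ρ ^ 2)) x ≤
      10 ^ 15 * L * 2 + d ^ 2 / ρ := by
    have c4 : Continuous fun x => 10 ^ 15 * L * Ex x := by fun_prop
    have c5 : Continuous fun x => 1 / ρ * u x ^ 2 := by fun_prop
    refine (int_mono hM (ii_cont (P.cRn (WO_cont ρ) continuous_const continuous_const) _ _)
      (ii_cont (c4.fun_add c5) _ _) (fun x hx => ?_)).trans ?_
    · obtain ⟨w0, w1⟩ := WO_slope hρ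
      have w2 : 1 / ρ ≤ 1 := by rw [div_le_one hr0]; exact hρ
      have h1 := P.Rn_le hρ hl0 (W := WO ρ) (κ := fun _ => 0) (W1 := fun _ => -(WI ρ ρ / ρ ^ 2))
        (hr0.trans hx.1) (WO_nonneg hρ hx.2.le) ((WO_le hρ hx.1.le).trans hx.1.le)
        (by rw [abs_neg, abs_of_nonneg w0]; linarith) le_rfl zero_le_one
      have u2 : u x ^ 2 ≤ 1 := by
        rw [← sq_abs]; exact pow_le_one₀ (abs_nonneg _) ((P.bu x).trans P.d1)
      have u4 : u x ^ 4 ≤ u x ^ 2 := by nlinarith [sq_nonneg (u x)]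
      have : (1 / 2 * 0 - 1 / 4 * -(WI ρ ρ / ρ ^ 2)) * u x ^ 4 ≤ 1 / ρ * u x ^ 2 := by
        refine mul_le_mul ?_ u4 (by positivity) r0.le
        linarith
      linarith
    · rw [intervalIntegral.integral_add (ii_cont c4 _ _) (ii_cont c5 _ _),
        intervalIntegral.integral_const_mul, intervalIntegral.integral_const_mul]
      have j1 : 10 ^ 15 * L * ∫ x in ρ..(ρ + ρ ^ 2), Ex x ≤ 10 ^ 15 * L * 2 := by gcongr
      have j2 : 1 / ρ * ∫ x in ρ..(ρ + ρ ^ 2), u x ^ 2 ≤ 1 / ρ * d ^ 2 := by gcongr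
      have e : 1 / ρ * d ^ 2 = d ^ 2 / ρ := by ring
      linarith
  have L1 : d ^ 2 * SS (ee u a) (ee1 u1 a) d ρ + d ^ 2 * a ^ 2 ≤ L := by
    have h1 := P.sg_nonneg hρ
    have h2 := mul_le_mul_of_nonneg_right hl h1
    have h3 : 0 ≤ sg u u1 a d ρ ^ 2 / l := by positivity
    rw [hLd]; unfold Lam
    have e : d ^ 2 * sg u u1 a d ρ = d ^ 2 * SS (ee u a) (ee1 u1 a) d ρ + d ^ 2 * a ^ 2 := by
      unfold sg; ring
    linarith
  have a4 : a ^ 4 ≤ d ^ 2 * a ^ 2 := by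
    have : a ^ 2 ≤ d ^ 2 := sq_le_sq' (by linarith [(abs_le.mp P.ba).1]) (abs_le.mp P.ba).2
    nlinarith [sq_nonneg a]
  have hSd : 0 ≤ d ^ 2 * SS (ee u a) (ee1 u1 a) d ρ := by positivity
  have hr2 : 0 ≤ d ^ 2 / ρ := by positivity
  have : 0 ≤ d ^ 2 * a ^ 2 := by positivity
  have eD : Dt (ee u a) (ee1 u1 a) d ρ =
      (∫ x in (0:ℝ)..ρ, om ρ x * dens (ee u a) (ee1 u1 a) x) + 89 * (d ^ 2 / ρ) := by
    unfold Dt; ring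
  rw [eD]
  norm_num at n1 n2 ⊢
  linarith

end
end KG

namespace KG
open Set

/-! ### Localized kinetic energy -/

section
variable {u u1 u2 v v1 : ℝ → ℝ} {a a2 d ρ l : ℝ} (P : Slice u u1 u2 v v1 a a2 d) (hρ : 1 ≤ ρ)
include P hρ

/-- Fixed-time inequality behind the control of the localized kinetic energy. -/
lemma Slice.kinetic :
    ∫ x in (0:ℝ)..ρ, om ρ x * (1 - tanh x ^ 2) * ee v a2 x ^ 2 ≤
      (∫ x in (0:ℝ)..ρ, om ρ x * (1 - tanh x ^ 2) *
        (ee v a2 x * ee v a2 x + ee u a x * HH u u2 a x)) + 10 ^ 9 * sg u u1 a d ρ := by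
  have hr0 : 0 < ρ := by linarith
  have ce := P.ce; have ce1 := P.ce1; have cη := P.cη; have cN := P.cN; have cu2 := P.cu2
  have ct := tanh_cont; have cY := Y_cont; have co := om_cont ρ
  have cH : Continuous (HH u u2 a) := by unfold HH; fun_prop
  set R : ℝ → ℝ := fun x => (1 / ρ * ee u a x ^ 2 + 1 / ρ * ee1 u1 a x ^ 2)
    + 16 * (om ρ x * ((1 - tanh x ^ 2) * (ee u a x ^ 2 + ee1 u1 a x ^ 2)))
    + (14 * a ^ 2 + |nn u|) * (1 - tanh x ^ 2) with hR
  set G : ℝ → ℝ := fun x => om ρ x * (1 - tanh x ^ 2) * ee u a x * ee1 u1 a x with hG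
  have dG : ∀ x, HasDerivAt G (((-(1 / ρ)) * (1 - tanh x ^ 2)
      + om ρ x * (-(2 * tanh x * (1 - tanh x ^ 2)))) * ee u a x * ee1 u1 a x
      + om ρ x * (1 - tanh x ^ 2) * ee1 u1 a x ^ 2
      + om ρ x * (1 - tanh x ^ 2) * ee u a x
        * (u2 x - a * ((4 - 6 * (1 - tanh x ^ 2)) * Y x))) x := fun x => by
    have ht := ((tanh_deriv x).pow 2).const_sub 1
    refine hd ((((om_deriv ρ x).mul ht).mul (P.de x)).mul (P.de1 x)) (fun z => rfl) ?_
    simp only [Pi.mul_apply, Pi.pow_apply]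
    norm_num; ring
  have cR : Continuous R := by fun_prop
  have c1 : Continuous fun x => om ρ x * (1 - tanh x ^ 2) *
        (ee v a2 x * ee v a2 x + ee u a x * HH u u2 a x) := by fun_prop
  have c2 : Continuous fun x => om ρ x * (1 - tanh x ^ 2) * ee v a2 x ^ 2 := by fun_prop
  have key : G ρ - G 0 ≤ ∫ x in (0:ℝ)..ρ, (R x + (om ρ x * (1 - tanh x ^ 2) *
        (ee v a2 x * ee v a2 x + ee u a x * HH u u2 a x)
        - om ρ x * (1 - tanh x ^ 2) * ee v a2 x ^ 2)) := by
    refine ftc_le hr0.le (fun x _ => (dG x).continuousAt.continuousWithinAt) (fun x _ => dG x)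
      (ii_cont (cR.fun_add (c1.fun_sub c2)) _ _) (fun x hx => ?_)
    have o0 := om_nn hρ hx.2.le
    have o1 := om_le1 hρ hx.1.le
    have s0 := s2_pos x
    have s1 := s2_le x
    have hN := P.N_le x
    have e2 : u x = ee u a x + a * Y x := by unfold ee; ring
    have y0 := Y_pos x
    have y1 := Y_le_one x
    have be := (P.be x).trans P.d1
    have t1 := abs_le.mp (tanh_abs_le x)
    have r0 : 0 < 1 / ρ := by positivity
    have hu : u x ^ 2 ≤ 2 * ee u a x ^ 2 + 2 * a ^ 2 := by
      have : (a * Y x) ^ 2 ≤ a ^ 2 := by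
        rw [mul_pow]
        have : Y x ^ 2 ≤ 1 := pow_le_one₀ y0.le y1
        nlinarith [sq_nonneg a]
      rw [e2]; nlinarith [sq_nonneg (ee u a x - a * Y x)]
    have hee : |ee u a x * ee1 u1 a x| ≤ 1 / 2 * (ee u a x ^ 2 + ee1 u1 a x ^ 2) := by
      rw [abs_le]
      constructor <;> nlinarith [sq_nonneg (ee u a x - ee1 u1 a x), sq_nonneg (ee u a x + ee1 u1 a x)]
    have hn : -(ee u a x * NN u x) + nn u * (Y x * ee u a x)
        ≤ 14 * ee u a x ^ 2 + 14 * a ^ 2 + |nn u| := by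
      have h1 : -(ee u a x * NN u x) ≤ 7 * u x ^ 2 := by
        refine (neg_le_abs _).trans ?_
        rw [abs_mul]
        nlinarith [abs_nonneg (NN u x), abs_nonneg (ee u a x)]
      have h2 : nn u * (Y x * ee u a x) ≤ |nn u| := by
        refine (le_abs_self _).trans ?_
        rw [abs_mul, abs_mul, abs_of_pos y0]
        have : Y x * |ee u a x| ≤ 1 := by nlinarith [abs_nonneg (ee u a x)]
        nlinarith [abs_nonneg (nn u)]
      linarith
    have w0 : 0 ≤ om ρ x * (1 - tanh x ^ 2) := by positivity
    have w1 : om ρ x * (1 - tanh x ^ 2) ≤ 1 - tanh x ^ 2 := by nlinarith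
    simp only [hR]
    unfold HH
    have k1 : -(1 / ρ) * (1 - tanh x ^ 2) * (ee u a x * ee1 u1 a x) ≤
        1 / ρ * (ee u a x ^ 2 + ee1 u1 a x ^ 2) := by
      have i1 := neg_abs_le (ee u a x * ee1 u1 a x)
      have i2 : (1 - tanh x ^ 2) * -(ee u a x * ee1 u1 a x) ≤ ee u a x ^ 2 + ee1 u1 a x ^ 2 := by
        have : (1 - tanh x ^ 2) * -(ee u a x * ee1 u1 a x) ≤ (1 - tanh x ^ 2) * |ee u a x * ee1 u1 a x| :=
          mul_le_mul_of_nonneg_left (by linarith) s0.le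
        nlinarith [abs_nonneg (ee u a x * ee1 u1 a x)]
      have := mul_le_mul_of_nonneg_left i2 r0.le
      linarith
    have k2 : -(2 * tanh x) * (ee u a x * ee1 u1 a x) ≤ ee u a x ^ 2 + ee1 u1 a x ^ 2 := by
      have i2 : -(2 * tanh x) * (ee u a x * ee1 u1 a x) ≤ 2 * |ee u a x * ee1 u1 a x| := by
        refine (le_abs_self _).trans ?_
        rw [abs_mul (-(2 * tanh x)), abs_neg, abs_mul 2, abs_two]
        have := tanh_abs_le x
        nlinarith [abs_nonneg (ee u a x * ee1 u1 a x)]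
      linarith
    have k3 : -(2 * tanh x) * (ee u a x * ee1 u1 a x) + ee1 u1 a x ^ 2
        + (1 - 6 * (1 - tanh x ^ 2)) * ee u a x ^ 2
        + (-(ee u a x * NN u x) + nn u * (Y x * ee u a x)) ≤
        16 * (ee u a x ^ 2 + ee1 u1 a x ^ 2) + (14 * a ^ 2 + |nn u|) := by
      nlinarith [sq_nonneg (ee u a x), sq_nonneg (ee1 u1 a x), mul_nonneg s0.le (sq_nonneg (ee u a x))]
    have k4 := mul_le_mul_of_nonneg_left k3 w0
    have k5 : om ρ x * (1 - tanh x ^ 2) * (14 * a ^ 2 + |nn u|) ≤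
        (1 - tanh x ^ 2) * (14 * a ^ 2 + |nn u|) := mul_le_mul_of_nonneg_right w1 (by positivity)
    linarith
  have g0 : G 0 = 0 := by simp [hG, P.e1_zero]
  have g1 : G ρ = 0 := by simp [hG, om_end hρ]
  have cA : Continuous fun x => 1 / ρ * ee u a x ^ 2 := by fun_prop
  have cB : Continuous fun x => 1 / ρ * ee1 u1 a x ^ 2 := by fun_prop
  have cC : Continuous fun x =>
    16 * (om ρ x * ((1 - tanh x ^ 2) * (ee u a x ^ 2 + ee1 u1 a x ^ 2))) := by fun_prop
  have cD : Continuous fun x => (14 * a ^ 2 + |nn u|) * (1 - tanh x ^ 2) := by fun_prop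
  rw [g0, g1, intervalIntegral.integral_add (ii_cont cR _ _) (ii_cont (c1.fun_sub c2) _ _),
    intervalIntegral.integral_sub (ii_cont c1 _ _) (ii_cont c2 _ _), hR,
    intervalIntegral.integral_add (ii_cont ((cA.fun_add cB).fun_add cC) _ _) (ii_cont cD _ _),
    intervalIntegral.integral_add (ii_cont (cA.fun_add cB) _ _) (ii_cont cC _ _),
    intervalIntegral.integral_add (ii_cont cA _ _) (ii_cont cB _ _),
    intervalIntegral.integral_const_mul, intervalIntegral.integral_const_mul,
    intervalIntegral.integral_const_mul, intervalIntegral.integral_const_mul] at key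
  have h1 := (P.prof hρ).loc
  have h2 := int_s2_le hr0.le
  have h3 : 1 / ρ * ∫ x in (0:ℝ)..ρ, ee u a x ^ 2 ≤ 1 / ρ * d ^ 2 := by
    have := P.ie ρ hr0.le; gcongr
  have h4 : 1 / ρ * ∫ x in (0:ℝ)..ρ, ee1 u1 a x ^ 2 ≤ 1 / ρ * d ^ 2 := by
    have := P.ie1 ρ hr0.le; gcongr
  have h5 : (14 * a ^ 2 + |nn u|) * (∫ x in (0:ℝ)..ρ, (1 - tanh x ^ 2)) ≤
      (14 * a ^ 2 + |nn u|) * 1 := by gcongr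
  have h6 := P.n_le hρ
  have h7 := P.a_sq_le hρ
  have h8 : 1 / ρ * d ^ 2 ≤ SS (ee u a) (ee1 u1 a) d ρ := by
    unfold SS
    have := mul_nonneg P.d0.le (sqrt_nonneg (Dt (ee u a) (ee1 u1 a) d ρ))
    have e : 1 / ρ * d ^ 2 = d ^ 2 / ρ := by ring
    linarith
  have h9 : SS (ee u a) (ee1 u1 a) d ρ ≤ sg u u1 a d ρ := by unfold sg; nlinarith [sq_nonneg a]
  have h10 := P.sg_nonneg hρ
  norm_num
  linarith

end

lemma SS_le_sg {u u1 : ℝ → ℝ} {a d ρ : ℝ} : SS (ee u a) (ee1 u1 a) d ρ ≤ sg u u1 a d ρ := by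
  unfold sg; nlinarith [sq_nonneg a]

lemma time_ftc {f g : ℝ → ℝ → ℝ} {s α β : ℝ} (hs : 0 ≤ s)
    (hg : Continuous (fun p : ℝ × ℝ => g p.1 p.2))
    (hf : ∀ t, 0 ≤ t → ∀ x, HasDerivAt (fun τ => f τ x) (g t x) t)
    (c0 : Continuous (f 0)) (cs : Continuous (f s)) :
    (∫ x in α..β, f s x) - (∫ x in α..β, f 0 x) = ∫ t in (0:ℝ)..s, ∫ x in α..β, g t x := by
  rw [← intervalIntegral.integral_sub (ii_cont cs _ _) (ii_cont c0 _ _),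
    intervalIntegral_intervalIntegral_swap (F := fun t x => g t x)]
  · refine intervalIntegral.integral_congr (fun x _ => ?_)
    have cgx : Continuous fun t => g t x := hg.comp (by fun_prop : Continuous fun t : ℝ => (t, x))
    rw [intervalIntegral.integral_eq_sub_of_hasDerivAt (f := fun τ => f τ x)
      (fun t ht => hf t ?_ x) (ii_cont cgx _ _)]
    rw [uIcc_of_le hs] at ht
    exact ht.1
  · have : IsCompact (uIcc 0 s ×ˢ uIcc α β) := isCompact_uIcc.prod isCompact_uIcc
    have h := (hg.continuousOn (s := uIcc 0 s ×ˢ uIcc α β)).integrableOn_compact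
      (μ := volume) this
    exact h.mono_set (Set.prod_mono uIoc_subset_uIcc uIoc_subset_uIcc)
end KG

namespace KG
open Set

/-! ### Integration in time -/

/-- A solution on `[0, ∞)`: every time slice is a `Slice` with the same `d`, and the fields solve
the perturbation equation together with the modulation equations for `a`, `a2`. The function `N`
is a continuous extension of `t ↦ nn (u t)` to negative times. -/
structure Dyn (u u1 u2 v v1 : ℝ → ℝ → ℝ) (a a2 N : ℝ → ℝ) (d : ℝ) : Prop where
  sl : ∀ t, 0 ≤ t → Slice (u t) (u1 t) (u2 t) (v t) (v1 t) (a t) (a2 t) d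
  cu : Continuous fun p : ℝ × ℝ => u p.1 p.2
  cu1 : Continuous fun p : ℝ × ℝ => u1 p.1 p.2
  cu2 : Continuous fun p : ℝ × ℝ => u2 p.1 p.2
  cv : Continuous fun p : ℝ × ℝ => v p.1 p.2
  cv1 : Continuous fun p : ℝ × ℝ => v1 p.1 p.2
  ca : Continuous a
  ca2 : Continuous a2
  cN : Continuous N
  hN : ∀ t, 0 ≤ t → N t = nn (u t)
  tu : ∀ t, 0 ≤ t → ∀ x, HasDerivAt (fun τ => u τ x) (v t x) t
  tu1 : ∀ t, 0 ≤ t → ∀ x, HasDerivAt (fun τ => u1 τ x) (v1 t x) t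
  tv : ∀ t, 0 ≤ t → ∀ x, HasDerivAt (fun τ => v τ x)
    (u2 t x - (1 - 6 * (1 - tanh x ^ 2)) * u t x + NN (u t) x) t
  ta : ∀ t, 0 ≤ t → HasDerivAt a (a2 t) t
  ta2 : ∀ t, 0 ≤ t → HasDerivAt a2 (3 * a t + N t) t

/-- `HH` with the continuous extension `N` in place of the projection `nn`. -/
noncomputable def HT (u u2 : ℝ → ℝ → ℝ) (a N : ℝ → ℝ) (t x : ℝ) : ℝ :=
  u2 t x - (1 - 6 * (1 - tanh x ^ 2)) * u t x + NN (u t) x - (3 * a t + N t) * Y x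

section
variable {u u1 u2 v v1 : ℝ → ℝ → ℝ} {a a2 N : ℝ → ℝ} {d ρ s l : ℝ}
  (P : Dyn u u1 u2 v v1 a a2 N d)
include P

lemma Dyn.HT_eq {t : ℝ} (ht : 0 ≤ t) (x : ℝ) : HT u u2 a N t x = HH (u t) (u2 t) (a t) x := by
  unfold HT HH ee; rw [P.hN t ht]; ring

lemma Dyn.ce : Continuous fun p : ℝ × ℝ => ee (u p.1) (a p.1) p.2 := by
  have := P.cu; have := P.ca; have := Y_cont; unfold ee; fun_prop
lemma Dyn.ce1 : Continuous fun p : ℝ × ℝ => ee1 (u1 p.1) (a p.1) p.2 := by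
  have := P.cu1; have := P.ca; have := Y1_cont; unfold ee1; fun_prop
lemma Dyn.cη : Continuous fun p : ℝ × ℝ => ee (v p.1) (a2 p.1) p.2 := by
  have := P.cv; have := P.ca2; have := Y_cont; unfold ee; fun_prop
lemma Dyn.cη1 : Continuous fun p : ℝ × ℝ => ee1 (v1 p.1) (a2 p.1) p.2 := by
  have := P.cv1; have := P.ca2; have := Y1_cont; unfold ee1; fun_prop
lemma Dyn.cH : Continuous fun p : ℝ × ℝ => HT u u2 a N p.1 p.2 := by
  have := P.cu; have := P.cu2; have := P.ca; have := P.cN; have := Y_cont; have := Q_cont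
  have := tanh_cont; unfold HT NN; fun_prop

lemma Dyn.te {t : ℝ} (ht : 0 ≤ t) (x : ℝ) :
    HasDerivAt (fun τ => ee (u τ) (a τ) x) (ee (v t) (a2 t) x) t :=
  (P.tu t ht x).sub ((P.ta t ht).mul_const (Y x))
lemma Dyn.te1 {t : ℝ} (ht : 0 ≤ t) (x : ℝ) :
    HasDerivAt (fun τ => ee1 (u1 τ) (a τ) x) (ee1 (v1 t) (a2 t) x) t :=
  (P.tu1 t ht x).sub ((P.ta t ht).mul_const (Y1 x))
lemma Dyn.tη {t : ℝ} (ht : 0 ≤ t) (x : ℝ) :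
    HasDerivAt (fun τ => ee (v τ) (a2 τ) x) (HT u u2 a N t x) t :=
  (P.tv t ht x).sub ((P.ta2 t ht).mul_const (Y x))

/-- Integral of the virial derivative along the flow, for arbitrary weights. -/
lemma Dyn.flow (hs : 0 ≤ s) {W κ : ℝ → ℝ} (cW : Continuous W) (cκ : Continuous κ) (α β : ℝ) :
    (∫ x in α..β, (W x * ee1 (u1 s) (a s) x + 1 / 2 * κ x * ee (u s) (a s) x) * ee (v s) (a2 s) x)
    - (∫ x in α..β, (W x * ee1 (u1 0) (a 0) x + 1 / 2 * κ x * ee (u 0) (a 0) x) * ee (v 0) (a2 0) x)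
    = ∫ t in (0:ℝ)..s, ∫ x in α..β, gg (u t) (u1 t) (u2 t) (v t) (v1 t) (a t) (a2 t) W κ x := by
  have h1 := P.ce; have h2 := P.ce1; have h3 := P.cη; have h4 := P.cη1; have h5 := P.cH
  have cc : ∀ t, 0 ≤ t → Continuous fun x =>
      (W x * ee1 (u1 t) (a t) x + 1 / 2 * κ x * ee (u t) (a t) x) * ee (v t) (a2 t) x := by
    intro t ht
    have := (P.sl t ht).ce; have := (P.sl t ht).ce1; have := (P.sl t ht).cη
    fun_prop
  rw [time_ftc (f := fun t x =>
      (W x * ee1 (u1 t) (a t) x + 1 / 2 * κ x * ee (u t) (a t) x) * ee (v t) (a2 t) x)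
    (g := fun t x => (W x * ee1 (v1 t) (a2 t) x + 1 / 2 * κ x * ee (v t) (a2 t) x) * ee (v t) (a2 t) x
    + (W x * ee1 (u1 t) (a t) x + 1 / 2 * κ x * ee (u t) (a t) x) * HT u u2 a N t x) hs
    (by fun_prop) (fun t ht x => ?_) (cc 0 le_rfl) (cc s hs)]
  · refine intervalIntegral.integral_congr (fun t ht => ?_)
    rw [uIcc_of_le hs] at ht
    refine intervalIntegral.integral_congr (fun x _ => ?_)
    simp only [gg, P.HT_eq ht.1]
  · exact (((P.te1 ht x).const_mul (W x)).add ((P.te ht x).const_mul (1 / 2 * κ x))).mul (P.tη ht x)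

lemma Dyn.cgg {W κ : ℝ → ℝ} (cW : Continuous W) (cκ : Continuous κ) (α β : ℝ) (hs : 0 ≤ s) :
    IntervalIntegrable (fun t => ∫ x in α..β,
      gg (u t) (u1 t) (u2 t) (v t) (v1 t) (a t) (a2 t) W κ x) volume 0 s := by
  have h1 := P.ce; have h2 := P.ce1; have h3 := P.cη; have h4 := P.cη1; have h5 := P.cH
  have hc : Continuous fun p : ℝ × ℝ =>
    (W p.2 * ee1 (v1 p.1) (a2 p.1) p.2 + 1 / 2 * κ p.2 * ee (v p.1) (a2 p.1) p.2)
      * ee (v p.1) (a2 p.1) p.2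
    + (W p.2 * ee1 (u1 p.1) (a p.1) p.2 + 1 / 2 * κ p.2 * ee (u p.1) (a p.1) p.2)
      * HT u u2 a N p.1 p.2 := by fun_prop
  refine (ii_cont (intervalIntegral.continuous_parametric_intervalIntegral_of_continuous'
    (μ := volume) (f := fun t x => (W x * ee1 (v1 t) (a2 t) x + 1 / 2 * κ x * ee (v t) (a2 t) x)
      * ee (v t) (a2 t) x
    + (W x * ee1 (u1 t) (a t) x + 1 / 2 * κ x * ee (u t) (a t) x) * HT u u2 a N t x)
      hc α β) 0 s).congr (fun t ht => ?_)
  rw [uIoc_of_le hs] at ht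
  refine intervalIntegral.integral_congr (fun x _ => ?_)
  simp only [gg, P.HT_eq ht.1.le]

lemma Dyn.cDt (ρ : ℝ) : Continuous fun t => Dt (ee (u t) (a t)) (ee1 (u1 t) (a t)) d ρ := by
  have h1 := P.ce; have h2 := P.ce1; have := pp_cont; have := pp1_cont; have := psi_cont
  have := tanh_cont; have := om_cont ρ
  have hc : Continuous fun p : ℝ × ℝ =>
      om ρ p.2 * dens (ee (u p.1) (a p.1)) (ee1 (u1 p.1) (a p.1)) p.2 := by
    unfold dens; fun_prop
  exact (intervalIntegral.continuous_parametric_intervalIntegral_of_continuous'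
    (f := fun t x => om ρ x * dens (ee (u t) (a t)) (ee1 (u1 t) (a t)) x) hc 0 ρ).add
      continuous_const

lemma Dyn.csg (ρ : ℝ) : Continuous fun t => sg (u t) (u1 t) (a t) d ρ := by
  have := P.cDt ρ; have := P.ca; unfold sg SS; fun_prop

end

/-- Young's inequality for the boundary terms of the virial functional. -/
lemma bdry_le {e e1 η W κ : ℝ → ℝ} {α β w k E : ℝ} (hαβ : α ≤ β) (ce : Continuous e)
    (ce1 : Continuous e1) (cη : Continuous η) (cW : Continuous W) (cκ : Continuous κ)
    (w0 : 0 ≤ w) (k0 : 0 ≤ k)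
    (hW : ∀ x ∈ Icc α β, |W x| ≤ w) (hκ : ∀ x ∈ Icc α β, |κ x| ≤ k)
    (ie : ∫ x in α..β, e x ^ 2 ≤ E) (ie1 : ∫ x in α..β, e1 x ^ 2 ≤ E)
    (iη : ∫ x in α..β, η x ^ 2 ≤ E) :
    |∫ x in α..β, (W x * e1 x + 1 / 2 * κ x * e x) * η x| ≤ (w + k) * E := by
  have hc : Continuous fun x => (W x * e1 x + 1 / 2 * κ x * e x) * η x := by fun_prop
  have c1 : Continuous fun x => w / 2 * e1 x ^ 2 := by fun_prop
  have c2 : Continuous fun x => k / 4 * e x ^ 2 := by fun_prop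
  have c3 : Continuous fun x => (w / 2 + k / 4) * η x ^ 2 := by fun_prop
  have h0 : 0 ≤ ∫ x in α..β, e x ^ 2 :=
    intervalIntegral.integral_nonneg hαβ fun x _ => sq_nonneg _
  calc _ ≤ ∫ x in α..β, |(W x * e1 x + 1 / 2 * κ x * e x) * η x| :=
        intervalIntegral.abs_integral_le_integral_abs hαβ
    _ ≤ ∫ x in α..β, (w / 2 * e1 x ^ 2 + k / 4 * e x ^ 2 + (w / 2 + k / 4) * η x ^ 2) := by
        refine int_mono hαβ (ii_cont hc.abs _ _) (ii_cont ((c1.fun_add c2).fun_add c3) _ _)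
          (fun x hx => ?_)
        have a1 : |W x * (e1 x * η x)| ≤ w * (1 / 2 * (e1 x ^ 2 + η x ^ 2)) := by
          rw [abs_mul]
          refine mul_le_mul (hW x (Ioo_subset_Icc_self hx)) ?_ (abs_nonneg _) w0
          rw [abs_le]; constructor <;> nlinarith [sq_nonneg (e1 x - η x), sq_nonneg (e1 x + η x)]
        have a2 : |κ x * (e x * η x)| ≤ k * (1 / 2 * (e x ^ 2 + η x ^ 2)) := by
          rw [abs_mul]
          refine mul_le_mul (hκ x (Ioo_subset_Icc_self hx)) ?_ (abs_nonneg _) k0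
          rw [abs_le]; constructor <;> nlinarith [sq_nonneg (e x - η x), sq_nonneg (e x + η x)]
        have e : (W x * e1 x + 1 / 2 * κ x * e x) * η x
          = W x * (e1 x * η x) + 1 / 2 * (κ x * (e x * η x)) := by ring
        rw [e]
        refine (abs_add_le _ _).trans ?_
        rw [abs_mul (1 / 2 : ℝ), abs_of_pos (by norm_num : (0:ℝ) < 1 / 2)]
        linarith
    _ = w / 2 * (∫ x in α..β, e1 x ^ 2) + k / 4 * (∫ x in α..β, e x ^ 2)
        + (w / 2 + k / 4) * ∫ x in α..β, η x ^ 2 := by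
        rw [intervalIntegral.integral_add (ii_cont (c1.fun_add c2) _ _) (ii_cont c3 _ _),
          intervalIntegral.integral_add (ii_cont c1 _ _) (ii_cont c2 _ _),
          intervalIntegral.integral_const_mul, intervalIntegral.integral_const_mul,
          intervalIntegral.integral_const_mul]
    _ ≤ w / 2 * E + k / 4 * E + (w / 2 + k / 4) * E := by gcongr
    _ ≤ (w + k) * E := by nlinarith [mul_nonneg k0 (h0.trans ie)]

section
variable {u u1 u2 v v1 : ℝ → ℝ → ℝ} {a a2 N : ℝ → ℝ} {d ρ s l : ℝ}
  (P : Dyn u u1 u2 v v1 a a2 N d)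
include P

/-- The virial estimate integrated in time. -/
lemma Dyn.virial (hρ : 1 ≤ ρ) (hs : 0 ≤ s) (hl : d ^ 2 ≤ l) :
    ∫ t in (0:ℝ)..s, Dt (ee (u t) (a t)) (ee1 (u1 t) (a t)) d ρ ≤ 6 * ρ * d ^ 2 +
      ∫ t in (0:ℝ)..s, (5000 * (d ^ 2 / ρ) + 10 ^ 16 * Lam l (sg (u t) (u1 t) (a t) d ρ)) := by
  have hr : 0 < ρ := by linarith
  have hM : ρ ≤ ρ + ρ ^ 2 := by nlinarith
  have f1 := P.flow hs (WI_cont ρ) (kI_cont ρ) 0 ρ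
  have f2 := P.flow hs (WO_cont ρ) (κ := fun _ => 0) continuous_const ρ (ρ + ρ ^ 2)
  have c1 := P.cDt ρ
  have c2 := P.csg ρ
  have c3 : Continuous fun t => 5000 * (d ^ 2 / ρ) + 10 ^ 16 * Lam l (sg (u t) (u1 t) (a t) d ρ) := by
    unfold Lam; fun_prop
  have i1 := P.cgg (WI_cont ρ) (kI_cont ρ) 0 ρ hs
  have i2 := P.cgg (WO_cont ρ) (κ := fun _ => 0) continuous_const ρ (ρ + ρ ^ 2) hs
  have key := int_mono hs (i1.add i2)
    (ii_cont (c3.fun_sub c1) 0 s) (fun t ht => by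
      have := (P.sl t ht.1.le).virial hρ hl
      linarith)
  rw [intervalIntegral.integral_add i1 i2,
    intervalIntegral.integral_sub (ii_cont c3 0 s) (ii_cont c1 0 s), ← f1, ← f2] at key
  have bI : ∀ t, 0 ≤ t → |∫ x in (0:ℝ)..ρ, (WI ρ x * ee1 (u1 t) (a t) x
      + 1 / 2 * kI ρ x * ee (u t) (a t) x) * ee (v t) (a2 t) x| ≤ (ρ + 1) * d ^ 2 := fun t ht => by
    have S := P.sl t ht
    refine bdry_le hr.le S.ce S.ce1 S.cη (WI_cont ρ) (kI_cont ρ) hr.le zero_le_one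
      (fun x hx => ?_) (fun x hx => ?_) (S.ie ρ hr.le) (S.ie1 ρ hr.le) (S.iv ρ hr.le)
    · rw [abs_of_nonneg (WI_nonneg hρ hx.1 hx.2)]
      exact (WI_le hρ hx.1 hx.2).trans hx.2
    · rw [abs_of_nonneg (kI_nonneg hρ hx.2)]
      exact (kI_le hρ hx.2).trans (om_le1 hρ hx.1)
  have shrink : ∀ f : ℝ → ℝ, Continuous f → (∀ x, 0 ≤ f x) →
      ∫ x in (0:ℝ)..(ρ + ρ ^ 2), f x ≤ d ^ 2 → ∫ x in ρ..(ρ + ρ ^ 2), f x ≤ d ^ 2 := by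
    intro f cf f0 h
    rw [← intervalIntegral.integral_add_adjacent_intervals (ii_cont cf 0 ρ) (ii_cont cf ρ _)] at h
    have := intervalIntegral.integral_nonneg (μ := volume) hr.le (fun x _ => f0 x)
    linarith
  have bO : ∀ t, 0 ≤ t → |∫ x in ρ..(ρ + ρ ^ 2), (WO ρ x * ee1 (u1 t) (a t) x
      + 1 / 2 * 0 * ee (u t) (a t) x) * ee (v t) (a2 t) x| ≤ (ρ + 0) * d ^ 2 := fun t ht => by
    have S := P.sl t ht
    have := S.ce; have := S.ce1; have := S.cη
    refine bdry_le (κ := fun _ => 0) hM S.ce S.ce1 S.cη (WO_cont ρ) continuous_const hr.le le_rfl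
      (fun x hx => ?_) (fun x hx => by simp)
      (shrink _ (by fun_prop) (fun _ => sq_nonneg _) (S.ie _ (by positivity)))
      (shrink _ (by fun_prop) (fun _ => sq_nonneg _) (S.ie1 _ (by positivity)))
      (shrink _ (by fun_prop) (fun _ => sq_nonneg _) (S.iv _ (by positivity)))
    rw [abs_of_nonneg (WO_nonneg hρ hx.2)]
    exact WO_le hρ hx.1
  have b1 := abs_le.mp (bI 0 le_rfl)
  have b2 := abs_le.mp (bI s hs)
  have b3 := abs_le.mp (bO 0 le_rfl)
  have b4 := abs_le.mp (bO s hs)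
  nlinarith [mul_nonneg (sub_nonneg.mpr hρ) (sq_nonneg d)]

/-- The unstable direction is controlled through `(a a₂)' = a₂² + 3a² + a N`. -/
lemma Dyn.a_est (hρ : 1 ≤ ρ) (hs : 0 ≤ s) :
    ∫ t in (0:ℝ)..s, (a t ^ 2 + a2 t ^ 2) ≤
      2 * d ^ 2 + 4 * 10 ^ 15 * ∫ t in (0:ℝ)..s, sg (u t) (u1 t) (a t) d ρ ^ 2 := by
  have ca := P.ca; have ca2 := P.ca2; have cN := P.cN; have cs := P.csg ρ
  have h1 := intervalIntegral.integral_eq_sub_of_hasDerivAt (f := fun t => a t * a2 t) (a := 0)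
    (b := s) (f' := fun t => a2 t * a2 t + a t * (3 * a t + N t)) (fun t ht => by
      rw [uIcc_of_le hs] at ht
      exact (P.ta t ht.1).mul (P.ta2 t ht.1)) (ii_cont (by fun_prop) _ _)
  have c1 : Continuous fun t => a2 t * a2 t + a t * (3 * a t + N t) := by fun_prop
  have c2 : Continuous fun t => 4 * 10 ^ 15 * sg (u t) (u1 t) (a t) d ρ ^ 2 := by fun_prop
  have h2 := int_mono hs (ii_cont (by fun_prop : Continuous fun t => a t ^ 2 + a2 t ^ 2) 0 s)
    (ii_cont (c1.fun_add c2) 0 s) (fun t ht => by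
      have h := (P.sl t ht.1.le).n_le hρ
      rw [← P.hN t ht.1.le] at h
      have h3 : N t ^ 2 ≤ (120000000 * sg (u t) (u1 t) (a t) d ρ) ^ 2 := by
        rw [← sq_abs]; exact pow_le_pow_left₀ (abs_nonneg _) h 2
      nlinarith [sq_nonneg (a t + N t / 2), sq_nonneg (a t), sq_nonneg (sg (u t) (u1 t) (a t) d ρ)])
  rw [intervalIntegral.integral_add (ii_cont c1 _ _) (ii_cont c2 _ _), h1,
    intervalIntegral.integral_const_mul] at h2
  have bb : ∀ t, 0 ≤ t → |a t * a2 t| ≤ d ^ 2 := fun t ht => by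
    rw [abs_mul, pow_two]
    exact mul_le_mul (P.sl t ht).ba (P.sl t ht).ba2 (abs_nonneg _) (P.sl t ht).d0.le
  have b1 := abs_le.mp (bb 0 le_rfl)
  have b2 := abs_le.mp (bb s hs)
  linarith

/-- The localized kinetic energy, integrated in time. -/
lemma Dyn.kinetic (hρ : 1 ≤ ρ) (hs : 0 ≤ s) :
    ∫ t in (0:ℝ)..s, ∫ x in (0:ℝ)..ρ, om ρ x * (1 - tanh x ^ 2) * ee (v t) (a2 t) x ^ 2 ≤
      2 * d ^ 2 + 10 ^ 9 * ∫ t in (0:ℝ)..s, sg (u t) (u1 t) (a t) d ρ := by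
  have hr : 0 < ρ := by linarith
  have h1 := P.ce; have h3 := P.cη; have h5 := P.cH; have cs := P.csg ρ
  have ct := tanh_cont; have co := om_cont ρ
  have cc : ∀ t, 0 ≤ t → Continuous fun x =>
      om ρ x * (1 - tanh x ^ 2) * (ee (u t) (a t) x * ee (v t) (a2 t) x) := by
    intro t ht
    have := (P.sl t ht).ce; have := (P.sl t ht).cη
    fun_prop
  have c1 : Continuous fun t => ∫ x in (0:ℝ)..ρ, om ρ x * (1 - tanh x ^ 2) *
      (ee (v t) (a2 t) x * ee (v t) (a2 t) x + ee (u t) (a t) x * HT u u2 a N t x) :=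
    intervalIntegral.continuous_parametric_intervalIntegral_of_continuous'
      (f := fun t x => om ρ x * (1 - tanh x ^ 2) *
      (ee (v t) (a2 t) x * ee (v t) (a2 t) x + ee (u t) (a t) x * HT u u2 a N t x))
      (by unfold Function.uncurry; fun_prop) 0 ρ
  have c2 : Continuous fun t => ∫ x in (0:ℝ)..ρ, om ρ x * (1 - tanh x ^ 2) *
      ee (v t) (a2 t) x ^ 2 :=
    intervalIntegral.continuous_parametric_intervalIntegral_of_continuous'
      (f := fun t x => om ρ x * (1 - tanh x ^ 2) * ee (v t) (a2 t) x ^ 2)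
      (by unfold Function.uncurry; fun_prop) 0 ρ
  have c3 : Continuous fun t => 10 ^ 9 * sg (u t) (u1 t) (a t) d ρ := by fun_prop
  have f := time_ftc (α := 0) (β := ρ) (f := fun t x =>
      om ρ x * (1 - tanh x ^ 2) * (ee (u t) (a t) x * ee (v t) (a2 t) x))
    (g := fun t x => om ρ x * (1 - tanh x ^ 2) *
      (ee (v t) (a2 t) x * ee (v t) (a2 t) x + ee (u t) (a t) x * HT u u2 a N t x)) hs
    (by fun_prop) (fun t ht x => ((P.te ht x).mul (P.tη ht x)).const_mul _) (cc 0 le_rfl) (cc s hs)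
  have key := int_mono hs (ii_cont c2 0 s) (ii_cont (c1.fun_add c3) 0 s) (fun t ht => by
    have h := (P.sl t ht.1.le).kinetic hρ
    simp only [P.HT_eq ht.1.le]
    exact h)
  rw [intervalIntegral.integral_add (ii_cont c1 _ _) (ii_cont c3 _ _), ← f,
    intervalIntegral.integral_const_mul] at key
  have bb : ∀ t, 0 ≤ t → |∫ x in (0:ℝ)..ρ,
      om ρ x * (1 - tanh x ^ 2) * (ee (u t) (a t) x * ee (v t) (a2 t) x)| ≤ d ^ 2 := fun t ht => by
    have S := P.sl t ht
    have h := bdry_le (W := fun x => om ρ x * (1 - tanh x ^ 2)) (κ := fun _ => 0) (w := 1) (k := 0)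
      hr.le S.ce S.ce S.cη (by fun_prop) continuous_const zero_le_one le_rfl (fun x hx => by
        have o0 := om_nn hρ hx.2
        have o1 := om_le1 hρ hx.1
        have s0 := s2_pos x
        have s1 := s2_le x
        rw [abs_of_nonneg (by positivity)]
        nlinarith) (fun x hx => by simp) (S.ie ρ hr.le) (S.ie ρ hr.le) (S.iv ρ hr.le)
    refine le_of_eq_of_le ?_ (h.trans (by linarith))
    congr 1
    refine intervalIntegral.integral_congr (fun x _ => ?_)
    ring
  have b1 := abs_le.mp (bb 0 le_rfl)
  have b2 := abs_le.mp (bb s hs)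
  linarith

end
end KG

namespace KG
open Set

/-! ### Growth of the accumulated local energy -/

lemma lin_cont {f g : ℝ → ℝ} (cf : Continuous f) (cg : Continuous g) (k p q : ℝ) :
    Continuous fun t => k + p * f t + q * g t := by fun_prop

lemma lin_int {f g : ℝ → ℝ} (cf : Continuous f) (cg : Continuous g) (s k p q : ℝ) :
    ∫ t in (0:ℝ)..s, (k + p * f t + q * g t) =
      s * k + p * (∫ t in (0:ℝ)..s, f t) + q * ∫ t in (0:ℝ)..s, g t := by
  have c0 : Continuous fun _ : ℝ => k := continuous_const
  have c1 : Continuous fun t => p * f t := by fun_prop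
  have c2 : Continuous fun t => q * g t := by fun_prop
  rw [intervalIntegral.integral_add (ii_cont (c0.fun_add c1) _ _) (ii_cont c2 _ _),
    intervalIntegral.integral_add (ii_cont c0 _ _) (ii_cont c1 _ _),
    intervalIntegral.integral_const_mul, intervalIntegral.integral_const_mul,
    intervalIntegral.integral_const]
  simp

section
variable {u u1 u2 v v1 : ℝ → ℝ} {a a2 d ρ : ℝ} (P : Slice u u1 u2 v v1 a a2 d) (hρ : 1 ≤ ρ)
include P hρ

lemma Slice.sg_sq : sg u u1 a d ρ ^ 2 ≤ 4 * (d ^ 4 / ρ ^ 2)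
    + 4 * d ^ 2 * Dt (ee u a) (ee1 u1 a) d ρ + 2 * d ^ 2 * (a ^ 2 + a2 ^ 2) := by
  have hD := (P.prof hρ).Dt_nonneg
  have hq := sq_sqrt hD
  unfold sg SS
  set D := Dt (ee u a) (ee1 u1 a) d ρ
  set q := √D
  have e : 4 * (d ^ 4 / ρ ^ 2) + 4 * d ^ 2 * D = 4 * (d ^ 2 / ρ) ^ 2 + 4 * (d * q) ^ 2 := by
    rw [← hq]; ring
  have ha : a ^ 2 ≤ d ^ 2 := by rw [← sq_abs]; exact pow_le_pow_left₀ (abs_nonneg _) P.ba 2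
  have h4 : (a ^ 2) ^ 2 ≤ d ^ 2 * a ^ 2 := by nlinarith [sq_nonneg a]
  have h5 : 0 ≤ d ^ 2 * a2 ^ 2 := by positivity
  rw [e]
  nlinarith [sq_nonneg (d ^ 2 / ρ + d * q - a ^ 2), sq_nonneg (d ^ 2 / ρ - d * q)]

lemma Slice.sg_le {θ : ℝ} (hθ : 0 < θ) : sg u u1 a d ρ ≤ (d ^ 2 / ρ + d ^ 2 * θ)
    + 1 / θ * Dt (ee u a) (ee1 u1 a) d ρ + 1 * (a ^ 2 + a2 ^ 2) := by
  have hD := (P.prof hρ).Dt_nonneg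
  have hq := sq_sqrt hD
  unfold sg SS
  set D := Dt (ee u a) (ee1 u1 a) d ρ
  set q := √D
  have h1 : d * q ≤ d ^ 2 * θ + 1 / θ * q ^ 2 := by
    have e : 1 / θ * q ^ 2 = θ * (q / θ) ^ 2 := by field_simp
    have e2 : d * q = θ * (d * (q / θ)) := by field_simp
    rw [e, e2]
    nlinarith [mul_nonneg hθ.le (sq_nonneg (d - q / θ)), mul_nonneg hθ.le (sq_nonneg d),
      mul_nonneg hθ.le (sq_nonneg (q / θ))]
  rw [← hq]
  nlinarith [sq_nonneg a2]

/-- Pointwise bound for the nonlinear error at the scale `l = 10¹⁸ d²`. -/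
lemma Slice.Lam_le : 5000 * (d ^ 2 / ρ) + 10 ^ 16 * Lam (10 ^ 18 * d ^ 2) (sg u u1 a d ρ) ≤
    (5001 * (d ^ 2 / ρ) + 10 ^ 34 * (d ^ 4 / ρ) + 10 ^ 70 * d ^ 6)
      + 1 / 10 * Dt (ee u a) (ee1 u1 a) d ρ
      + (1 / 50 + 10 ^ 34 * d ^ 2) * (a ^ 2 + a2 ^ 2) := by
  have hd0 := P.d0
  have hr : 0 < ρ := by linarith
  have hD := (P.prof hρ).Dt_nonneg
  have h1 := P.sg_sq hρ
  have h2 := P.sg_le hρ (θ := 10 ^ 36 * d ^ 2) (by positivity)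
  set D := Dt (ee u a) (ee1 u1 a) d ρ
  set σ := sg u u1 a d ρ
  have h3 : 10 ^ 16 * (σ ^ 2 / (10 ^ 18 * d ^ 2)) ≤
      1 / 25 * (d ^ 2 / ρ ^ 2) + 1 / 25 * D + 1 / 50 * (a ^ 2 + a2 ^ 2) := by
    have : 10 ^ 16 * (σ ^ 2 / (10 ^ 18 * d ^ 2)) = 1 / 100 * (σ ^ 2 / d ^ 2) := by ring
    rw [this]
    have : σ ^ 2 / d ^ 2 ≤ 4 * (d ^ 2 / ρ ^ 2) + 4 * D + 2 * (a ^ 2 + a2 ^ 2) := by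
      rw [div_le_iff₀ (by positivity)]
      refine h1.trans (le_of_eq ?_)
      ring
    linarith
  have h4 : d ^ 2 / ρ ^ 2 ≤ d ^ 2 / ρ := by gcongr; nlinarith
  have h5 : 10 ^ 34 * d ^ 2 * σ ≤ 10 ^ 34 * (d ^ 4 / ρ) + 10 ^ 70 * d ^ 6 + 1 / 100 * D
      + 10 ^ 34 * d ^ 2 * (a ^ 2 + a2 ^ 2) := by
    refine (mul_le_mul_of_nonneg_left h2 (by positivity)).trans (le_of_eq ?_)
    field_simp
    ring
  unfold Lam
  have h6 : 0 ≤ d ^ 2 / ρ := by positivity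
  nlinarith

end

section
variable {u u1 u2 v v1 : ℝ → ℝ → ℝ} {a a2 N : ℝ → ℝ} {d ρ s : ℝ}
  (P : Dyn u u1 u2 v v1 a a2 N d)
include P

/-- The three integrated estimates combined; `θ` and `ρ` remain free. -/
lemma Dyn.basic (hρ : 1 ≤ ρ) (hs : 0 ≤ s) {θ : ℝ} (hθ : 0 < θ) (hd : d ≤ 1 / 10 ^ 20) :
    (∫ t in (0:ℝ)..s, sg (u t) (u1 t) (a t) d ρ) ≤
      6 * d ^ 2 + 2 * s * d ^ 2 / ρ + s * d ^ 2 * θ +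
      (1 + 1 / θ) * (40 * ρ * d ^ 2 + 20000 * s * d ^ 2 / ρ + 10 ^ 71 * s * d ^ 6) := by
  have hr : 0 < ρ := by linarith
  have cD := P.cDt ρ; have cs := P.csg ρ; have ca := P.ca; have ca2 := P.ca2
  have cA : Continuous fun t => a t ^ 2 + a2 t ^ 2 := by fun_prop
  have hd0 := (P.sl 0 le_rfl).d0
  have e1 := P.a_est hρ hs
  have e2 := int_mono hs (ii_cont (cs.pow 2) 0 s)
    (ii_cont (lin_cont cD cA _ _ _) 0 s) (fun t ht => (P.sl t ht.1.le).sg_sq hρ)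
  rw [lin_int cD cA] at e2
  have e3 := P.virial hρ hs (l := 10 ^ 18 * d ^ 2) (by nlinarith [sq_nonneg d])
  have e4 := int_mono hs (ii_cont (by unfold Lam; fun_prop) 0 s)
    (ii_cont (lin_cont cD cA _ _ _) 0 s) (fun t ht => (P.sl t ht.1.le).Lam_le hρ)
  rw [lin_int cD cA] at e4
  have e5 := int_mono hs (ii_cont cs 0 s)
    (ii_cont (lin_cont cD cA _ _ _) 0 s) (fun t ht => (P.sl t ht.1.le).sg_le hρ hθ)
  rw [lin_int cD cA] at e5
  simp only [Pi.pow_apply] at e2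
  have D0 : 0 ≤ ∫ t in (0:ℝ)..s, Dt (ee (u t) (a t)) (ee1 (u1 t) (a t)) d ρ :=
    intervalIntegral.integral_nonneg hs (fun t ht => ((P.sl t ht.1).prof hρ).Dt_nonneg)
  have A0 : 0 ≤ ∫ t in (0:ℝ)..s, (a t ^ 2 + a2 t ^ 2) :=
    intervalIntegral.integral_nonneg hs (fun t ht => by positivity)
  set D := ∫ t in (0:ℝ)..s, Dt (ee (u t) (a t)) (ee1 (u1 t) (a t)) d ρ
  set A := ∫ t in (0:ℝ)..s, (a t ^ 2 + a2 t ^ 2)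
  set X2 := ∫ t in (0:ℝ)..s, sg (u t) (u1 t) (a t) d ρ ^ 2
  set X := ∫ t in (0:ℝ)..s, sg (u t) (u1 t) (a t) d ρ
  have d2 : d ^ 2 ≤ 1 / 10 ^ 40 := by
    calc d ^ 2 ≤ (1 / 10 ^ 20) ^ 2 := pow_le_pow_left₀ hd0.le hd 2
      _ = _ := by norm_num
  have p0 : 0 ≤ s * d ^ 2 / ρ := by positivity
  have p1 : s * (d ^ 4 / ρ) ≤ 1 / 10 ^ 40 * (s * d ^ 2 / ρ) := by
    have : s * (d ^ 4 / ρ) = d ^ 2 * (s * d ^ 2 / ρ) := by ring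
    rw [this]; gcongr
  have p2 : s * (d ^ 4 / ρ ^ 2) ≤ s * (d ^ 4 / ρ) := by
    gcongr; nlinarith
  have dD : d ^ 2 * D ≤ 1 / 10 ^ 40 * D := by gcongr
  have dA : d ^ 2 * A ≤ 1 / 10 ^ 40 * A := by gcongr
  have p3 : 0 ≤ s * d ^ 6 := by positivity
  have p4 : d ^ 2 ≤ ρ * d ^ 2 := by nlinarith [sq_nonneg d]
  -- the unstable direction in terms of `D`
  have hA : A ≤ 4 * d ^ 2 + 1 / 10 ^ 20 * (s * d ^ 2 / ρ) + 1 / 10 ^ 20 * D := by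
    have q1 : s * (4 * (d ^ 4 / ρ ^ 2)) = 4 * (s * (d ^ 4 / ρ ^ 2)) := by ring
    have q2 : 4 * d ^ 2 * D = 4 * (d ^ 2 * D) := by ring
    have q3 : 2 * d ^ 2 * A = 2 * (d ^ 2 * A) := by ring
    rw [q1, q2, q3] at e2
    norm_num at *
    linarith
  have hD : D ≤ 40 * ρ * d ^ 2 + 20000 * s * d ^ 2 / ρ + 10 ^ 71 * s * d ^ 6 := by
    have q1 : s * (5001 * (d ^ 2 / ρ) + 10 ^ 34 * (d ^ 4 / ρ) + 10 ^ 70 * d ^ 6)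
      = 5001 * (s * d ^ 2 / ρ) + 10 ^ 34 * (s * (d ^ 4 / ρ)) + 10 ^ 70 * (s * d ^ 6) := by ring
    have q2 : (1 / 50 + 10 ^ 34 * d ^ 2) * A = 1 / 50 * A + 10 ^ 34 * (d ^ 2 * A) := by ring
    have q3 : 40 * ρ * d ^ 2 + 20000 * s * d ^ 2 / ρ + 10 ^ 71 * s * d ^ 6
      = 40 * (ρ * d ^ 2) + 20000 * (s * d ^ 2 / ρ) + 10 ^ 71 * (s * d ^ 6) := by ring
    have q4 : 6 * ρ * d ^ 2 = 6 * (ρ * d ^ 2) := by ring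
    rw [q1, q2] at e4
    rw [q3]
    rw [q4] at e3
    norm_num at *
    linarith
  have hθ' : 0 ≤ 1 / θ := by positivity
  have q5 : s * (d ^ 2 / ρ + d ^ 2 * θ) = s * d ^ 2 / ρ + s * d ^ 2 * θ := by ring
  have q6 : 2 * s * d ^ 2 / ρ = 2 * (s * d ^ 2 / ρ) := by ring
  rw [q5] at e5
  rw [q6]
  have := mul_le_mul_of_nonneg_left hD (by positivity : 0 ≤ 1 + 1 / θ)
  norm_num at *
  linarith

/-- Growth of the accumulated local energy: with `1 + s = r⁴` and `ρ = r²` it is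
`O(d² (r³ + d² r⁴))`. -/
lemma Dyn.main {r : ℝ} (hr : 1 ≤ r) (hs : s = r ^ 4 - 1) (hd : d ≤ 1 / 10 ^ 20) :
    (∫ t in (0:ℝ)..s, ((∫ x in (0:ℝ)..r ^ 2, om (r ^ 2) x * (1 - tanh x ^ 2) *
      (ee (v t) (a2 t) x ^ 2 + ee1 (u1 t) (a t) x ^ 2 + ee (u t) (a t) x ^ 2))
      + (a t ^ 2 + a2 t ^ 2))) ≤ 10 ^ 90 * (d ^ 2 * (r ^ 3 + d ^ 2 * r ^ 4)) := by
  have hs0 : 0 ≤ s := by rw [hs]; linarith [one_le_pow₀ hr (n := 4)]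
  have hρ : 1 ≤ r ^ 2 := one_le_pow₀ hr
  have hr0 : 0 < r := by linarith
  have hd0 := (P.sl 0 le_rfl).d0
  have ce := P.ce; have ce1 := P.ce1; have cη := P.cη; have cs := P.csg (r ^ 2)
  have ct := tanh_cont; have co := om_cont (r ^ 2)
  have ca := P.ca; have ca2 := P.ca2
  have b := P.basic hρ hs0 (θ := 1 / r + d ^ 2) (by positivity) hd
  have X : (∫ t in (0:ℝ)..s, sg (u t) (u1 t) (a t) d (r ^ 2)) ≤
      10 ^ 72 * (d ^ 2 * (r ^ 3 + d ^ 2 * r ^ 4)) := by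
    refine b.trans ?_
    have t1 : 1 / (1 / r + d ^ 2) ≤ r := by
      rw [div_le_iff₀ (by positivity)]
      have : r * (1 / r) = 1 := by field_simp
      nlinarith [mul_pos hr0 (pow_pos hd0 2)]
    have t2 : 1 / (1 / r + d ^ 2) * d ^ 2 ≤ 1 := by
      rw [one_div, inv_mul_le_iff₀ (by positivity)]
      have : 0 < 1 / r := by positivity
      linarith
    have s1 : s ≤ r ^ 4 := by linarith
    have r2 : r ^ 2 ≤ r ^ 3 := pow_le_pow_right₀ hr (by norm_num)
    have r3 : 1 ≤ r ^ 3 := one_le_pow₀ hr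
    have m1 : s * d ^ 2 / r ^ 2 ≤ r ^ 2 * d ^ 2 := by
      rw [div_le_iff₀ (by positivity)]
      nlinarith [sq_nonneg d]
    have m2 : s * d ^ 2 * (1 / r + d ^ 2) ≤ r ^ 3 * d ^ 2 + r ^ 4 * d ^ 4 := by
      have : r ^ 3 * d ^ 2 + r ^ 4 * d ^ 4 = r ^ 4 * d ^ 2 * (1 / r + d ^ 2) := by
        field_simp
      rw [this]; gcongr
    have m3 : s * d ^ 6 ≤ r ^ 4 * d ^ 6 := by gcongr
    have m4 : d ^ 6 ≤ d ^ 4 := pow_le_pow_of_le_one hd0.le (by linarith) (by norm_num)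
    set τ := 1 / (1 / r + d ^ 2)
    have τ0 : 0 < τ := by positivity
    have m5 : 40 * r ^ 2 * d ^ 2 + 20000 * s * d ^ 2 / r ^ 2 + 10 ^ 71 * s * d ^ 6 ≤
        20040 * (r ^ 2 * d ^ 2) + 10 ^ 71 * (r ^ 4 * d ^ 6) := by
      have : 20000 * s * d ^ 2 / r ^ 2 = 20000 * (s * d ^ 2 / r ^ 2) := by ring
      rw [this]; linarith
    have m6 := mul_le_mul_of_nonneg_left m5 (by positivity : 0 ≤ 1 + τ)
    have m7 : τ * (r ^ 2 * d ^ 2) ≤ r ^ 3 * d ^ 2 := by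
      have : r ^ 3 * d ^ 2 = r * (r ^ 2 * d ^ 2) := by ring
      rw [this]; gcongr
    have m8 : τ * (r ^ 4 * d ^ 6) ≤ r ^ 4 * d ^ 4 := by
      have : τ * (r ^ 4 * d ^ 6) = (τ * d ^ 2) * (r ^ 4 * d ^ 4) := by ring
      rw [this]; nlinarith [mul_pos (pow_pos hr0 4) (pow_pos hd0 4)]
    have m9 : r ^ 2 * d ^ 2 ≤ r ^ 3 * d ^ 2 := by gcongr
    have m10 : r ^ 4 * d ^ 6 ≤ r ^ 4 * d ^ 4 := by gcongr
    have m11 : d ^ 2 ≤ r ^ 3 * d ^ 2 := by nlinarith [sq_nonneg d]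
    have m12 : 0 < r ^ 4 * d ^ 4 := by positivity
    have m13 : 2 * s * d ^ 2 / r ^ 2 = 2 * (s * d ^ 2 / r ^ 2) := by ring
    rw [m13]
    have m14 : d ^ 2 * (r ^ 3 + d ^ 2 * r ^ 4) = r ^ 3 * d ^ 2 + r ^ 4 * d ^ 4 := by ring
    rw [m14]
    nlinarith
  have k1 := P.kinetic hρ hs0
  have k2 := P.a_est hρ hs0
  have c1 : Continuous fun t => ∫ x in (0:ℝ)..r ^ 2, om (r ^ 2) x * (1 - tanh x ^ 2) *
      ee (v t) (a2 t) x ^ 2 :=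
    intervalIntegral.continuous_parametric_intervalIntegral_of_continuous'
      (f := fun t x => om (r ^ 2) x * (1 - tanh x ^ 2) * ee (v t) (a2 t) x ^ 2)
      (by unfold Function.uncurry; fun_prop) 0 (r ^ 2)
  have c2 : Continuous fun t => ∫ x in (0:ℝ)..r ^ 2, om (r ^ 2) x * ((1 - tanh x ^ 2) *
      (ee (u t) (a t) x ^ 2 + ee1 (u1 t) (a t) x ^ 2)) :=
    intervalIntegral.continuous_parametric_intervalIntegral_of_continuous'
      (f := fun t x => om (r ^ 2) x * ((1 - tanh x ^ 2) *
      (ee (u t) (a t) x ^ 2 + ee1 (u1 t) (a t) x ^ 2)))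
      (by unfold Function.uncurry; fun_prop) 0 (r ^ 2)
  have c3 : Continuous fun t => a t ^ 2 + a2 t ^ 2 := by fun_prop
  have k3 := int_mono hs0 (ii_cont c2 0 s)
    (ii_cont (by fun_prop : Continuous fun t => 50000 * sg (u t) (u1 t) (a t) d (r ^ 2)) 0 s)
    (fun t ht => (((P.sl t ht.1.le).prof hρ).loc).trans
      (mul_le_mul_of_nonneg_left SS_le_sg (by norm_num)))
  rw [intervalIntegral.integral_const_mul] at k3
  have k4 := int_mono hs0 (ii_cont (cs.pow 2) 0 s) (ii_cont cs 0 s) (fun t ht => by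
    have S := P.sl t ht.1.le
    have h0 := S.sg_nonneg hρ
    have h1 : sg (u t) (u1 t) (a t) d (r ^ 2) ≤ 1 := by
      have g := S.sg_le hρ (θ := 1) one_pos
      have g1 := (S.prof hρ).Dt_le
      have ha : a t ^ 2 ≤ d ^ 2 := by
        rw [← sq_abs]; exact pow_le_pow_left₀ (abs_nonneg _) S.ba 2
      have ha2 : a2 t ^ 2 ≤ d ^ 2 := by
        rw [← sq_abs]; exact pow_le_pow_left₀ (abs_nonneg _) S.ba2 2
      have g2 : d ^ 2 / r ^ 2 ≤ d ^ 2 := div_le_self (sq_nonneg d) hρ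
      have g3 : d ^ 2 ≤ 1 / 1000 := by nlinarith
      norm_num at g
      linarith
    simp only [Pi.pow_apply]
    nlinarith)
  simp only [Pi.pow_apply] at k4
  have eq : ∀ t ∈ uIcc 0 s, ((∫ x in (0:ℝ)..r ^ 2, om (r ^ 2) x * (1 - tanh x ^ 2) *
      (ee (v t) (a2 t) x ^ 2 + ee1 (u1 t) (a t) x ^ 2 + ee (u t) (a t) x ^ 2))
      + (a t ^ 2 + a2 t ^ 2)) = (∫ x in (0:ℝ)..r ^ 2, om (r ^ 2) x * (1 - tanh x ^ 2) *
      ee (v t) (a2 t) x ^ 2) + (∫ x in (0:ℝ)..r ^ 2, om (r ^ 2) x * ((1 - tanh x ^ 2) *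
      (ee (u t) (a t) x ^ 2 + ee1 (u1 t) (a t) x ^ 2))) + (a t ^ 2 + a2 t ^ 2) := by
    intro t ht
    rw [uIcc_of_le hs0] at ht
    have := (P.sl t ht.1).ce; have := (P.sl t ht.1).ce1; have := (P.sl t ht.1).cη
    rw [← intervalIntegral.integral_add (ii_cont (by fun_prop) _ _) (ii_cont (by fun_prop) _ _)]
    congr 1
    refine intervalIntegral.integral_congr (fun x _ => ?_)
    ring
  rw [intervalIntegral.integral_congr eq,
    intervalIntegral.integral_add (ii_cont (c1.fun_add c2) _ _) (ii_cont c3 _ _),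
    intervalIntegral.integral_add (ii_cont c1 _ _) (ii_cont c2 _ _)]
  have z : d ^ 2 ≤ d ^ 2 * (r ^ 3 + d ^ 2 * r ^ 4) := by
    have : 1 ≤ r ^ 3 := one_le_pow₀ hr
    have : 0 < d ^ 2 * r ^ 4 := by positivity
    nlinarith [sq_nonneg d]
  have z0 : 0 < d ^ 2 := by positivity
  linarith

end
end KG

namespace KG
open Set Topology

/-! ### Fixed-time bounds from the energy norm -/

lemma Ex_lim : Tendsto Ex atTop (𝓝 0) := by
  unfold Ex
  refine tendsto_exp_atBot.comp (tendsto_neg_atTop_atBot.comp ?_)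
  exact tendsto_id.atTop_div_const two_pos

/-- Weighted decay of `sech`, used to remove spatial cut-offs. -/
lemma sech_lim : Tendsto (fun x => (1 + x) * sech x) atTop (𝓝 0) := by
  have h : Tendsto (fun x => 432 * Ex x) atTop (𝓝 0) := by simpa using Ex_lim.const_mul 432
  refine squeeze_zero' ?_ ?_ h
  · filter_upwards [eventually_ge_atTop 0] with x hx
    have := sech_pos x; positivity
  · filter_upwards [eventually_ge_atTop 0] with x hx
    refine le_trans ?_ (sech_Ex hx)
    have := sech_pos x
    gcongr
    nlinarith [sq_nonneg x, mul_nonneg hx (sq_nonneg x)]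

lemma tanh_lim : Tendsto tanh atTop (𝓝 1) := by
  have h : Tendsto (fun x => 1 - tanh x) atTop (𝓝 0) := by
    refine squeeze_zero' (Eventually.of_forall fun x => ?_) ?_ sech_lim
    · have := (abs_le.mp (tanh_abs_le x)).2; linarith
    · filter_upwards [eventually_ge_atTop 0] with x hx
      have h1 := tanh_nonneg' hx
      have h2 := (abs_le.mp (tanh_abs_le x)).2
      have := s2_le_sech x
      have := sech_pos x
      nlinarith
  simpa using h.const_sub 1

lemma tanh_lim' : Tendsto tanh atBot (𝓝 (-1)) := by
  have := (tanh_lim.comp tendsto_neg_atBot_atTop).neg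
  refine this.congr fun x => ?_
  simp [tanh_neg]

lemma sech_le_Ex (x : ℝ) : sech x ≤ 432 * Ex |x| := by
  have h := sech_Ex (abs_nonneg x)
  have e : sech |x| = sech x := by
    rcases abs_choice x with h | h <;> rw [h]
    exact sech_even x
  rw [e] at h
  refine le_trans ?_ h
  have := sech_pos x
  have h1 : 1 ≤ (1 + |x|) ^ 3 := one_le_pow₀ (by linarith [abs_nonneg x])
  nlinarith

lemma integrable_of_sech {f : ℝ → ℝ} (cf : Continuous f) (C : ℝ) (h : ∀ x, |f x| ≤ C * sech x) :
    Integrable f := by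
  refine ((Ex_abs_integrable.const_mul (432 * |C|))).mono' cf.aestronglyMeasurable
    (Eventually.of_forall fun x => ?_)
  rw [norm_eq_abs]
  have h1 := sech_le_Ex x
  have h2 : C * sech x ≤ |C| * sech x := by have := sech_pos x; gcongr; exact le_abs_self C
  have h3 : |C| * sech x ≤ |C| * (432 * Ex |x|) := by gcongr
  linarith [h x]

lemma Y_int : Integrable Y := integrable_of_sech Y_cont 1 fun x => by
  rw [abs_of_pos (Y_pos x)]; linarith [Y_le x]

lemma Y2_int : Integrable fun x => Y x ^ 2 :=
  integrable_of_sech (by have := Y_cont; fun_prop) 1 fun x => by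
    rw [abs_of_pos (by have := Y_pos x; positivity)]
    nlinarith [Y_le x, Y_pos x, Y_le_one x]

lemma s2_int : Integrable fun x => 1 - tanh x ^ 2 :=
  integrable_of_sech (by have := tanh_cont; fun_prop) 1 fun x => by
    rw [abs_of_pos (s2_pos x)]; linarith [s2_le_sech x]

lemma Y_norm : ∫ x, Y x ^ 2 = 1 := by
  have hd : ∀ x, HasDerivAt (fun x => 3 / 4 * (tanh x - tanh x ^ 3 / 3)) (Y x ^ 2) x := by
    intro x
    have h := tanh_deriv x
    have := ((h.sub ((h.pow 3).div_const 3)).const_mul (3/4 : ℝ))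
    refine this.congr_deriv ?_
    rw [Y_eq]
    have : √3 ^ 2 = 3 := sq_sqrt (by norm_num)
    simp only [Nat.cast_ofNat]
    norm_num
    linear_combination (-(1 - tanh x ^ 2) ^ 2 / 4) * this
  have h1 : Tendsto (fun x => 3 / 4 * (tanh x - tanh x ^ 3 / 3)) atTop (𝓝 (3 / 4 * (1 - 1 ^ 3 / 3))) :=
    (tanh_lim.sub ((tanh_lim.pow 3).div_const 3)).const_mul _
  have h2 : Tendsto (fun x => 3 / 4 * (tanh x - tanh x ^ 3 / 3)) atBot
      (𝓝 (3 / 4 * (-1 - (-1) ^ 3 / 3))) :=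
    (tanh_lim'.sub ((tanh_lim'.pow 3).div_const 3)).const_mul _
  rw [integral_of_hasDerivAt_of_tendsto hd Y2_int h2 h1]
  norm_num

/-- Cauchy-Schwarz against the normalized `Y`, in the form `2|fY| ≤ f²/δ + δY²`. -/
lemma proj_bound {f : ℝ → ℝ} {δ : ℝ} (hδ : 0 < δ) (cf : Continuous f)
    (hi : Integrable fun x => f x ^ 2) (hb : ∫ x, f x ^ 2 ≤ δ ^ 2) :
    Integrable (fun x => f x * Y x) ∧ ∫ x, |f x * Y x| ≤ δ := by
  have hg : Integrable fun x => (1 / (2 * δ)) * f x ^ 2 + δ / 2 * Y x ^ 2 :=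
    (hi.const_mul _).add (Y2_int.const_mul _)
  have hp : ∀ x, |f x * Y x| ≤ (1 / (2 * δ)) * f x ^ 2 + δ / 2 * Y x ^ 2 := by
    intro x
    rw [abs_le]
    have e1 : (1 / (2 * δ)) * f x ^ 2 + δ / 2 * Y x ^ 2 - f x * Y x
      = (f x - δ * Y x) ^ 2 / (2 * δ) := by field_simp; ring
    have e2 : (1 / (2 * δ)) * f x ^ 2 + δ / 2 * Y x ^ 2 + f x * Y x
      = (f x + δ * Y x) ^ 2 / (2 * δ) := by field_simp; ring
    have p1 : 0 ≤ (f x - δ * Y x) ^ 2 / (2 * δ) := by positivity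
    have p2 : 0 ≤ (f x + δ * Y x) ^ 2 / (2 * δ) := by positivity
    constructor <;> linarith
  have hI : Integrable (fun x => f x * Y x) :=
    hg.mono' (by have := Y_cont; exact (cf.mul this).aestronglyMeasurable)
      (Eventually.of_forall fun x => hp x)
  refine ⟨hI, (integral_mono hI.abs hg hp).trans ?_⟩
  rw [integral_add (hi.const_mul _) (Y2_int.const_mul _), integral_const_mul, integral_const_mul,
    Y_norm]
  have : 1 / (2 * δ) * ∫ x, f x ^ 2 ≤ 1 / (2 * δ) * δ ^ 2 := by gcongr
  have e : 1 / (2 * δ) * δ ^ 2 = δ / 2 := by field_simp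
  linarith

lemma proj_abs {f : ℝ → ℝ} {δ : ℝ} (hδ : 0 < δ) (cf : Continuous f)
    (hi : Integrable fun x => f x ^ 2) (hb : ∫ x, f x ^ 2 ≤ δ ^ 2) : |∫ x, f x * Y x| ≤ δ :=
  (abs_integral_le_integral_abs).trans (proj_bound hδ cf hi hb).2

lemma ee_l2 {f : ℝ → ℝ} {δ b : ℝ} (hb : |b| ≤ δ)
    (hi : Integrable fun x => f x ^ 2) (hf : ∫ x, f x ^ 2 ≤ δ ^ 2) {R : ℝ} (hR : 0 ≤ R)
    {g Z : ℝ → ℝ} (cf : Continuous f) (cZ : Continuous Z) (hZ : ∀ x, |Z x| ≤ 2 * Y x)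
    (hg : ∀ x, g x = f x - b * Z x) :
    ∫ x in (0:ℝ)..R, g x ^ 2 ≤ (4 * δ) ^ 2 := by
  have hY := Y2_int
  have hm : Integrable fun x => 2 * f x ^ 2 + 8 * δ ^ 2 * Y x ^ 2 :=
    (hi.const_mul _).add (hY.const_mul _)
  have hb2 : b ^ 2 ≤ δ ^ 2 := sq_le_sq' (abs_le.mp hb).1 (abs_le.mp hb).2
  have hp : ∀ x, g x ^ 2 ≤ 2 * f x ^ 2 + 8 * δ ^ 2 * Y x ^ 2 := by
    intro x
    rw [hg]
    have h1 : Z x ^ 2 ≤ (2 * Y x) ^ 2 := sq_le_sq' (abs_le.mp (hZ x)).1 (abs_le.mp (hZ x)).2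
    have h2 : b ^ 2 * Z x ^ 2 ≤ δ ^ 2 * (2 * Y x) ^ 2 := by gcongr
    nlinarith [sq_nonneg (f x + b * Z x)]
  have cg : Continuous g := by rw [show g = fun x => f x - b * Z x from funext hg]; fun_prop
  have := Y_cont
  calc ∫ x in (0:ℝ)..R, g x ^ 2 ≤ ∫ x in (0:ℝ)..R, (2 * f x ^ 2 + 8 * δ ^ 2 * Y x ^ 2) :=
        int_mono hR (ii_cont (by fun_prop) _ _) (ii_cont (by fun_prop) _ _) fun x _ => hp x
    _ = ∫ x in Ioc 0 R, (2 * f x ^ 2 + 8 * δ ^ 2 * Y x ^ 2) := intervalIntegral.integral_of_le hR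
    _ ≤ ∫ x, (2 * f x ^ 2 + 8 * δ ^ 2 * Y x ^ 2) :=
        setIntegral_le_integral hm (Eventually.of_forall fun x => by positivity)
    _ = 2 * (∫ x, f x ^ 2) + 8 * δ ^ 2 := by
        rw [integral_add (hi.const_mul _) (hY.const_mul _), integral_const_mul,
          integral_const_mul, Y_norm, mul_one]
    _ ≤ (4 * δ) ^ 2 := by nlinarith [sq_nonneg δ]

/-- One-dimensional Sobolev embedding on a unit interval. -/
lemma sup_bound {u u1 : ℝ → ℝ} {δ : ℝ} (hδ : 0 < δ) (du : ∀ x, HasDerivAt u (u1 x) x)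
    (c1 : Continuous u1) (i0 : Integrable fun x => u x ^ 2) (i1 : Integrable fun x => u1 x ^ 2)
    (h : (∫ x, u x ^ 2) + ∫ x, u1 x ^ 2 ≤ δ ^ 2) (x : ℝ) : |u x| ≤ 2 * δ := by
  have cu : Continuous u := continuous_iff_continuousAt.mpr fun x => (du x).continuousAt
  have hd : ∀ y, HasDerivAt (fun y => -((1 - (y - x)) * u y ^ 2))
      (u y ^ 2 - 2 * (1 - (y - x)) * (u y * u1 y)) y := by
    intro y
    have h1 : HasDerivAt (fun y => 1 - (y - x)) (-1) y := by
      simpa using ((hasDerivAt_id y).sub_const x).const_sub 1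
    refine ((h1.mul ((du y).pow 2)).neg).congr_deriv ?_
    simp; ring
  have hm : Integrable fun x => 2 * u x ^ 2 + u1 x ^ 2 := (i0.const_mul 2).add i1
  have e : u x ^ 2 = ∫ y in x..(x+1), (u y ^ 2 - 2 * (1 - (y - x)) * (u y * u1 y)) := by
    rw [intervalIntegral.integral_eq_sub_of_hasDerivAt (fun y _ => hd y)
      (ii_cont (by fun_prop) _ _)]
    ring
  have : u x ^ 2 ≤ 2 * δ ^ 2 := by
    rw [e]
    calc _ ≤ ∫ y in x..(x+1), (2 * u y ^ 2 + u1 y ^ 2) := by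
          refine int_mono (by linarith) (ii_cont (by fun_prop) _ _) (ii_cont (by fun_prop) _ _) fun y hy => ?_
          have h0 : 0 ≤ 1 - (y - x) := by linarith [hy.2]
          have h1 : (1 - (y - x)) ^ 2 ≤ 1 := by nlinarith [hy.1]
          nlinarith [sq_nonneg (u1 y + (1 - (y - x)) * u y), mul_nonneg (sq_nonneg (u y)) (sub_nonneg.mpr h1)]
      _ = ∫ y in Ioc x (x+1), (2 * u y ^ 2 + u1 y ^ 2) :=
          intervalIntegral.integral_of_le (by linarith)
      _ ≤ ∫ y, (2 * u y ^ 2 + u1 y ^ 2) :=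
          setIntegral_le_integral hm (Eventually.of_forall fun x => by positivity)
      _ = 2 * (∫ y, u y ^ 2) + ∫ y, u1 y ^ 2 := by
          rw [integral_add (i0.const_mul 2) i1, integral_const_mul]
      _ ≤ 2 * δ ^ 2 := by
          have : 0 ≤ ∫ y, u1 y ^ 2 := integral_nonneg fun y => by positivity
          linarith
  apply abs_le_of_sq_le_sq _ (by positivity)
  nlinarith [sq_nonneg δ]

/-- The tail bound for `UU`: orthogonality to `Y` and evenness make the half-line integral of
`sech² · ee` vanish. -/
lemma UU_tail {u : ℝ → ℝ} {a d : ℝ} (cu : Continuous u) (ev : ∀ x, u (-x) = u x)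
    (iu : Integrable fun x => u x * Y x) (ha : a = ∫ x, u x * Y x)
    (be : ∀ x, |ee u a x| ≤ d) {x : ℝ} (hx : 0 ≤ x) : |UU u a x| ≤ d * (1 - tanh x) := by
  have ce : Continuous (ee u a) := by have := Y_cont; unfold ee; fun_prop
  have ht := tanh_cont
  set f : ℝ → ℝ := fun y => (1 - tanh y ^ 2) * ee u a y with hf
  have cf : Continuous f := by fun_prop
  have s0 : √3 / 2 ≠ 0 := by positivity
  have eqf : ∀ y, √3 / 2 * f y = u y * Y y - a * Y y ^ 2 := by
    intro y; simp only [hf, ee]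
    have := Y_eq y
    linear_combination -(u y - a * Y y) * this
  have hd0 : 0 ≤ d := (abs_nonneg _).trans (be 0)
  have fi : Integrable f := by
    refine (s2_int.const_mul d).mono' cf.aestronglyMeasurable (Eventually.of_forall fun y => ?_)
    rw [norm_eq_abs, hf]
    simp only
    rw [abs_mul, abs_of_pos (s2_pos y), mul_comm]
    have := s2_pos y
    gcongr
    exact be y
  have f0 : ∫ y, f y = 0 := by
    have : √3 / 2 * ∫ y, f y = 0 := by
      rw [← integral_const_mul]
      simp_rw [eqf]
      rw [integral_sub iu (Y2_int.const_mul a), integral_const_mul, Y_norm, ← ha]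
      ring
    exact (mul_eq_zero.mp this).resolve_left s0
  have fe : ∀ y, f (-y) = f y := by
    intro y; simp only [hf, ee, tanh_neg, ev, Y_even]; ring
  have h1 := intervalIntegral.integral_Iic_add_Ioi (f := f) (b := 0) fi.integrableOn fi.integrableOn
  have h2 : ∫ y in Iic (0:ℝ), f y = ∫ y in Ioi (0:ℝ), f y := by
    have := integral_comp_neg_Iic (0:ℝ) f
    simp only [fe, neg_zero] at this
    exact this
  have h3 : ∫ y in Ioi (0:ℝ), f y = 0 := by rw [f0] at h1; linarith
  have h4 := intervalIntegral.integral_Ioi_sub_Ioi (f := f) (a := 0) (b := x) (μ := volume) fi.integrableOn hx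
  have h5 : UU u a x = - ∫ y in Ioi x, f y := by
    unfold UU; rw [h3] at h4; rw [← h4]; ring
  have h6 : ∫ y in Ioi x, (1 - tanh y ^ 2) = 1 - tanh x :=
    integral_Ioi_of_hasDerivAt_of_tendsto' (fun y _ => tanh_deriv y) s2_int.integrableOn tanh_lim
  rw [h5, abs_neg, ← h6, ← integral_const_mul]
  refine (abs_integral_le_integral_abs).trans ?_
  refine integral_mono fi.abs.integrableOn (s2_int.const_mul d).integrableOn fun y => ?_
  simp only [hf]
  rw [abs_mul, abs_of_pos (s2_pos y), mul_comm]
  have := s2_pos y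
  gcongr
  exact be y

/-- Smooth even data at a fixed time whose energy norm is at most `δ`. -/
structure Fix (u u1 u2 v v1 : ℝ → ℝ) (δ : ℝ) : Prop where
  δ0 : 0 < δ
  δ1 : δ ≤ 1 / 4
  du : ∀ x, HasDerivAt u (u1 x) x
  du1 : ∀ x, HasDerivAt u1 (u2 x) x
  cu2 : Continuous u2
  dv : ∀ x, HasDerivAt v (v1 x) x
  cv1 : Continuous v1
  ev : ∀ x, u (-x) = u x
  iu : Integrable fun x => u x ^ 2
  iu1 : Integrable fun x => u1 x ^ 2
  iv : Integrable fun x => v x ^ 2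
  bd : (∫ x, u x ^ 2) + (∫ x, u1 x ^ 2) + ∫ x, v x ^ 2 ≤ δ ^ 2

section
variable {u u1 u2 v v1 : ℝ → ℝ} {δ : ℝ} (P : Fix u u1 u2 v v1 δ)
include P

lemma Fix.cu : Continuous u := continuous_iff_continuousAt.mpr fun x => (P.du x).continuousAt
lemma Fix.cu1 : Continuous u1 := continuous_iff_continuousAt.mpr fun x => (P.du1 x).continuousAt
lemma Fix.cv : Continuous v := continuous_iff_continuousAt.mpr fun x => (P.dv x).continuousAt

lemma Fix.bds : (∫ x, u x ^ 2) ≤ δ ^ 2 ∧ (∫ x, u1 x ^ 2) ≤ δ ^ 2 ∧ (∫ x, v x ^ 2) ≤ δ ^ 2 ∧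
    (∫ x, u x ^ 2) + (∫ x, u1 x ^ 2) ≤ δ ^ 2 := by
  have h0 : 0 ≤ ∫ y, u y ^ 2 := integral_nonneg fun y => by positivity
  have h1 : 0 ≤ ∫ y, u1 y ^ 2 := integral_nonneg fun y => by positivity
  have h2 : 0 ≤ ∫ y, v y ^ 2 := integral_nonneg fun y => by positivity
  have := P.bd
  refine ⟨?_, ?_, ?_, ?_⟩ <;> linarith

lemma Fix.sup (x : ℝ) : |u x| ≤ 2 * δ :=
  sup_bound P.δ0 P.du P.cu1 P.iu P.iu1 P.bds.2.2.2 x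

lemma Fix.slice : Slice u u1 u2 v v1 (∫ x, u x * Y x) (∫ x, v x * Y x) (4 * δ) := by
  have δ0 := P.δ0
  obtain ⟨b0, b1, b2, -⟩ := P.bds
  have ha := proj_abs δ0 P.cu P.iu b0
  have ha2 := proj_abs δ0 P.cv P.iv b2
  have hiY := (proj_bound δ0 P.cu P.iu b0).1
  set a := ∫ x, u x * Y x with hadef
  set a2 := ∫ x, v x * Y x
  have be : ∀ x, |ee u a x| ≤ 4 * δ := by
    intro x
    unfold ee
    have h1 := P.sup x
    have h2 : |a * Y x| ≤ δ := by
      rw [abs_mul, abs_of_pos (Y_pos x)]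
      nlinarith [Y_le_one x, Y_pos x, abs_nonneg a]
    have := abs_sub (u x) (a * Y x)
    linarith
  have hYY : ∀ x, |Y x| ≤ 2 * Y x := fun x => by rw [abs_of_pos (Y_pos x)]; linarith [Y_pos x]
  have hYY1 : ∀ x, |Y1 x| ≤ 2 * Y x := fun x => by
    unfold Y1
    rw [abs_mul, abs_mul, abs_of_pos (Y_pos x)]
    have := tanh_abs_le x
    have := Y_pos x
    norm_num
    nlinarith
  exact {
    d0 := by positivity
    d1 := by linarith [P.δ1]
    du := P.du
    du1 := P.du1
    cu2 := P.cu2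
    dv := P.dv
    cv1 := P.cv1
    ev := P.ev
    ba := by linarith
    ba2 := by linarith
    bu := fun x => by linarith [P.sup x]
    be := be
    iu := fun R hR => by
      have := ee_l2 (b := 0) (by simpa using δ0.le) P.iu b0 hR (g := u) P.cu Y_cont hYY (by simp)
      exact this
    ie := fun R hR => ee_l2 ha P.iu b0 hR P.cu Y_cont hYY fun x => rfl
    ie1 := fun R hR => ee_l2 ha P.iu1 b1 hR P.cu1 Y1_cont hYY1 fun x => rfl
    iv := fun R hR => ee_l2 ha2 P.iv b2 hR P.cv Y_cont hYY fun x => rfl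
    bU2 := fun x hx => UU_tail P.cu P.ev hiY hadef be hx }
end
end KG

namespace KG
open Set Topology

/-! ### The modulation equations -/

/-- The perturbation equation on `[0, ∞)`, with data of energy norm at most `δ` at each time. -/
structure Raw (u u1 u2 v v1 : ℝ → ℝ → ℝ) (δ : ℝ) : Prop where
  fx : ∀ t, 0 ≤ t → Fix (u t) (u1 t) (u2 t) (v t) (v1 t) δ
  cu : Continuous fun p : ℝ × ℝ => u p.1 p.2
  cu1 : Continuous fun p : ℝ × ℝ => u1 p.1 p.2
  cu2 : Continuous fun p : ℝ × ℝ => u2 p.1 p.2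
  cv : Continuous fun p : ℝ × ℝ => v p.1 p.2
  cv1 : Continuous fun p : ℝ × ℝ => v1 p.1 p.2
  tu : ∀ t, 0 ≤ t → ∀ x, HasDerivAt (fun τ => u τ x) (v t x) t
  tu1 : ∀ t, 0 ≤ t → ∀ x, HasDerivAt (fun τ => u1 τ x) (v1 t x) t
  tv : ∀ t, 0 ≤ t → ∀ x, HasDerivAt (fun τ => v τ x)
    (u2 t x - (1 - 6 * (1 - tanh x ^ 2)) * u t x + NN (u t) x) t

lemma abs_int_sech {f : ℝ → ℝ} (cf : Continuous f) {C : ℝ} (hC : 0 ≤ C)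
    (h : ∀ x, |f x| ≤ C * sech x) : ∫ x, |f x| ≤ C * 1728 := by
  have hi := integrable_of_sech cf C h
  calc ∫ x, |f x| ≤ ∫ x, C * 432 * Ex |x| := by
        refine integral_mono hi.abs (Ex_abs_integrable.const_mul _) fun x => ?_
        have := sech_le_Ex x
        have h2 : C * sech x ≤ C * (432 * Ex |x|) := by gcongr
        have := h x
        simp only
        linarith
    _ = C * 1728 := by rw [integral_const_mul, int_Ex_abs]; ring

lemma abs_trunc_le {f : ℝ → ℝ} (hi : Integrable f) (a b : ℝ) :
    |∫ x in a..b, f x| ≤ ∫ x, |f x| := by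
  have h := intervalIntegral.norm_integral_le_integral_norm_uIoc (f := f) (a := a) (b := b)
    (μ := volume)
  refine h.trans (setIntegral_le_integral hi.norm (Eventually.of_forall fun x => norm_nonneg _))

lemma trunc_lim {f : ℝ → ℝ} (hi : Integrable f) :
    Tendsto (fun L => ∫ x in -L..L, f x) atTop (𝓝 (∫ x, f x)) :=
  intervalIntegral_tendsto_integral hi tendsto_neg_atTop_atBot tendsto_id

lemma time_lim {w : ℝ → ℝ → ℝ} {t B : ℝ} (ht : 0 ≤ t)
    (cw : Continuous fun p : ℝ × ℝ => w p.1 p.2) (hi : ∀ τ, 0 ≤ τ → Integrable (w τ))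
    (hB : ∀ τ, 0 ≤ τ → ∫ x, |w τ x| ≤ B) :
    Tendsto (fun L => ∫ τ in (0:ℝ)..t, ∫ x in -L..L, w τ x) atTop
      (𝓝 (∫ τ in (0:ℝ)..t, ∫ x, w τ x)) := by
  refine intervalIntegral.tendsto_integral_filter_of_dominated_convergence (fun _ => B) ?_ ?_ ?_ ?_
  · refine Eventually.of_forall fun L => Continuous.aestronglyMeasurable ?_
    exact intervalIntegral.continuous_parametric_intervalIntegral_of_continuous' (f := w)
      (by unfold Function.uncurry; exact cw) _ _
  · refine Eventually.of_forall fun L => Eventually.of_forall fun τ hτ => ?_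
    rw [uIoc_of_le ht] at hτ
    exact (abs_trunc_le (hi τ hτ.1.le) _ _).trans (hB τ hτ.1.le)
  · exact _root_.intervalIntegrable_const
  · refine Eventually.of_forall fun τ hτ => ?_
    rw [uIoc_of_le ht] at hτ
    exact trunc_lim (hi τ hτ.1.le)

lemma cont_max_of_sech {w : ℝ → ℝ → ℝ} (cw : Continuous fun p : ℝ × ℝ => w p.1 p.2) {C : ℝ}
    (hC : 0 ≤ C) (h : ∀ t, 0 ≤ t → ∀ x, |w t x| ≤ C * sech x) :
    Continuous fun t => ∫ x, w (max t 0) x := by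
  refine continuous_of_dominated (bound := fun x => C * 432 * Ex |x|) (fun t => ?_) (fun t => ?_)
    (Ex_abs_integrable.const_mul _) (Eventually.of_forall fun x => ?_)
  · exact (cw.comp (g := fun p : ℝ × ℝ => w p.1 p.2) (f := fun x => (max t 0, x))
      (by fun_prop)).aestronglyMeasurable
  · refine Eventually.of_forall fun x => ?_
    have h1 := h (max t 0) (le_max_right _ _) x
    have h2 := sech_le_Ex x
    have h3 : C * sech x ≤ C * (432 * Ex |x|) := by gcongr
    rw [norm_eq_abs]; linarith
  · exact cw.comp (g := fun p : ℝ × ℝ => w p.1 p.2) (f := fun t => (max t 0, x)) (by fun_prop)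

section
variable {u u1 u2 v v1 : ℝ → ℝ → ℝ} {δ t : ℝ} (P : Raw u u1 u2 v v1 δ)
include P

lemma Raw.a_law (ht : 0 ≤ t) :
    (∫ x, u t x * Y x) - (∫ x, u 0 x * Y x) = ∫ τ in (0:ℝ)..t, ∫ x, v τ x * Y x := by
  have hY := Y_cont
  have cv := P.cv
  have hU : ∀ τ, 0 ≤ τ → Integrable fun x => u τ x * Y x := fun τ hτ =>
    (proj_bound (P.fx τ hτ).δ0 (P.fx τ hτ).cu (P.fx τ hτ).iu (P.fx τ hτ).bds.1).1
  have hV : ∀ τ, 0 ≤ τ → Integrable (fun x => v τ x * Y x) ∧ ∫ x, |v τ x * Y x| ≤ δ :=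
    fun τ hτ => proj_bound (P.fx τ hτ).δ0 (P.fx τ hτ).cv (P.fx τ hτ).iv (P.fx τ hτ).bds.2.2.1
  have l1 := (trunc_lim (hU t ht)).sub (trunc_lim (hU 0 le_rfl))
  have l2 := time_lim (w := fun τ x => v τ x * Y x) ht (by fun_prop) (fun τ hτ => (hV τ hτ).1)
    (fun τ hτ => (hV τ hτ).2)
  refine tendsto_nhds_unique (l1.congr fun L => ?_) l2
  exact time_ftc (f := fun τ x => u τ x * Y x) (g := fun τ x => v τ x * Y x) ht (by fun_prop)
    (fun τ hτ x => (P.tu τ hτ x).mul_const _) ((P.fx 0 le_rfl).cu.mul hY) ((P.fx t ht).cu.mul hY)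

/-- Exponential decay in space of the source `3 u Y + N Y` of the modulation equation for `a2`. -/
lemma Raw.w_bound (ht : 0 ≤ t) (x : ℝ) :
    |3 * (u t x * Y x) + NN (u t) x * Y x| ≤ 13 * sech x := by
  have hN := (P.fx t ht).slice.N_le x
  have hu := (P.fx t ht).sup x
  have h1 := (P.fx t ht).δ1
  have h0 := (P.fx t ht).δ0
  have hu1 : |u t x| ≤ 1 := by linarith
  have hu2 : u t x ^ 2 ≤ 1 := by rw [← sq_abs]; nlinarith [abs_nonneg (u t x)]
  have hk : |3 * u t x + NN (u t) x| ≤ 13 := by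
    refine (abs_add_le _ _).trans ?_
    rw [abs_mul, abs_of_pos (by norm_num : (0:ℝ) < 3)]
    linarith
  have e : 3 * (u t x * Y x) + NN (u t) x * Y x = (3 * u t x + NN (u t) x) * Y x := by ring
  rw [e, abs_mul, abs_of_pos (Y_pos x)]
  have := Y_le x
  have := Y_pos x
  gcongr

lemma Raw.w_cont : Continuous fun p : ℝ × ℝ =>
    3 * (u p.1 p.2 * Y p.2) + NN (u p.1) p.2 * Y p.2 := by
  have := P.cu; have := Y_cont; have := Q_cont; unfold NN; fun_prop

lemma Raw.w_slice (t : ℝ) : Continuous fun x => 3 * (u t x * Y x) + NN (u t) x * Y x := by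
  have h := P.w_cont
  exact h.comp (g := fun p : ℝ × ℝ => 3 * (u p.1 p.2 * Y p.2) + NN (u p.1) p.2 * Y p.2)
    (f := fun x => (t, x)) (by fun_prop)

/-- The truncation error when the equation is tested against `Y - Y(L)` on `[-L, L]`: the
boundary terms with `u1` cancel, since `Y` is even. -/
lemma Raw.trunc_err (ht : 0 ≤ t) {L : ℝ} (hL : 0 ≤ L) :
    |(∫ x in -L..L, (u2 t x - (1 - 6 * (1 - tanh x ^ 2)) * u t x + NN (u t) x) * (Y x - Y L))
      - ∫ x in -L..L, (3 * (u t x * Y x) + NN (u t) x * Y x)| ≤ 30 * ((1 + L) * sech L) := by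
  have F := P.fx t ht
  have hY := Y_cont
  have hQ := Q_cont
  have ht' := tanh_cont
  have cu := F.cu
  have c2 := F.cu2
  have cN : Continuous (NN (u t)) := by unfold NN; fun_prop
  have hu : ∀ x, |u t x| ≤ 1 := fun x => by linarith [F.sup x, F.δ1]
  have hF : ∀ x, HasDerivAt (fun x => u1 t x * (Y x - Y L) - u t x * Y1 x)
      (u2 t x * (Y x - Y L) - u t x * ((4 - 6 * (1 - tanh x ^ 2)) * Y x)) x := by
    intro x
    refine (((F.du1 x).mul ((Y_deriv x).sub_const (Y L))).sub
      ((F.du x).mul (Y1_deriv x))).congr_deriv ?_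
    ring
  have cF : Continuous fun x =>
      u2 t x * (Y x - Y L) - u t x * ((4 - 6 * (1 - tanh x ^ 2)) * Y x) := by fun_prop
  have cG : Continuous fun x => Y L * ((1 - 6 * (1 - tanh x ^ 2)) * u t x - NN (u t) x) := by
    fun_prop
  have e1 := intervalIntegral.integral_eq_sub_of_hasDerivAt (a := -L) (b := L)
    (fun y _ => hF y) (ii_cont cF _ _)
  rw [← intervalIntegral.integral_sub (ii_cont (by fun_prop) _ _) (ii_cont (by fun_prop) _ _)]
  have e2 : (fun x => (u2 t x - (1 - 6 * (1 - tanh x ^ 2)) * u t x + NN (u t) x) * (Y x - Y L)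
      - (3 * (u t x * Y x) + NN (u t) x * Y x)) = fun x =>
      (u2 t x * (Y x - Y L) - u t x * ((4 - 6 * (1 - tanh x ^ 2)) * Y x))
        + Y L * ((1 - 6 * (1 - tanh x ^ 2)) * u t x - NN (u t) x) := by
    funext x; ring
  rw [e2, intervalIntegral.integral_add (ii_cont cF _ _) (ii_cont cG _ _), e1]
  have b1 : |u1 t L * (Y L - Y L) - u t L * Y1 L - (u1 t (-L) * (Y (-L) - Y L) - u t (-L) * Y1 (-L))|
      ≤ 4 * sech L := by
    rw [Y_even]
    have h1 : |u t L * Y1 L| ≤ 2 * sech L := by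
      rw [abs_mul]; nlinarith [hu L, Y1_abs L, abs_nonneg (Y1 L)]
    have h2 : |u t (-L) * Y1 (-L)| ≤ 2 * sech L := by
      have := Y1_abs (-L)
      rw [sech_even] at this
      rw [abs_mul]; nlinarith [hu (-L), abs_nonneg (Y1 (-L))]
    have e : u1 t L * (Y L - Y L) - u t L * Y1 L - (u1 t (-L) * (Y L - Y L) - u t (-L) * Y1 (-L))
      = u t (-L) * Y1 (-L) - u t L * Y1 L := by ring
    rw [e]
    have := abs_sub (u t (-L) * Y1 (-L)) (u t L * Y1 L)
    linarith
  have b2 : |∫ x in -L..L, Y L * ((1 - 6 * (1 - tanh x ^ 2)) * u t x - NN (u t) x)|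
      ≤ 13 * sech L * |L - (-L)| := by
    rw [← norm_eq_abs (∫ x in -L..L, _)]
    refine intervalIntegral.norm_integral_le_of_norm_le_const fun x _ => ?_
    rw [norm_eq_abs, abs_mul, abs_of_pos (Y_pos L)]
    have hk : |(1 - 6 * (1 - tanh x ^ 2)) * u t x - NN (u t) x| ≤ 13 := by
      have hN := F.slice.N_le x
      have hu2 : u t x ^ 2 ≤ 1 := by rw [← sq_abs]; nlinarith [abs_nonneg (u t x), hu x]
      have h1 : |1 - 6 * (1 - tanh x ^ 2)| ≤ 5 := by
        have := s2_pos x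
        rw [abs_le]
        constructor <;> nlinarith [sq_nonneg (tanh x)]
      have h2 : |(1 - 6 * (1 - tanh x ^ 2)) * u t x| ≤ 5 := by
        rw [abs_mul]; nlinarith [hu x, abs_nonneg (u t x)]
      have := abs_sub ((1 - 6 * (1 - tanh x ^ 2)) * u t x) (NN (u t) x)
      linarith
    have := Y_le L
    have := Y_pos L
    have := sech_pos L
    calc Y L * _ ≤ sech L * 13 := by gcongr
      _ = _ := by ring
  rw [show L - -L = 2 * L by ring, abs_of_nonneg (by positivity : 0 ≤ 2 * L)] at b2
  have := abs_add_le (u1 t L * (Y L - Y L) - u t L * Y1 L -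
    (u1 t (-L) * (Y (-L) - Y L) - u t (-L) * Y1 (-L)))
    (∫ x in -L..L, Y L * ((1 - 6 * (1 - tanh x ^ 2)) * u t x - NN (u t) x))
  have := sech_pos L
  nlinarith [mul_nonneg hL this.le]

lemma Raw.test_lim (ht : 0 ≤ t) :
    Tendsto (fun L => ∫ x in -L..L, v t x * (Y x - Y L)) atTop (𝓝 (∫ x, v t x * Y x)) := by
  have F := P.fx t ht
  have hY := Y_cont
  have cv := F.cv
  have hV := (proj_bound F.δ0 F.cv F.iv F.bds.2.2.1).1
  have l1 := trunc_lim hV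
  have l2 : Tendsto (fun L => Y L * ∫ x in -L..L, v t x) atTop (𝓝 0) := by
    have l3 : Tendsto (fun L => 2 * ((1 + L) * sech L)) atTop (𝓝 0) := by
      simpa using sech_lim.const_mul 2
    refine squeeze_zero_norm' ?_ l3
    filter_upwards [eventually_ge_atTop 0] with L hL
    rw [norm_eq_abs, abs_mul, abs_of_pos (Y_pos L)]
    have h1 : |∫ x in -L..L, v t x| ≤ 2 * (1 + L) := by
      have hab : -L ≤ L := by linarith
      calc |∫ x in -L..L, v t x| ≤ ∫ x in -L..L, |v t x| :=
            intervalIntegral.abs_integral_le_integral_abs hab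
        _ ≤ ∫ x in -L..L, (1 + v t x ^ 2) := by
            refine int_mono hab (ii_cont (by fun_prop) _ _) (ii_cont (by fun_prop) _ _) fun x _ => ?_
            rw [← sq_abs]; nlinarith [sq_nonneg (|v t x| - 1)]
        _ = 2 * L + ∫ x in -L..L, v t x ^ 2 := by
            rw [intervalIntegral.integral_add (ii_cont (by fun_prop) _ _)
              (ii_cont (by fun_prop) _ _), intervalIntegral.integral_const]
            simp; ring
        _ ≤ 2 * L + 1 := by
            have h := abs_trunc_le F.iv (-L) L
            have h2 : ∫ x, |v t x ^ 2| = ∫ x, v t x ^ 2 := by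
              congr 1; funext x; exact abs_of_nonneg (by positivity)
            rw [h2] at h
            have := F.bds.2.2.1
            have h3 := F.δ1
            have h4 := F.δ0
            nlinarith [le_abs_self (∫ x in -L..L, v t x ^ 2)]
        _ ≤ _ := by linarith
    have := Y_le L
    have := Y_pos L
    have := sech_pos L
    calc _ ≤ sech L * (2 * (1 + L)) := by gcongr
      _ = _ := by ring
  have := l1.sub l2
  rw [sub_zero] at this
  refine this.congr fun L => ?_
  rw [← intervalIntegral.integral_const_mul,
    ← intervalIntegral.integral_sub (ii_cont (by fun_prop) _ _) (ii_cont (by fun_prop) _ _)]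
  congr 1; funext x; ring

lemma Raw.a2_law (ht : 0 ≤ t) :
    (∫ x, v t x * Y x) - (∫ x, v 0 x * Y x)
      = ∫ τ in (0:ℝ)..t, ∫ x, (3 * (u τ x * Y x) + NN (u τ) x * Y x) := by
  have hY := Y_cont
  have hQ := Q_cont
  have ht' := tanh_cont
  have cu := P.cu
  have cu2 := P.cu2
  have cw := P.w_cont
  have cg : ∀ L, Continuous fun p : ℝ × ℝ => (u2 p.1 p.2 - (1 - 6 * (1 - tanh p.2 ^ 2)) * u p.1 p.2
      + NN (u p.1) p.2) * (Y p.2 - Y L) := by intro L; unfold NN; fun_prop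
  have l1 := (P.test_lim ht).sub (P.test_lim le_rfl)
  have l2 := time_lim (w := fun τ x => 3 * (u τ x * Y x) + NN (u τ) x * Y x) (B := 13 * 1728) ht cw
    (fun τ hτ => integrable_of_sech (P.w_slice τ) 13 (P.w_bound hτ))
    (fun τ hτ => abs_int_sech (P.w_slice τ) (by norm_num) (P.w_bound hτ))
  have l3 : Tendsto (fun L => t * (30 * ((1 + L) * sech L))) atTop (𝓝 0) := by
    simpa using (sech_lim.const_mul 30).const_mul t
  have l4 : Tendsto (fun L => (∫ τ in (0:ℝ)..t, ∫ x in -L..L, (u2 τ x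
      - (1 - 6 * (1 - tanh x ^ 2)) * u τ x + NN (u τ) x) * (Y x - Y L))
      - ∫ τ in (0:ℝ)..t, ∫ x in -L..L, (3 * (u τ x * Y x) + NN (u τ) x * Y x)) atTop (𝓝 0) := by
    refine squeeze_zero_norm' ?_ l3
    filter_upwards [eventually_ge_atTop 0] with L hL
    have c1 : Continuous fun τ => ∫ x in -L..L, (u2 τ x
      - (1 - 6 * (1 - tanh x ^ 2)) * u τ x + NN (u τ) x) * (Y x - Y L) :=
      intervalIntegral.continuous_parametric_intervalIntegral_of_continuous' (μ := volume)
        (f := fun τ x => (u2 τ x - (1 - 6 * (1 - tanh x ^ 2)) * u τ x + NN (u τ) x) * (Y x - Y L))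
        (by unfold Function.uncurry; exact cg L) _ _
    have c2 : Continuous fun τ => ∫ x in -L..L, (3 * (u τ x * Y x) + NN (u τ) x * Y x) :=
      intervalIntegral.continuous_parametric_intervalIntegral_of_continuous' (μ := volume)
        (f := fun τ x => 3 * (u τ x * Y x) + NN (u τ) x * Y x)
        (by unfold Function.uncurry; exact cw) _ _
    rw [← intervalIntegral.integral_sub (ii_cont c1 _ _) (ii_cont c2 _ _)]
    have := intervalIntegral.norm_integral_le_of_norm_le_const (a := 0) (b := t)
      (C := 30 * ((1 + L) * sech L))
      (f := fun τ => (∫ x in -L..L, (u2 τ x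
        - (1 - 6 * (1 - tanh x ^ 2)) * u τ x + NN (u τ) x) * (Y x - Y L))
        - ∫ x in -L..L, (3 * (u τ x * Y x) + NN (u τ) x * Y x)) (fun τ hτ => by
        rw [uIoc_of_le ht] at hτ
        exact P.trunc_err hτ.1.le hL)
    rw [sub_zero, abs_of_nonneg ht] at this
    linarith
  have l5 := l4.add l2
  rw [zero_add] at l5
  refine tendsto_nhds_unique (l1.congr fun L => ?_) l5
  rw [sub_add_cancel]
  exact time_ftc (f := fun τ x => v τ x * (Y x - Y L)) (g := fun τ x => (u2 τ x
        - (1 - 6 * (1 - tanh x ^ 2)) * u τ x + NN (u τ) x) * (Y x - Y L)) ht (cg L)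
    (fun τ hτ x => (P.tv τ hτ x).mul_const _)
    ((P.fx 0 le_rfl).cv.mul (hY.sub continuous_const))
    ((P.fx t ht).cv.mul (hY.sub continuous_const))

/-- Passage to the modulated system. The parameters are extended continuously to negative times,
where the perturbation equation is not assumed. -/
theorem Raw.dyn : ∃ A A2 N : ℝ → ℝ, Dyn u u1 u2 v v1 A A2 N (4 * δ) ∧
    (∀ t, 0 ≤ t → A t = ∫ x, u t x * Y x) ∧ ∀ t, 0 ≤ t → A2 t = ∫ x, v t x * Y x := by
  have cu := P.cu
  have hY := Y_cont
  have hQ := Q_cont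
  have bu : ∀ t, 0 ≤ t → ∀ x, |u t x| ≤ 1 := fun t ht x => by
    linarith [(P.fx t ht).sup x, (P.fx t ht).δ1]
  have bN : ∀ t, 0 ≤ t → ∀ x, |NN (u t) x * Y x| ≤ 7 * sech x := fun t ht x => by
    have hN := (P.fx t ht).slice.N_le x
    have hu2 : u t x ^ 2 ≤ 1 := by rw [← sq_abs]; nlinarith [abs_nonneg (u t x), bu t ht x]
    rw [abs_mul, abs_of_pos (Y_pos x)]
    have := Y_le x
    have := Y_pos x
    have h7 : |NN (u t) x| ≤ 7 := by linarith
    gcongr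
  have bY : ∀ t, 0 ≤ t → ∀ x, |u t x * Y x| ≤ 1 * sech x := fun t ht x => by
    rw [abs_mul, abs_of_pos (Y_pos x)]
    have := Y_le x
    have := Y_pos x
    have := bu t ht x
    gcongr
  have jN : Continuous fun p : ℝ × ℝ => NN (u p.1) p.2 * Y p.2 := by unfold NN; fun_prop
  have sN : ∀ t, Continuous fun x => NN (u t) x * Y x := fun t =>
    jN.comp (g := fun p : ℝ × ℝ => NN (u p.1) p.2 * Y p.2) (f := fun x => (t, x)) (by fun_prop)
  have jU : Continuous fun p : ℝ × ℝ => u p.1 p.2 * Y p.2 := by fun_prop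
  have cN : Continuous fun t => ∫ x, NN (u (max t 0)) x * Y x :=
    cont_max_of_sech (w := fun t x => NN (u t) x * Y x) jN (by norm_num) bN
  have cA : Continuous fun t => ∫ x, u (max t 0) x * Y x :=
    cont_max_of_sech (w := fun t x => u t x * Y x) jU (by norm_num) bY
  set N : ℝ → ℝ := fun t => ∫ x, NN (u (max t 0)) x * Y x with hN
  set B : ℝ → ℝ := fun t => ∫ x, u (max t 0) x * Y x with hB
  have c3 : Continuous fun t => 3 * B t + N t := by fun_prop
  set A2 : ℝ → ℝ := fun t => (∫ x, v 0 x * Y x) + ∫ τ in (0:ℝ)..t, (3 * B τ + N τ) with hA2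
  have d2 : ∀ t, HasDerivAt A2 (3 * B t + N t) t := fun t =>
    ((c3.integral_hasStrictDerivAt 0 t).hasDerivAt).const_add _
  have c2 : Continuous A2 := continuous_iff_continuousAt.mpr fun t => (d2 t).continuousAt
  set A : ℝ → ℝ := fun t => (∫ x, u 0 x * Y x) + ∫ τ in (0:ℝ)..t, A2 τ with hA
  have d1 : ∀ t, HasDerivAt A (A2 t) t := fun t =>
    ((c2.integral_hasStrictDerivAt 0 t).hasDerivAt).const_add _
  have c1 : Continuous A := continuous_iff_continuousAt.mpr fun t => (d1 t).continuousAt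
  have e2 : ∀ t, 0 ≤ t → A2 t = ∫ x, v t x * Y x := by
    intro t ht
    have h := P.a2_law ht
    have h' : ∫ τ in (0:ℝ)..t, ∫ x, (3 * (u τ x * Y x) + NN (u τ) x * Y x)
        = ∫ τ in (0:ℝ)..t, (3 * B τ + N τ) := by
      refine intervalIntegral.integral_congr fun τ hτ => ?_
      rw [uIcc_of_le ht] at hτ
      simp only [hB, hN, max_eq_left hτ.1]
      rw [integral_add ((integrable_of_sech ((P.fx τ hτ.1).cu.fun_mul hY) 1 (bY τ hτ.1)).const_mul 3)
        (integrable_of_sech (sN τ) 7 (bN τ hτ.1)), integral_const_mul]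
    rw [h'] at h
    simp only [hA2]
    linarith
  have e1 : ∀ t, 0 ≤ t → A t = ∫ x, u t x * Y x := by
    intro t ht
    have h := P.a_law ht
    have h' : ∫ τ in (0:ℝ)..t, ∫ x, v τ x * Y x = ∫ τ in (0:ℝ)..t, A2 τ := by
      refine intervalIntegral.integral_congr fun τ hτ => ?_
      rw [uIcc_of_le ht] at hτ
      exact (e2 τ hτ.1).symm
    rw [h'] at h
    simp only [hA]
    linarith
  refine ⟨A, A2, N, ?_, e1, e2⟩
  exact {
    sl := fun t ht => by rw [e1 t ht, e2 t ht]; exact (P.fx t ht).slice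
    cu := P.cu, cu1 := P.cu1, cu2 := P.cu2, cv := P.cv, cv1 := P.cv1
    ca := c1, ca2 := c2, cN := cN
    hN := fun t ht => by simp only [hN, max_eq_left ht]; rfl
    tu := P.tu, tu1 := P.tu1, tv := P.tv
    ta := fun t _ => d1 t
    ta2 := fun t ht => by
      have h := d2 t
      have hb : B t = A t := by rw [e1 t ht]; simp only [hB, max_eq_left ht]
      rwa [hb] at h }
end
end KG

namespace KG
open Set Topology

/-! ### Logarithmic time average -/

/-- Partial summation: growth `(1+s)^{3/4} + D(1+s)` of the primitive of `f` costs only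
`D log(1+T)` in the average against `(1+t)⁻¹`. -/
lemma log_avg {f : ℝ → ℝ} {K D T : ℝ} (cf : Continuous f) (hT : 0 ≤ T) (hK : 0 ≤ K)
    (hG : ∀ s, 0 ≤ s → ∫ t in (0:ℝ)..s, f t ≤ K * ((1 + s) ^ (3 / 4 : ℝ) + D * (1 + s))) :
    ∫ t in (0:ℝ)..T, (1 + t)⁻¹ * f t ≤ K * (5 + D + D * log (1 + T)) := by
  set G : ℝ → ℝ := fun s => ∫ t in (0:ℝ)..s, f t with hGd
  have dG : ∀ s, HasDerivAt G (f s) s := fun s => (cf.integral_hasStrictDerivAt 0 s).hasDerivAt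
  have cG : Continuous G := continuous_iff_continuousAt.mpr fun s => (dG s).continuousAt
  have hmem : ∀ t ∈ uIcc 0 T, 0 < 1 + t := fun t ht => by
    rw [uIcc_of_le hT] at ht; linarith [ht.1]
  have d1 : ∀ t : ℝ, HasDerivAt (fun t : ℝ => 1 + t) 1 t := fun t => (hasDerivAt_id t).const_add 1
  have dI : ∀ t ∈ uIcc 0 T, HasDerivAt (fun t => (1 + t)⁻¹ * G t)
      ((1 + t)⁻¹ * f t - ((1 + t) ^ 2)⁻¹ * G t) t := by
    intro t ht
    have h := hmem t ht
    refine (((d1 t).inv h.ne').mul (dG t)).congr_deriv ?_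
    simp only [Pi.inv_apply]
    field_simp
    ring
  have cinv : ContinuousOn (fun t : ℝ => (1 + t)⁻¹) (uIcc 0 T) :=
    ContinuousOn.inv₀ (by fun_prop) fun t ht => (hmem t ht).ne'
  have i1 : IntervalIntegrable (fun t => (1 + t)⁻¹ * f t) volume 0 T :=
    (cinv.mul cf.continuousOn).intervalIntegrable
  have cinv2 : ContinuousOn (fun t : ℝ => ((1 + t) ^ 2)⁻¹) (uIcc 0 T) :=
    ContinuousOn.inv₀ (by fun_prop) fun t ht => (pow_pos (hmem t ht) 2).ne'
  have i2 : IntervalIntegrable (fun t => ((1 + t) ^ 2)⁻¹ * G t) volume 0 T :=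
    (cinv2.mul cG.continuousOn).intervalIntegrable
  have e1 := intervalIntegral.integral_eq_sub_of_hasDerivAt dI (i1.sub i2)
  rw [intervalIntegral.integral_sub i1 i2] at e1
  have G0 : G 0 = 0 := by simp [hGd]
  rw [G0, mul_zero, sub_zero] at e1
  have dM : ∀ t ∈ uIcc 0 T, HasDerivAt
      (fun t => K * (-4 * (1 + t) ^ (-(1 / 4) : ℝ) + D * log (1 + t)))
      (K * ((1 + t) ^ (-(5 / 4) : ℝ) + D * (1 + t)⁻¹)) t := by
    intro t ht
    have h := hmem t ht
    have h1 := (d1 t).rpow_const (p := (-(1 / 4) : ℝ)) (Or.inl h.ne')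
    have h2 := (d1 t).log h.ne'
    refine (((h1.const_mul (-4)).add (h2.const_mul D)).const_mul K).congr_deriv ?_
    rw [show (-(1 / 4) : ℝ) - 1 = -(5 / 4) by norm_num]
    simp only [one_div]
    ring
  have cr : ContinuousOn (fun t : ℝ => (1 + t) ^ (-(5 / 4) : ℝ)) (uIcc 0 T) :=
    ContinuousOn.rpow_const (by fun_prop) fun t ht => Or.inl (hmem t ht).ne'
  have i3 : IntervalIntegrable (fun t => K * ((1 + t) ^ (-(5 / 4) : ℝ) + D * (1 + t)⁻¹)) volume 0 T :=
    (continuousOn_const.mul (cr.add (continuousOn_const.mul cinv))).intervalIntegrable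
  have e2 := intervalIntegral.integral_eq_sub_of_hasDerivAt dM i3
  have le : ∫ t in (0:ℝ)..T, ((1 + t) ^ 2)⁻¹ * G t
      ≤ ∫ t in (0:ℝ)..T, K * ((1 + t) ^ (-(5 / 4) : ℝ) + D * (1 + t)⁻¹) := by
    refine int_mono hT i2 i3 fun t ht => ?_
    have h : 0 < 1 + t := by linarith [ht.1]
    have e3 : ((1 + t) ^ 2)⁻¹ * (1 + t) ^ (3 / 4 : ℝ) = (1 + t) ^ (-(5 / 4) : ℝ) := by
      rw [← rpow_natCast (1 + t) 2, ← rpow_neg h.le, ← rpow_add h]; norm_num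
    calc ((1 + t) ^ 2)⁻¹ * G t
        ≤ ((1 + t) ^ 2)⁻¹ * (K * ((1 + t) ^ (3 / 4 : ℝ) + D * (1 + t))) := by
          gcongr; exact hG t ht.1.le
      _ = K * (((1 + t) ^ 2)⁻¹ * (1 + t) ^ (3 / 4 : ℝ) + D * (((1 + t) ^ 2)⁻¹ * (1 + t))) := by ring
      _ = _ := by rw [e3]; congr 3; field_simp
  have hp : 0 < 1 + T := by linarith
  have b1 : (1 + T)⁻¹ * G T ≤ K * (1 + D) := by
    have e3 : (1 + T)⁻¹ * (1 + T) ^ (3 / 4 : ℝ) = (1 + T) ^ (-(1 / 4) : ℝ) := by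
      rw [← rpow_neg_one, ← rpow_add hp]; norm_num
    have h4 : (1 + T) ^ (-(1 / 4) : ℝ) ≤ 1 :=
      rpow_le_one_of_one_le_of_nonpos (by linarith) (by norm_num)
    calc (1 + T)⁻¹ * G T
        ≤ (1 + T)⁻¹ * (K * ((1 + T) ^ (3 / 4 : ℝ) + D * (1 + T))) := by
          gcongr; exact hG T hT
      _ = K * ((1 + T)⁻¹ * (1 + T) ^ (3 / 4 : ℝ) + D * ((1 + T)⁻¹ * (1 + T))) := by ring
      _ = K * ((1 + T) ^ (-(1 / 4) : ℝ) + D) := by rw [e3, inv_mul_cancel₀ hp.ne', mul_one]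
      _ ≤ K * (1 + D) := by gcongr
  have h5 : 0 ≤ K * (1 + T) ^ (-(1 / 4) : ℝ) := by positivity
  have e4 : (1 + (0:ℝ)) ^ (-(1 / 4) : ℝ) = 1 := by simp
  rw [e4] at e2
  simp only [add_zero, log_one, mul_zero] at e2
  rw [e2] at le
  nlinarith

/-! ### Growth of the time-integrated local energy -/

section
variable {u u1 u2 v v1 : ℝ → ℝ → ℝ} {a a2 N : ℝ → ℝ} {d s X : ℝ}
  (P : Dyn u u1 u2 v v1 a a2 N d)

lemma s2_anti {x X : ℝ} (hx : 0 ≤ x) (hX : x ≤ X) : 1 - tanh X ^ 2 ≤ 1 - tanh x ^ 2 := by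
  rw [← sech_sq, ← sech_sq]
  have h : cosh x ≤ cosh X := cosh_le_cosh.mpr (by rwa [abs_of_nonneg hx, abs_of_nonneg (hx.trans hX)])
  have : sech X ≤ sech x := by unfold sech; have := cosh_pos x; gcongr
  have := sech_pos X
  gcongr

/-- The energy of the component `e` on `[0, X]` together with `a² + a₂²`. -/
noncomputable def locE (u u1 v : ℝ → ℝ → ℝ) (a a2 : ℝ → ℝ) (X t : ℝ) : ℝ :=
  (∫ x in (0:ℝ)..X, (ee (v t) (a2 t) x ^ 2 + ee1 (u1 t) (a t) x ^ 2 + ee (u t) (a t) x ^ 2))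
    + (a t ^ 2 + a2 t ^ 2)

include P

lemma Dyn.cdens : Continuous fun p : ℝ × ℝ => ee (v p.1) (a2 p.1) p.2 ^ 2
    + ee1 (u1 p.1) (a p.1) p.2 ^ 2 + ee (u p.1) (a p.1) p.2 ^ 2 := by
  have := P.ce; have := P.ce1; have := P.cη; fun_prop

lemma Dyn.cdens' (t : ℝ) : Continuous fun x => ee (v t) (a2 t) x ^ 2
    + ee1 (u1 t) (a t) x ^ 2 + ee (u t) (a t) x ^ 2 :=
  P.cdens.comp (g := fun p : ℝ × ℝ => ee (v p.1) (a2 p.1) p.2 ^ 2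
    + ee1 (u1 p.1) (a p.1) p.2 ^ 2 + ee (u p.1) (a p.1) p.2 ^ 2) (f := fun x => (t, x)) (by fun_prop)

lemma Dyn.locE_cont (X : ℝ) : Continuous (locE u u1 v a a2 X) := by
  have ha := P.ca; have ha2 := P.ca2
  have h : Continuous fun t => ∫ x in (0:ℝ)..X, (ee (v t) (a2 t) x ^ 2
      + ee1 (u1 t) (a t) x ^ 2 + ee (u t) (a t) x ^ 2) :=
    intervalIntegral.continuous_parametric_intervalIntegral_of_continuous' (μ := volume)
      (f := fun t x => ee (v t) (a2 t) x ^ 2 + ee1 (u1 t) (a t) x ^ 2 + ee (u t) (a t) x ^ 2)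
      (by unfold Function.uncurry; exact P.cdens) _ _
  unfold locE
  fun_prop

lemma Dyn.locE_le {t : ℝ} (ht : 0 ≤ t) (hX : 0 ≤ X) : locE u u1 v a a2 X t ≤ 5 * d ^ 2 := by
  have S := P.sl t ht
  have c1 := S.ce; have c2 := S.ce1; have c3 := S.cη
  unfold locE
  rw [intervalIntegral.integral_add (ii_cont (by fun_prop) _ _) (ii_cont (by fun_prop) _ _),
    intervalIntegral.integral_add (ii_cont (by fun_prop) _ _) (ii_cont (by fun_prop) _ _)]
  have h1 : a t ^ 2 ≤ d ^ 2 := sq_le_sq' (abs_le.mp S.ba).1 (abs_le.mp S.ba).2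
  have h2 : a2 t ^ 2 ≤ d ^ 2 := sq_le_sq' (abs_le.mp S.ba2).1 (abs_le.mp S.ba2).2
  have := S.ie X hX; have := S.ie1 X hX; have := S.iv X hX
  linarith

/-- For `r² ≥ 2X` the weight in `Dyn.main` is bounded below on `[0, X]`; for smaller times the
uniform bound on `locE` suffices. -/
lemma Dyn.growth (hd : d ≤ 1 / 10 ^ 20) (hX : 1 ≤ X) (hs : 0 ≤ s) :
    ∫ t in (0:ℝ)..s, locE u u1 v a a2 X t ≤
      ((2 / (1 - tanh X ^ 2) * 10 ^ 90 + 20 * X ^ 2) * d ^ 2)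
        * ((1 + s) ^ (3 / 4 : ℝ) + d ^ 2 * (1 + s)) := by
  have hp : 0 < 1 + s := by linarith
  set r : ℝ := (1 + s) ^ (1 / 4 : ℝ) with hr
  have r1 : 1 ≤ r := one_le_rpow (by linarith) (by norm_num)
  have r4 : r ^ 4 = 1 + s := by
    rw [hr, ← rpow_natCast, ← rpow_mul hp.le]; norm_num
  have r3 : (1 + s) ^ (3 / 4 : ℝ) = r ^ 3 := by
    rw [hr, ← rpow_natCast, ← rpow_mul hp.le]; norm_num
  rw [r3, ← r4]
  have hm := s2_pos X
  have hm1 : 1 - tanh X ^ 2 ≤ 1 := by linarith [sq_nonneg (tanh X)]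
  set m := 1 - tanh X ^ 2
  have hm2 : 2 ≤ 2 / m := by rw [le_div_iff₀ hm]; linarith
  have r0 : 0 < r := by linarith
  have cE := P.locE_cont X
  rcases le_total (2 * X) (r ^ 2) with h | h
  · have main := P.main r1 (s := s) (by linarith) hd
    have hρ : 0 < r ^ 2 := by positivity
    have cJ : Continuous fun t => (∫ x in (0:ℝ)..r^2, om (r^2) x * (1 - tanh x^2)
        * (ee (v t) (a2 t) x^2 + ee1 (u1 t) (a t) x^2 + ee (u t) (a t) x^2)) + (a t^2 + a2 t^2) := by
      have ha := P.ca; have ha2 := P.ca2; have ho := om_cont (r^2); have := tanh_cont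
      have hdn := P.cdens
      have h : Continuous fun t => ∫ x in (0:ℝ)..r^2, om (r^2) x * (1 - tanh x^2)
          * (ee (v t) (a2 t) x^2 + ee1 (u1 t) (a t) x^2 + ee (u t) (a t) x^2) :=
        intervalIntegral.continuous_parametric_intervalIntegral_of_continuous' (μ := volume)
          (f := fun t x => om (r^2) x * (1 - tanh x^2)
            * (ee (v t) (a2 t) x^2 + ee1 (u1 t) (a t) x^2 + ee (u t) (a t) x^2))
          (by unfold Function.uncurry; fun_prop) _ _
      fun_prop
    have key : ∫ t in (0:ℝ)..s, locE u u1 v a a2 X t ≤ ∫ t in (0:ℝ)..s, 2 / m *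
        ((∫ x in (0:ℝ)..r^2, om (r^2) x * (1 - tanh x^2)
        * (ee (v t) (a2 t) x^2 + ee1 (u1 t) (a t) x^2 + ee (u t) (a t) x^2)) + (a t^2 + a2 t^2)) := by
      refine int_mono hs (ii_cont cE _ _) (ii_cont (cJ.const_mul _) _ _) fun t ht => ?_
      have cd := P.cdens' t
      have ho := om_cont (r^2)
      have htc := tanh_cont
      have hD : ∀ x, 0 ≤ ee (v t) (a2 t) x^2 + ee1 (u1 t) (a t) x^2 + ee (u t) (a t) x^2 :=
        fun x => by positivity
      set D : ℝ → ℝ := fun x => ee (v t) (a2 t) x^2 + ee1 (u1 t) (a t) x^2 + ee (u t) (a t) x^2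
        with hDd
      have cD : Continuous D := cd
      have h1 : ∫ x in (0:ℝ)..X, D x ≤ ∫ x in (0:ℝ)..X, 2 / m * (om (r^2) x * (1 - tanh x^2) * D x) := by
        refine int_mono (by linarith) (ii_cont cD _ _) (ii_cont (by fun_prop) _ _) fun x hx => ?_
        have o1 : 1 / 2 ≤ om (r ^ 2) x := by
          unfold om
          have : x / r ^ 2 ≤ 1 / 2 := by rw [div_le_iff₀ hρ]; linarith [hx.2]
          linarith
        have o2 : m ≤ 1 - tanh x ^ 2 := s2_anti hx.1.le hx.2.le
        have o3 : 1 / 2 * m ≤ om (r ^ 2) x * (1 - tanh x ^ 2) := by gcongr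
        calc D x = 2 / m * (1 / 2 * m * D x) := by field_simp
          _ ≤ _ := by have := hD x; gcongr
      have h2 : ∫ x in (0:ℝ)..X, om (r^2) x * (1 - tanh x^2) * D x ≤
          ∫ x in (0:ℝ)..r^2, om (r^2) x * (1 - tanh x^2) * D x := by
        have hi : ∀ α β, IntervalIntegrable (fun x => om (r^2) x * (1 - tanh x^2) * D x)
          volume α β := fun α β => ii_cont (by fun_prop) _ _
        rw [← intervalIntegral.integral_add_adjacent_intervals (hi 0 X) (hi X (r^2))]
        have : 0 ≤ ∫ x in X..r^2, om (r^2) x * (1 - tanh x^2) * D x := by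
          refine intervalIntegral.integral_nonneg (by linarith) fun x hx => ?_
          have := om_nn (by nlinarith : 1 ≤ r ^ 2) hx.2
          have := s2_pos x
          have := hD x
          positivity
        linarith
      rw [intervalIntegral.integral_const_mul] at h1
      have h3 : 2 / m * ∫ x in (0:ℝ)..X, om (r^2) x * (1 - tanh x^2) * D x ≤
          2 / m * ∫ x in (0:ℝ)..r^2, om (r^2) x * (1 - tanh x^2) * D x := by gcongr
      have h4 : a t ^ 2 + a2 t ^ 2 ≤ 2 / m * (a t ^ 2 + a2 t ^ 2) :=
        le_mul_of_one_le_left (by positivity) (by linarith)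
      unfold locE
      rw [mul_add]
      linarith
    rw [intervalIntegral.integral_const_mul] at key
    have h5 : 2 / m * (∫ t in (0:ℝ)..s, ((∫ x in (0:ℝ)..r^2, om (r^2) x * (1 - tanh x^2)
        * (ee (v t) (a2 t) x^2 + ee1 (u1 t) (a t) x^2 + ee (u t) (a t) x^2)) + (a t^2 + a2 t^2)))
        ≤ 2 / m * (10^90 * (d^2 * (r^3 + d^2 * r^4))) := by gcongr
    have h6 : 0 ≤ 20 * X ^ 2 * d ^ 2 * (r ^ 3 + d ^ 2 * r ^ 4) := by positivity
    linarith
  · have h1 : ∫ t in (0:ℝ)..s, locE u u1 v a a2 X t ≤ ∫ t in (0:ℝ)..s, 5 * d ^ 2 :=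
      int_mono hs (ii_cont cE _ _) (ii_cont continuous_const _ _) fun t ht =>
        P.locE_le ht.1.le (by linarith)
    rw [intervalIntegral.integral_const, sub_zero, smul_eq_mul] at h1
    have h2 : s ≤ 4 * X ^ 2 := by
      have : (r ^ 2) ^ 2 ≤ (2 * X) ^ 2 := by gcongr
      nlinarith
    have h3 : s * (5 * d ^ 2) ≤ 4 * X ^ 2 * (5 * d ^ 2) := by gcongr
    have h4 : 1 ≤ r ^ 3 + d ^ 2 * r ^ 4 := by
      have : 1 ≤ r ^ 3 := one_le_pow₀ r1
      have : 0 ≤ d ^ 2 * r ^ 4 := by positivity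
      linarith
    have h5 : 20 * X ^ 2 * d ^ 2 * 1 ≤ 20 * X ^ 2 * d ^ 2 * (r ^ 3 + d ^ 2 * r ^ 4) := by gcongr
    have h6 : 0 ≤ 2 / m * 10 ^ 90 * d ^ 2 * (r ^ 3 + d ^ 2 * r ^ 4) := by positivity
    linarith

lemma Dyn.v_even {t : ℝ} (ht : 0 ≤ t) (x : ℝ) : v t (-x) = v t x := by
  have h1 := (P.tu t ht (-x)).hasDerivWithinAt (s := Ici t)
  have h2 := (P.tu t ht x).hasDerivWithinAt (s := Ici t)
  have h3 : HasDerivWithinAt (fun τ => u τ (-x)) (v t x) (Ici t) t :=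
    h2.congr (fun τ hτ => (P.sl τ (ht.trans hτ)).ev x) ((P.sl t ht).ev x)
  exact ((uniqueDiffOn_Ici t) t self_mem_Ici).eq_deriv _ h1 h3

lemma Dyn.u1_odd {t : ℝ} (ht : 0 ≤ t) (x : ℝ) : u1 t (-x) = - u1 t x := by
  have S := P.sl t ht
  have h1 : HasDerivAt (fun y => u t (-y)) (u1 t (-x) * (-1)) x :=
    (S.du (-x)).comp x (hasDerivAt_neg x)
  rw [show (fun y => u t (-y)) = u t from funext S.ev] at h1
  have := h1.unique (S.du x)
  linarith

lemma Dyn.dens_even {t : ℝ} (ht : 0 ≤ t) (x : ℝ) :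
    ee (v t) (a2 t) (-x) ^ 2 + ee1 (u1 t) (a t) (-x) ^ 2 + ee (u t) (a t) (-x) ^ 2
      = ee (v t) (a2 t) x ^ 2 + ee1 (u1 t) (a t) x ^ 2 + ee (u t) (a t) x ^ 2 := by
  unfold ee ee1 Y1
  rw [P.v_even ht, P.u1_odd ht, (P.sl t ht).ev, Y_even, tanh_neg]
  ring

lemma Dyn.loc_le {t x₁ x₂ : ℝ} (ht : 0 ≤ t) (hX : 0 ≤ X) (h1 : -X ≤ x₁) (h2 : x₂ ≤ X) :
    ∫ x in Icc x₁ x₂, (ee (v t) (a2 t) x ^ 2 + ee1 (u1 t) (a t) x ^ 2 + ee (u t) (a t) x ^ 2)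
      ≤ 2 * locE u u1 v a a2 X t := by
  have cd := P.cdens' t
  have ev := P.dens_even ht
  unfold locE
  set D : ℝ → ℝ := fun x => ee (v t) (a2 t) x^2 + ee1 (u1 t) (a t) x^2 + ee (u t) (a t) x^2 with hD
  have e1 : ∫ x in Icc x₁ x₂, D x ≤ ∫ x in Icc (-X) X, D x :=
    setIntegral_mono_set (cd.continuousOn.integrableOn_Icc)
      (Eventually.of_forall fun x => by simp only [hD, Pi.zero_apply]; positivity)
      (Icc_subset_Icc h1 h2).eventuallyLE
  rw [integral_Icc_eq_integral_Ioc (x := -X) (y := X), ← intervalIntegral.integral_of_le (by linarith),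
    ← intervalIntegral.integral_add_adjacent_intervals (ii_cont cd _ _ : IntervalIntegrable D volume (-X) 0)
      (ii_cont cd _ _)] at e1
  have e2 : ∫ x in (-X)..0, D x = ∫ x in (0:ℝ)..X, D x := by
    have h := intervalIntegral.integral_comp_neg (a := 0) (b := X) D
    rw [neg_zero] at h
    rw [← h]
    exact intervalIntegral.integral_congr fun x _ => ev x
  have : 0 ≤ a t ^ 2 + a2 t ^ 2 := by positivity
  linarith
end
end KG

namespace KG
open Set Topology

/-! ### From smooth solutions to the perturbation system -/

/-- The directional derivative of `F` in the direction `w`. -/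
noncomputable def pd (F : ℝ × ℝ → ℝ) (w p : ℝ × ℝ) : ℝ := fderiv ℝ F p w

section
variable {F : ℝ × ℝ → ℝ} (hF : ContDiff ℝ (⊤ : ℕ∞) F)
include hF

lemma pd_smooth (w : ℝ × ℝ) : ContDiff ℝ (⊤ : ℕ∞) (pd F w) := by
  unfold pd
  have h : ContDiff ℝ (⊤ : ℕ∞) (fderiv ℝ F) := hF.fderiv_right (by simp)
  exact h.clm_apply contDiff_const

lemma pd_x (t x : ℝ) : HasDerivAt (fun y => F (t, y)) (pd F (0, 1) (t, x)) x := by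
  have h := (hF.differentiable (by simp) (t, x)).hasFDerivAt
  have h2 : HasDerivAt (fun y : ℝ => (t, y)) ((0:ℝ), (1:ℝ)) x :=
    (hasDerivAt_const x t).prodMk (hasDerivAt_id x)
  exact h.comp_hasDerivAt x h2

lemma pd_t (t x : ℝ) : HasDerivAt (fun s => F (s, x)) (pd F (1, 0) (t, x)) t := by
  have h := (hF.differentiable (by simp) (t, x)).hasFDerivAt
  have h2 : HasDerivAt (fun s : ℝ => (s, x)) ((1:ℝ), (0:ℝ)) t :=
    (hasDerivAt_id t).prodMk (hasDerivAt_const t x)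
  exact h.comp_hasDerivAt (f := fun s : ℝ => (s, x)) t h2

lemma pd_comm (w w' p : ℝ × ℝ) : pd (pd F w) w' p = pd (pd F w') w p := by
  have h : ContDiff ℝ (⊤ : ℕ∞) (fderiv ℝ F) := hF.fderiv_right (by simp)
  have hd' := h.differentiable (by simp) p
  have e : ∀ w w', pd (pd F w) w' p = fderiv ℝ (fderiv ℝ F) p w' w := by
    intro w w'
    unfold pd
    have := (hd'.hasFDerivAt.clm_apply (hasFDerivAt_const w p)).fderiv
    rw [this]
    simp
  have hs : IsSymmSndFDerivAt ℝ F p :=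
    hF.contDiffAt.isSymmSndFDerivAt (by
      rw [minSmoothness_of_isRCLikeNormedField]; exact WithTop.coe_le_coe.mpr (le_top : (2 : ℕ∞) ≤ ⊤))
  rw [e, e]
  exact hs w' w
end

lemma raw_of_solution {φ : ℝ → ℝ → ℝ} {δ : ℝ} (δ0 : 0 < δ) (δ1 : δ ≤ 1 / 4)
    (hF : ContDiff ℝ (⊤ : ℕ∞) (fun p : ℝ × ℝ => φ p.1 p.2))
    (eqn : ∀ t, 0 ≤ t → ∀ x,
          deriv (fun s => deriv (fun s' => φ s' x) s) t
            - deriv (fun y => deriv (fun y' => φ t y') y) x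
            + φ t x - (φ t x) ^ 3 = 0)
    (even : ∀ t, 0 ≤ t → ∀ x, φ t (-x) = φ t x)
    (int : ∀ t, 0 ≤ t →
          Integrable (fun x => (φ t x - Q x) ^ 2) ∧
          Integrable (fun x => (deriv (fun y => φ t y) x - deriv Q x) ^ 2) ∧
          Integrable (fun x => (deriv (fun s => φ s x) t) ^ 2))
    (small : ∀ t, 0 ≤ t →
          Real.sqrt (∫ x : ℝ,
            ((φ t x - Q x) ^ 2
              + (deriv (fun y => φ t y) x - deriv Q x) ^ 2
              + (deriv (fun s => φ s x) t) ^ 2)) ≤ δ) :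
    ∃ u1 u2 v1 : ℝ → ℝ → ℝ, Raw (fun t x => φ t x - Q x) u1 u2
      (fun t x => deriv (fun s => φ s x) t) v1 δ := by
  set F : ℝ × ℝ → ℝ := fun p => φ p.1 p.2 with hFd
  have hx := pd_smooth hF (0, 1)
  have htt := pd_smooth hF (1, 0)
  have ex : ∀ t x, deriv (fun y => φ t y) x = pd F (0, 1) (t, x) := fun t x => (pd_x hF t x).deriv
  have et : ∀ t x, deriv (fun s => φ s x) t = pd F (1, 0) (t, x) := fun t x => (pd_t hF t x).deriv
  have exx : ∀ t x, deriv (fun y => deriv (fun y' => φ t y') y) x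
      = pd (pd F (0, 1)) (0, 1) (t, x) := fun t x => by
    simp_rw [ex]; exact (pd_x hx t x).deriv
  have ett : ∀ t x, deriv (fun s => deriv (fun s' => φ s' x) s) t
      = pd (pd F (1, 0)) (1, 0) (t, x) := fun t x => by
    simp_rw [et]; exact (pd_t htt t x).deriv
  have eQ : ∀ x, deriv Q x = -(tanh x * Q x) := fun x => (Q_deriv x).deriv
  simp_rw [exx, ett] at eqn
  simp_rw [ex, et, eQ] at int small
  simp_rw [et]
  have cQ := Q_cont
  have cT := tanh_cont
  have c0 : Continuous F := hF.continuous
  have c1 := hx.continuous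
  have c2 := (pd_smooth hx (0, 1)).continuous
  have c3 := htt.continuous
  have c4 := (pd_smooth htt (0, 1)).continuous
  refine ⟨fun t x => pd F (0, 1) (t, x) - -(tanh x * Q x),
    fun t x => pd (pd F (0, 1)) (0, 1) (t, x) - (Q x - Q x ^ 3),
    fun t x => pd (pd F (1, 0)) (0, 1) (t, x), ?_⟩
  have du : ∀ t x, HasDerivAt (fun x => φ t x - Q x) (pd F (0, 1) (t, x) - -(tanh x * Q x)) x :=
    fun t x => (pd_x hF t x).sub (Q_deriv x)
  have du1 : ∀ t x, HasDerivAt (fun x => pd F (0, 1) (t, x) - -(tanh x * Q x))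
      (pd (pd F (0, 1)) (0, 1) (t, x) - (Q x - Q x ^ 3)) x :=
    fun t x => (pd_x hx t x).sub (Q1_deriv x)
  exact {
    fx := fun t ht => {
      δ0 := δ0
      δ1 := δ1
      du := du t
      du1 := du1 t
      cu2 := by fun_prop
      dv := fun x => pd_x htt t x
      cv1 := by fun_prop
      ev := fun x => by simp only [even t ht, Q_even]
      iu := (int t ht).1
      iu1 := (int t ht).2.1
      iv := (int t ht).2.2
      bd := by
        obtain ⟨i1, i2, i3⟩ := int t ht
        have h := (sqrt_le_iff.mp (small t ht)).2
        rw [integral_add (i1.fun_add i2) i3, integral_add i1 i2] at h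
        exact h }
    cu := c0.fun_sub (cQ.comp continuous_snd)
    cu1 := by fun_prop
    cu2 := by fun_prop
    cv := c3
    cv1 := c4
    tu := fun t _ x => (pd_t hF t x).sub_const (Q x)
    tu1 := fun t _ x => by
      have := (pd_t hx t x).sub_const (-(tanh x * Q x))
      rwa [pd_comm hF] at this
    tv := fun t ht x => by
      refine (pd_t htt t x).congr_deriv ?_
      have h := eqn t ht x
      have hq := Q_sq x
      simp only [NN]
      linear_combination h + (φ t x - Q x) * hq }

/-- The final numerical estimate: `d² log(1 + T)` stays bounded up to `T = exp(δ^{-β})`. -/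
lemma log_T {δ β : ℝ} (δ0 : 0 < δ) (δ1 : δ ≤ 1 / 4) (hβ2 : β < 4 / 3) :
    (4 * δ) ^ 2 * log (1 + exp (1 * δ ^ (-β))) ≤ 32 := by
  have hp : 0 < δ ^ (-β) := rpow_pos_of_pos δ0 _
  have h1 : log (1 + exp (1 * δ ^ (-β))) ≤ 1 + δ ^ (-β) := by
    rw [one_mul, log_le_iff_le_exp (by positivity), exp_add]
    have h2 : 1 ≤ exp (δ ^ (-β)) := one_le_exp hp.le
    have h3 : 2 ≤ exp 1 := by linarith [add_one_le_exp (1:ℝ)]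
    nlinarith
  have h2 : δ ^ 2 * δ ^ (-β) ≤ 1 := by
    rw [← rpow_natCast, ← rpow_add δ0]
    exact rpow_le_one δ0.le (by linarith) (by push_cast; linarith)
  have h3 : (4 * δ) ^ 2 * log (1 + exp (1 * δ ^ (-β))) ≤ (4 * δ) ^ 2 * (1 + δ ^ (-β)) := by gcongr
  nlinarith
end KG

theorem local_energy_control_cubic_KG :
    ∀ β : ℝ, 0 < β → β < 4 / 3 →
    ∃ c > (0 : ℝ), ∃ δ₀ > (0 : ℝ), ∀ x₁ x₂ : ℝ, ∃ C > (0 : ℝ),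
      ∀ δ : ℝ, 0 < δ → δ < δ₀ →
      ∀ φ : ℝ → ℝ → ℝ,
        -- smoothness
        ContDiff ℝ (⊤ : ℕ∞) (fun p : ℝ × ℝ => φ p.1 p.2) →
        -- cubic Klein-Gordon equation on [0,∞) × ℝ
        (∀ t, 0 ≤ t → ∀ x,
          deriv (fun s => deriv (fun s' => φ s' x) s) t
            - deriv (fun y => deriv (fun y' => φ t y') y) x
            + φ t x - (φ t x) ^ 3 = 0) →
        -- evenness in x
        (∀ t, 0 ≤ t → ∀ x, φ t (-x) = φ t x) →
        -- square integrability of the perturbation and its derivatives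
        (∀ t, 0 ≤ t →
          Integrable (fun x => (φ t x - Q x) ^ 2) ∧
          Integrable (fun x => (deriv (fun y => φ t y) x - deriv Q x) ^ 2) ∧
          Integrable (fun x => (deriv (fun s => φ s x) t) ^ 2)) →
        -- smallness of the perturbation in the energy norm, uniformly in time
        (∀ t, 0 ≤ t →
          Real.sqrt (∫ x : ℝ,
            ((φ t x - Q x) ^ 2
              + (deriv (fun y => φ t y) x - deriv Q x) ^ 2
              + (deriv (fun s => φ s x) t) ^ 2)) ≤ δ) →
        ∀ a a₂ : ℝ → ℝ, ∀ ε : ℝ → ℝ → ℝ,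
          (∀ t, a t = ∫ x : ℝ, (φ t x - Q x) * Y x) →
          (∀ t, a₂ t = ∫ x : ℝ, (deriv (fun s => φ s x) t) * Y x) →
          (∀ t x, ε t x = φ t x - Q x - a t * Y x) →
          -- control of the local energy up to time T_max = exp (c δ^{-β})
          (∫ t in Set.Ioc (0 : ℝ) (Real.exp (c * δ ^ (-β))),
              (1 + t)⁻¹ *
                ∫ x in Set.Icc x₁ x₂,
                  ((deriv (fun s => φ s x) t - a₂ t * Y x) ^ 2
                    + (deriv (fun y => ε t y) x) ^ 2
                    + (ε t x) ^ 2)) ≤ C * δ ^ 2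
          ∧
          (∫ t in Set.Ioc (0 : ℝ) (Real.exp (c * δ ^ (-β))),
              (1 + t)⁻¹ * ((a t) ^ 2 + (a₂ t) ^ 2)) ≤ C * δ ^ 2 := by
  intro β hβ hβ2
  refine ⟨1, one_pos, 1 / (4 * 10 ^ 20), by norm_num, fun x₁ x₂ => ?_⟩
  set X : ℝ := max |x₁| |x₂| + 1 with hX
  have hX1 : 1 ≤ X := by
    have := (abs_nonneg x₁).trans (le_max_left |x₁| |x₂|)
    linarith
  have hx1 : -X ≤ x₁ := by
    have := le_max_left |x₁| |x₂|
    linarith [neg_abs_le x₁]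
  have hx2 : x₂ ≤ X := by
    have := le_max_right |x₁| |x₂|
    linarith [le_abs_self x₂]
  have hm := KG.s2_pos X
  set K : ℝ := 2 / (1 - tanh X ^ 2) * 10 ^ 90 + 20 * X ^ 2 with hK
  have hK0 : 0 < K := by positivity
  refine ⟨2 * (16 * K * 38), by positivity, ?_⟩
  intro δ δ0 hδ φ hF eqn even int small a a₂ ε ha ha₂ hε
  have δ1 : δ ≤ 1 / 4 := hδ.le.trans (by norm_num)
  have hd : 4 * δ ≤ 1 / 10 ^ 20 := by
    have : 4 * δ ≤ 4 * (1 / (4 * 10 ^ 20)) := by linarith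
    refine this.trans (by norm_num)
  obtain ⟨u1, u2, v1, R⟩ := KG.raw_of_solution δ0 δ1 hF eqn even int small
  obtain ⟨A, A2, N, P, hA, hA2⟩ := R.dyn
  set T : ℝ := exp (1 * δ ^ (-β)) with hT
  have hT0 : 0 ≤ T := (exp_pos _).le
  set f : ℝ → ℝ := KG.locE (fun t x => φ t x - Q x) u1 (fun t x => deriv (fun s => φ s x) t) A A2 X
    with hf
  have cf : Continuous f := P.locE_cont X
  have avg := KG.log_avg (K := K * (4 * δ) ^ 2) (D := (4 * δ) ^ 2) cf hT0 (by positivity)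
    fun s hs => P.growth hd hX1 hs
  have bound : 2 * ∫ t in (0:ℝ)..T, (1 + t)⁻¹ * f t ≤ 2 * (16 * K * 38) * δ ^ 2 := by
    have h1 := KG.log_T δ0 δ1 hβ2
    have h2 : (4 * δ) ^ 2 ≤ 1 := by nlinarith
    have h3 : K * (4 * δ) ^ 2 * (5 + (4 * δ) ^ 2 + (4 * δ) ^ 2 * log (1 + T))
        ≤ K * (4 * δ) ^ 2 * 38 := by
      gcongr; linarith
    calc _ ≤ 2 * (K * (4 * δ) ^ 2 * 38) := by linarith
      _ = _ := by ring
  have hInt : IntegrableOn (fun t => 2 * ((1 + t)⁻¹ * f t)) (Set.Ioc 0 T) := by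
    have : ContinuousOn (fun t : ℝ => 2 * ((1 + t)⁻¹ * f t)) (Set.Icc 0 T) := by
      refine continuousOn_const.mul (ContinuousOn.mul ?_ cf.continuousOn)
      exact ContinuousOn.inv₀ (by fun_prop) fun t ht => by
        have := ht.1
        positivity
    exact this.integrableOn_Icc.mono_set Set.Ioc_subset_Icc_self
  -- `integral_mono_of_nonneg` needs no integrability of the smaller function.
  have fin : ∀ g : ℝ → ℝ, (∀ t, 0 < t → 0 ≤ g t ∧ g t ≤ 2 * f t) →
      ∫ t in Set.Ioc 0 T, (1 + t)⁻¹ * g t ≤ 2 * (16 * K * 38) * δ ^ 2 := by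
    intro g hg
    refine le_trans ?_ bound
    rw [intervalIntegral.integral_of_le hT0, ← integral_const_mul]
    refine integral_mono_of_nonneg ?_ hInt ?_
    · filter_upwards [ae_restrict_mem measurableSet_Ioc] with t ht
      have := (hg t ht.1).1
      have := ht.1
      simp only [Pi.zero_apply]
      positivity
    · filter_upwards [ae_restrict_mem measurableSet_Ioc] with t ht
      have h1 := (hg t ht.1).2
      have h2 : 0 ≤ (1 + t)⁻¹ := by have := ht.1; positivity
      calc (1 + t)⁻¹ * g t ≤ (1 + t)⁻¹ * (2 * f t) := by gcongr
        _ = _ := by ring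
  have eA : ∀ t, 0 < t → a t = A t := fun t ht => by rw [ha, hA t ht.le]
  have eA2 : ∀ t, 0 < t → a₂ t = A2 t := fun t ht => by rw [ha₂, hA2 t ht.le]
  refine ⟨fin _ fun t ht => ⟨integral_nonneg fun x => by positivity, ?_⟩,
    fin _ fun t ht => ⟨by positivity, ?_⟩⟩
  · refine le_trans (le_of_eq ?_) (P.loc_le ht.le (by linarith) hx1 hx2)
    have e1 : ∀ x, deriv (fun y => ε t y) x = KG.ee1 (u1 t) (A t) x := fun x => by
      have h : (fun y => ε t y) = KG.ee (fun y => φ t y - Q y) (A t) := by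
        funext y; rw [hε, eA t ht]; rfl
      rw [h]
      exact ((P.sl t ht.le).de x).deriv
    simp_rw [e1, hε, eA t ht, eA2 t ht]
    rfl
  · rw [eA t ht, eA2 t ht, hf]
    unfold KG.locE
    have : 0 ≤ ∫ x in (0:ℝ)..X, (KG.ee (fun x => deriv (fun s => φ s x) t) (A2 t) x ^ 2
        + KG.ee1 (u1 t) (A t) x ^ 2 + KG.ee (fun x => φ t x - Q x) (A t) x ^ 2) :=
      intervalIntegral.integral_nonneg (by linarith) fun x _ => by positivity
    have h2 : 0 ≤ A t ^ 2 + A2 t ^ 2 := by positivity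
    linarith
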